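/- Suppose 1 < H₀ < H and y₀ < y ≤ exp(log H/(c·log log H)) with c = 1.4·10⁴ and y₀ a sufficiently large absolute constant. Then for any real T, any real α, and any integer ν with 0 ≤ ν ≤ exp((log y)^{1/4}), one has ∫_T^{T+H} sgn(V_y(t) − α) dt = (H/√(2π))·Σ_{n=0}^{ν} (Φ_n/(2σ)ⁿ)·∫_{−∞}^{+∞} e^{−u²/2} H_{2n}(u)·sgn(u·√(σ/2) − α) du + O(H·Δ), where Δ = (log y)^{−1/2}/(log log y) + (log y/log H)^{1/2} + (1/(ν+1))·((log log(ν+2)+1)/σ)^{ν+1}, and the implied O-constant is absolute. -/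

import Mathlib

open MeasureTheory Real Complex Filter

/-- The set of primes `p ≤ y`. -/
noncomputable def primesLe (y : ℝ) : Finset ℕ :=
  (Finset.range (⌊y⌋₊ + 1)).filter Nat.Prime

/-- `V_y(t) = ∑_{p ≤ y} sin(t log p)/√p`. -/
noncomputable def Vy (y t : ℝ) : ℝ :=
  ∑ p ∈ primesLe y, Real.sin (t * Real.log p) / Real.sqrt p

/-- `σ = σ(y) = ∑_{p ≤ y} 1/p`. -/
noncomputable def sigmay (y : ℝ) : ℝ := ∑ p ∈ primesLe y, (1 : ℝ) / p

/-- `J0twoISqrt w = J₀(2i√w) = ∑_{n≥0} wⁿ/(n!)²`, where `J₀` is the Bessel function of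
the first kind of order 0. -/
noncomputable def J0twoISqrt (w : ℂ) : ℂ := ∑' n : ℕ, w ^ n / ((n.factorial : ℂ)) ^ 2

/-- `G(z) = ∏_{p ≤ y} J₀(2i√(z/p))`. -/
noncomputable def Gfun (y : ℝ) (z : ℂ) : ℂ := ∏ p ∈ primesLe y, J0twoISqrt (z / (p : ℂ))

/-- `φ(z) = e^{-z} J₀(2i√z)`. -/
noncomputable def phifun (z : ℂ) : ℂ := Complex.exp (-z) * J0twoISqrt z

/-- `Φ(z) = ∏_{p ≤ y} φ(z/p)`. -/
noncomputable def Phifun (y : ℝ) (z : ℂ) : ℂ := ∏ p ∈ primesLe y, phifun (z / (p : ℂ))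

/-- The `n`-th Taylor coefficient of `Φ` at `0`. -/
noncomputable def PhiCoef (y : ℝ) (n : ℕ) : ℂ := iteratedDeriv n (Phifun y) 0 / (n.factorial : ℂ)

/-- Evaluation of the (probabilists') Hermite polynomial
`H_n(x) = (-1)ⁿ e^{x²/2} (d/dx)ⁿ e^{-x²/2}`. -/
noncomputable def hermiteEval (n : ℕ) (x : ℝ) : ℝ := Polynomial.aeval x (Polynomial.hermite n)

/-- The `n`-th Taylor coefficient `Φ_n` of `Φ` at `0` (a real number). -/
noncomputable def PhiCoefR (y : ℝ) (n : ℕ) : ℝ := (PhiCoef y n).re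

/-- primes up to n -/
noncomputable def prN (n : ℕ) : Finset ℕ := (Finset.range (n + 1)).filter Nat.Prime

lemma prN_sum_succ (n : ℕ) (f : ℕ → ℝ) :
    ∑ p ∈ prN (n + 1), f p = ∑ p ∈ prN n, f p + if (n + 1).Prime then f (n + 1) else 0 := by
  unfold prN
  rw [Finset.sum_filter, Finset.sum_filter, Finset.sum_range_succ]

lemma theta_eq_prN (n : ℕ) : Chebyshev.theta n = ∑ p ∈ prN n, Real.log p := by
  rw [Chebyshev.theta_eq_sum_Icc, Nat.floor_natCast]
  unfold prN
  congr 1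
  ext p
  simp

lemma theta_le_prN (n : ℕ) : ∑ p ∈ prN n, Real.log p ≤ 2 * Real.log 2 * n := by
  rw [← theta_eq_prN]
  have := Chebyshev.theta_le_log4_mul_x (x := (n : ℝ)) (by positivity)
  have h4 : Real.log 4 = 2 * Real.log 2 := by
    rw [show (4 : ℝ) = 2 ^ 2 by norm_num, Real.log_pow]; norm_num
  rwa [h4] at this

lemma log_succ_sub_ge (n : ℕ) (hn : 1 ≤ n) :
    1 / ((n : ℝ) + 1) ≤ Real.log (n + 1) - Real.log n := by
  have hn' : (0 : ℝ) < n := by exact_mod_cast hn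
  have := Real.one_sub_inv_le_log_of_pos (x := ((n : ℝ) + 1) / n) (by positivity)
  rw [Real.log_div (by positivity) (by positivity)] at this
  refine le_trans (le_of_eq ?_) this
  field_simp
  ring

lemma log_factorial_le (n : ℕ) (hn : 1 ≤ n) :
    Real.log (n.factorial) ≤ n * Real.log n - n + Real.log n + 1 := by
  induction n, hn using Nat.le_induction with
  | base => simp
  | succ n hn ih =>
    rw [Nat.factorial_succ]
    push_cast
    rw [Real.log_mul (by positivity) (by positivity)]
    have h := log_succ_sub_ge n hn
    have h2 : (1 : ℝ) ≤ ((n : ℝ) + 1) * (Real.log (n + 1) - Real.log n) := by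
      calc (1 : ℝ) = ((n : ℝ) + 1) * (1 / ((n : ℝ) + 1)) := by field_simp
        _ ≤ _ := by gcongr
    nlinarith

lemma sum_floor_le (n : ℕ) :
    ∑ p ∈ prN n, ((n / p : ℕ) : ℝ) * Real.log p ≤ Real.log (n.factorial) := by
  have hdvd : (∏ p ∈ prN n, p ^ (n / p)) ∣ n.factorial := by
    refine Finset.prod_dvd_of_isRelPrime ?_ ?_
    rotate_left
    · intro p hp
      have hpp : p.Prime := by simp [prN] at hp; exact hp.2
      rw [hpp.pow_dvd_iff_le_factorization (Nat.factorial_ne_zero n)]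
      rw [Nat.factorization_factorial hpp (b := Nat.log p n + 2) (by omega)]
      calc n / p = n / p ^ 1 := by simp
        _ ≤ _ := Finset.single_le_sum (f := fun i => n / p ^ i) (fun _ _ => Nat.zero_le _) (by simp)
    · intro p hp q hq hpq
      have hpp : p.Prime := by simp [prN] at hp; exact hp.2
      have hqp : q.Prime := by simp [prN] at hq; exact hq.2
      exact Nat.coprime_iff_isRelPrime.1 (Nat.Coprime.pow _ _ ((Nat.coprime_primes hpp hqp).2 hpq))
  have hle := Nat.le_of_dvd (Nat.factorial_pos n) hdvd
  have hpos : 0 < ∏ p ∈ prN n, p ^ (n / p) := Finset.prod_pos (fun p hp => by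
      have hpp : p.Prime := by simp [prN] at hp; exact hp.2
      exact pow_pos hpp.pos _)
  have := Real.log_le_log (x := ((∏ p ∈ prN n, p ^ (n / p) : ℕ) : ℝ)) (by exact_mod_cast hpos)
    (Nat.cast_le.2 hle)
  rw [Nat.cast_prod, Real.log_prod] at this
  · simpa using this
  · intro p hp
    have hpp : p.Prime := by simp [prN] at hp; exact hp.2
    have := hpp.pos
    positivity

lemma mertens_upper (n : ℕ) (hn : 1 ≤ n) :
    ∑ p ∈ prN n, Real.log p / p ≤
      Real.log n - 1 + (Real.log n + 1) / n + 2 * Real.log 2 := by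
  have hn' : (0 : ℝ) < n := by exact_mod_cast hn
  have h1 : ∑ p ∈ prN n, ((n : ℝ) / p - 1) * Real.log p ≤
      ∑ p ∈ prN n, ((n / p : ℕ) : ℝ) * Real.log p := by
    apply Finset.sum_le_sum
    intro p hp
    have hpp : p.Prime := by simp [prN] at hp; exact hp.2
    have : 0 ≤ Real.log p := Real.log_natCast_nonneg p
    apply mul_le_mul_of_nonneg_right _ this
    have := Nat.lt_floor_add_one ((n : ℝ) / p)
    rw [Nat.floor_div_natCast, Nat.floor_natCast] at this
    linarith
  have h2 := sum_floor_le n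
  have h3 := log_factorial_le n hn
  have h4 := theta_le_prN n
  have h5 : ∑ p ∈ prN n, ((n : ℝ) / p - 1) * Real.log p =
      n * ∑ p ∈ prN n, Real.log p / p - ∑ p ∈ prN n, Real.log p := by
    rw [Finset.mul_sum, ← Finset.sum_sub_distrib]
    apply Finset.sum_congr rfl
    intro p _
    ring
  have h6 : n * ∑ p ∈ prN n, Real.log p / p ≤
      n * (Real.log n - 1 + (Real.log n + 1) / n + 2 * Real.log 2) := by
    have : n * (Real.log n - 1 + (Real.log n + 1) / n + 2 * Real.log 2) =
      n * Real.log n - n + Real.log n + 1 + 2 * Real.log 2 * n := by field_simp; ring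
    rw [this]
    linarith
  exact le_of_mul_le_mul_left h6 hn'

lemma mertens_upper' (n : ℕ) (hn : 32 ≤ n) :
    ∑ p ∈ prN n, Real.log p / p ≤ Real.log n + 0.54 := by
  refine (mertens_upper n (by omega)).trans ?_
  have hn' : (32 : ℝ) ≤ n := by exact_mod_cast hn
  have h1 : Real.log n ≤ 5 * Real.log 2 - 1 + n / 32 := by
    have h := Real.log_le_sub_one_of_pos (x := (n : ℝ) / 32) (by positivity)
    rw [Real.log_div (by positivity) (by norm_num), show (32 : ℝ) = 2 ^ 5 by norm_num,
      Real.log_pow] at h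
    push_cast at h
    linarith
  have h2 : (Real.log n + 1) / n ≤ 5 * Real.log 2 / 32 + 1 / 32 := by
    rw [div_le_iff₀ (by positivity)]
    nlinarith [Real.log_two_gt_d9]
  nlinarith [Real.log_two_lt_d9]

lemma loglog_step (n : ℕ) (hn : 2 ≤ n) :
    1 - Real.log n / Real.log (n + 1) ≤
      Real.log (Real.log (n + 1)) - Real.log (Real.log n) := by
  have h1 : 0 < Real.log n := Real.log_pos (by exact_mod_cast hn)
  have h2 : 0 < Real.log ((n : ℝ) + 1) := Real.log_pos (by
    have : (2 : ℝ) ≤ n := by exact_mod_cast hn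
    linarith)
  have := Real.one_sub_inv_le_log_of_pos (x := Real.log (n + 1) / Real.log n) (by positivity)
  rwa [inv_div, Real.log_div h2.ne' h1.ne'] at this

lemma prime_recip_aux (N : ℕ) (hN : 31 ≤ N) :
    ∑ p ∈ prN N, (1 : ℝ) / p - ∑ p ∈ prN 31, (1 : ℝ) / p ≤
      (∑ p ∈ prN N, Real.log p / p) / Real.log (N + 1)
      - (∑ p ∈ prN 31, Real.log p / p) / Real.log 32
      + (Real.log (Real.log (N + 1)) - Real.log (Real.log 32)
      + 0.54 * (1 / Real.log 32 - 1 / Real.log (N + 1))) := by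
  induction N, hN using Nat.le_induction with
  | base => norm_num
  | succ N hN ih =>
    have hA := mertens_upper' (N + 1) (by omega)
    have hl := loglog_step (N + 1) (by omega)
    have hN' : (31 : ℝ) ≤ N := by exact_mod_cast hN
    have hp1 : 0 < Real.log ((N : ℝ) + 1) := Real.log_pos (by linarith)
    have hp2 : 0 < Real.log ((N : ℝ) + 1 + 1) := Real.log_pos (by linarith)
    have hlt : Real.log ((N : ℝ) + 1) ≤ Real.log ((N : ℝ) + 1 + 1) :=
      Real.log_le_log (by positivity) (by linarith)
    rw [prN_sum_succ N (fun p => (1 : ℝ) / p)]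
    have hs := prN_sum_succ N (fun p => Real.log p / p)
    set A := ∑ p ∈ prN N, Real.log p / p
    set A' := ∑ p ∈ prN (N + 1), Real.log p / p
    push_cast at *
    set l1 := Real.log ((N : ℝ) + 1)
    set l2 := Real.log ((N : ℝ) + 1 + 1)
    have e1 : (if (N + 1).Prime then (1 : ℝ) / ((N : ℝ) + 1) else 0) = (A' - A) / l1 := by
      rw [hs]
      split_ifs
      · field_simp; ring
      · simp
    rw [e1]
    have hd : 0 ≤ 1 / l1 - 1 / l2 := by
      rw [sub_nonneg]; exact one_div_le_one_div_of_le hp1 hlt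
    have h3 : A' * (1 / l1 - 1 / l2) ≤ (l1 + 0.54) * (1 / l1 - 1 / l2) :=
      mul_le_mul_of_nonneg_right hA hd
    have h4 : (l1 + 0.54) * (1 / l1 - 1 / l2) = 1 - l1 / l2 + 0.54 * (1 / l1 - 1 / l2) := by
      field_simp
    have h5 : (A' - A) / l1 = A' * (1 / l1 - 1 / l2) + A' / l2 - A / l1 := by
      field_simp; ring
    rw [h5]
    linarith

lemma prime_recip_le (N : ℕ) (hN : 31 ≤ N) :
    ∑ p ∈ prN N, (1 : ℝ) / p ≤ Real.log (Real.log (N + 1)) + 0.9 := by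
  have h := prime_recip_aux N hN
  have hset : prN 31 = {2, 3, 5, 7, 11, 13, 17, 19, 23, 29, 31} := by unfold prN; decide
  have hN' : (31 : ℝ) ≤ N := by exact_mod_cast hN
  have hp1 : 0 < Real.log ((N : ℝ) + 1) := Real.log_pos (by linarith)
  have hA : (∑ p ∈ prN N, Real.log p / p) / Real.log (N + 1) ≤ 1 + 0.54 / Real.log (N + 1) := by
    rcases Nat.eq_or_lt_of_le hN with h31 | h31
    · subst h31
      have hm := mertens_upper 31 (by norm_num)
      have h1 : Real.log ((31 : ℕ) : ℝ) ≤ Real.log (((31 : ℕ) : ℝ) + 1) :=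
        Real.log_le_log (by norm_num) (by norm_num)
      have h2 : Real.log (((31 : ℕ) : ℝ) + 1) = 5 * Real.log 2 := by
        rw [show (((31 : ℕ) : ℝ) + 1) = 2 ^ 5 by norm_num, Real.log_pow]; norm_num
      rw [show ∀ l : ℝ, 0 < l → 1 + 0.54 / l = (l + 0.54) / l from fun l hl => by field_simp, div_le_div_iff_of_pos_right hp1] <;> try exact hp1
      rw [h2] at h1 ⊢
      have := Real.log_two_lt_d9
      have h3 : (Real.log ((31 : ℕ) : ℝ) + 1) / ((31 : ℕ) : ℝ) ≤ (5 * 0.6931471808 + 1) / 31 := by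
        push_cast at *
        gcongr
        linarith
      norm_num at h3 ⊢
      norm_num at hm h1
      linarith
    · have := mertens_upper' N (by omega)
      rw [show ∀ l : ℝ, 0 < l → 1 + 0.54 / l = (l + 0.54) / l from fun l hl => by field_simp, div_le_div_iff_of_pos_right hp1] <;> try exact hp1
      have : Real.log N ≤ Real.log (N + 1) := Real.log_le_log (by linarith) (by linarith)
      linarith
  have e1 : ∑ p ∈ prN 31, (1 : ℝ) / p ≤ 1.566 := by
    rw [hset]
    norm_num
  have h32 : Real.log 32 = 5 * Real.log 2 := by
    rw [show (32 : ℝ) = 2 ^ 5 by norm_num, Real.log_pow]; norm_num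
  have hl2 := Real.log_two_gt_d9
  have hl2' := Real.log_two_lt_d9
  have key : ∀ (a b n : ℕ), 2 ^ a ≤ n ^ b → 0 < b → (a : ℝ) / b * Real.log 2 ≤ Real.log n := by
    intro a b n hab hb
    have hn : 0 < n := by
      rcases Nat.eq_zero_or_pos n with h0 | h0
      · subst h0
        rw [zero_pow hb.ne'] at hab
        have := Nat.pow_pos (n := a) (show 0 < 2 by norm_num)
        omega
      · exact h0
    have h : ((2 : ℝ) ^ a) ≤ (n : ℝ) ^ b := by exact_mod_cast hab
    have := Real.log_le_log (by positivity) h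
    rw [Real.log_pow, Real.log_pow] at this
    have hb' : (0 : ℝ) < b := by exact_mod_cast hb
    rw [div_mul_eq_mul_div, div_le_iff₀ hb']
    linarith
  have e2 : (2.28 : ℝ) ≤ ∑ p ∈ prN 31, Real.log p / p := by
    rw [hset]
    have k3 := key 3 2 3 (by norm_num) (by norm_num)
    have k5 := key 9 4 5 (by norm_num) (by norm_num)
    have k7 := key 11 4 7 (by norm_num) (by norm_num)
    have k11 := key 13 4 11 (by norm_num) (by norm_num)
    have k13 := key 7 2 13 (by norm_num) (by norm_num)
    have k17 := key 4 1 17 (by norm_num) (by norm_num)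
    have k19 := key 4 1 19 (by norm_num) (by norm_num)
    have k23 := key 4 1 23 (by norm_num) (by norm_num)
    have k29 := key 4 1 29 (by norm_num) (by norm_num)
    have k31 := key 4 1 31 (by norm_num) (by norm_num)
    norm_num at *
    linarith
  have e3 : (1.2 : ℝ) ≤ Real.log (Real.log 32) := by
    rw [Real.le_log_iff_exp_le (by rw [h32]; positivity), h32]
    have h5 : Real.exp (1.2) ^ 5 = Real.exp 1 ^ 6 := by
      rw [← Real.exp_nat_mul, ← Real.exp_nat_mul]; norm_num
    have h6 : Real.exp 1 ^ 6 ≤ 3.4 ^ 5 := by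
      calc Real.exp 1 ^ 6 ≤ 2.7182818286 ^ 6 := by
            gcongr; exact Real.exp_one_lt_d9.le
        _ ≤ _ := by norm_num
    have h7 : Real.exp 1.2 ≤ 3.4 := by
      rw [← h5] at h6
      exact le_of_pow_le_pow_left₀ (by norm_num) (by norm_num) h6
    linarith
  have e4 : (2.28 - 0.54) / (5 * 0.6931471808) ≤
      (∑ p ∈ prN 31, Real.log p / p - 0.54) / Real.log 32 := by
    rw [h32]
    apply div_le_div₀ <;> linarith
  have e5 : (∑ p ∈ prN 31, Real.log p / p - 0.54) / Real.log 32 =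
     (∑ p ∈ prN 31, Real.log p / p) / Real.log 32 - 0.54 * (1 / Real.log 32) := by ring
  rw [e5] at e4
  have e6 : (0.5 : ℝ) ≤ (2.28 - 0.54) / (5 * 0.6931471808) := by norm_num
  have e7 : (0.54 : ℝ) / Real.log (N + 1) = 0.54 * (1 / Real.log (N + 1)) := by ring
  rw [e7] at hA
  linarith

lemma log_div_sq_aux (N M : ℕ) (hN : 1 ≤ N) (hM : N ≤ M) :
    ∑ p ∈ prN M, Real.log p / (p : ℝ) ^ 2 - ∑ p ∈ prN N, Real.log p / (p : ℝ) ^ 2 ≤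
      (∑ p ∈ prN M, Real.log p) / ((M : ℝ) + 1) ^ 2
      + 2 * Real.log 2 * (2 / ((N : ℝ) + 1) - 2 / ((M : ℝ) + 1)) := by
  induction M, hM using Nat.le_induction with
  | base =>
    have : 0 ≤ ∑ p ∈ prN N, Real.log p := Finset.sum_nonneg (fun p _ => Real.log_natCast_nonneg p)
    simp; positivity
  | succ M hM ih =>
    rw [prN_sum_succ M (fun p => Real.log p / (p : ℝ) ^ 2)]
    have hs := prN_sum_succ M (fun p => Real.log p)
    have ht := theta_le_prN (M + 1)
    set A := ∑ p ∈ prN M, Real.log p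
    set A' := ∑ p ∈ prN (M + 1), Real.log p
    have hM' : (1 : ℝ) ≤ M := by exact_mod_cast hN.trans hM
    push_cast at *
    have e1 : (if (M + 1).Prime then Real.log ((M : ℝ) + 1) / ((M : ℝ) + 1) ^ 2 else 0)
        = (A' - A) / ((M : ℝ) + 1) ^ 2 := by
      rw [hs]
      split_ifs
      · ring
      · simp
    rw [e1]
    have h1 : A' * (1 / ((M : ℝ) + 1) ^ 2 - 1 / ((M : ℝ) + 1 + 1) ^ 2) ≤
        2 * Real.log 2 * ((M : ℝ) + 1) * (1 / ((M : ℝ) + 1) ^ 2 - 1 / ((M : ℝ) + 1 + 1) ^ 2) := by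
      apply mul_le_mul_of_nonneg_right ht
      rw [sub_nonneg]
      gcongr
      linarith
    have h2 : ((M : ℝ) + 1) * (1 / ((M : ℝ) + 1) ^ 2 - 1 / ((M : ℝ) + 1 + 1) ^ 2) ≤
        2 / ((M : ℝ) + 1) - 2 / ((M : ℝ) + 1 + 1) := by
      rw [div_sub_div _ _ (by positivity) (by positivity),
        div_sub_div _ _ (by positivity) (by positivity), ← mul_div_assoc,
        div_le_div_iff₀ (by positivity) (by positivity)]
      have : 0 ≤ (M : ℝ) := by positivity
      ring_nf
      nlinarith [pow_nonneg this 2, pow_nonneg this 3, pow_nonneg this 4]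
    have h3 : 0 < Real.log 2 := Real.log_pos (by norm_num)
    have h4 : (A' - A) / ((M : ℝ) + 1) ^ 2 =
      A' * (1 / ((M : ℝ) + 1) ^ 2 - 1 / ((M : ℝ) + 1 + 1) ^ 2) + A' / ((M : ℝ) + 1 + 1) ^ 2
       - A / ((M : ℝ) + 1) ^ 2 := by ring
    rw [h4]
    nlinarith [mul_le_mul_of_nonneg_left h2 h3.le]

lemma recip_sq_tail (N M : ℕ) (hN : 1 ≤ N) :
    ∑ p ∈ (prN M).filter (fun p => N < p), 1 / (p : ℝ) ^ 2 ≤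
      3 / (((N : ℝ) + 1) * Real.log (N + 1)) := by
  have hN' : (1 : ℝ) ≤ N := by exact_mod_cast hN
  have hl : 0 < Real.log ((N : ℝ) + 1) := Real.log_pos (by linarith)
  rcases le_total M N with hMN | hMN
  · rw [Finset.filter_false_of_mem, Finset.sum_empty]
    · positivity
    · intro p hp
      simp [prN] at hp
      omega
  have h := log_div_sq_aux N M hN hMN
  have ht := theta_le_prN M
  have hsplit : ∑ p ∈ prN M, Real.log p / (p : ℝ) ^ 2 =
      ∑ p ∈ prN N, Real.log p / (p : ℝ) ^ 2 +
      ∑ p ∈ (prN M).filter (fun p => N < p), Real.log p / (p : ℝ) ^ 2 := by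
    rw [← Finset.sum_filter_add_sum_filter_not (prN M) (fun p => N < p), add_comm]
    congr 1
    apply Finset.sum_congr _ (fun _ _ => rfl)
    ext p
    simp [prN]
    constructor
    · rintro ⟨⟨a, b⟩, c⟩; exact ⟨by omega, b⟩
    · rintro ⟨a, b⟩; exact ⟨⟨by omega, b⟩, by omega⟩
  have h1 : (∑ p ∈ prN M, Real.log p) / ((M : ℝ) + 1) ^ 2 ≤ 2 * Real.log 2 * (2 / ((M : ℝ) + 1)) := by
    rw [div_le_iff₀ (by positivity)]
    have : 2 * Real.log 2 * (2 / ((M : ℝ) + 1)) * ((M : ℝ) + 1) ^ 2 =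
      2 * Real.log 2 * (2 * ((M : ℝ) + 1)) := by field_simp
    rw [this]
    refine ht.trans ?_
    have : (0 : ℝ) ≤ M := by positivity
    have := Real.log_pos (show (1 : ℝ) < 2 by norm_num)
    gcongr
    linarith
  have h2 : ∑ p ∈ (prN M).filter (fun p => N < p), Real.log p / (p : ℝ) ^ 2 ≤
      3 / ((N : ℝ) + 1) := by
    have : 2 * Real.log 2 * (2 / ((N : ℝ) + 1)) ≤ 3 / ((N : ℝ) + 1) := by
      rw [← mul_div_assoc]
      gcongr
      linarith [Real.log_two_lt_d9]
    linarith
  have h3 : Real.log (N + 1) * ∑ p ∈ (prN M).filter (fun p => N < p), 1 / (p : ℝ) ^ 2 ≤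
      ∑ p ∈ (prN M).filter (fun p => N < p), Real.log p / (p : ℝ) ^ 2 := by
    rw [Finset.mul_sum]
    apply Finset.sum_le_sum
    intro p hp
    simp at hp
    rw [mul_one_div]
    gcongr
    exact_mod_cast hp.2
  rw [div_mul_eq_div_div, le_div_iff₀ hl]
  linarith

noncomputable def invHom : ℕ →* ℝ where
  toFun n := (n : ℝ)⁻¹
  map_one' := by simp
  map_mul' a b := by push_cast; rw [mul_inv]

lemma sum_recip_tele (n : ℕ) (hn : 1 ≤ n) :
    ∑ p ∈ prN n, (1 : ℝ) / (p * (p - 1)) ≤ 1 - 1 / n := by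
  induction n, hn using Nat.le_induction with
  | base =>
    have : prN 1 = ∅ := by unfold prN; decide
    simp [this]
  | succ n hn ih =>
    rw [prN_sum_succ n (fun p : ℕ => (1 : ℝ) / (p * (p - 1)))]
    have hn' : (1 : ℝ) ≤ n := by exact_mod_cast hn
    have h : (if (n + 1).Prime then (1 : ℝ) / ((n + 1 : ℕ) * ((n + 1 : ℕ) - 1)) else 0)
       ≤ 1 / n - 1 / (n + 1) := by
      have e : (1 : ℝ) / n - 1 / (n + 1) = 1 / ((n + 1) * n) := by field_simp; ring
      rw [e]
      split_ifs
      · push_cast; simp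
      · positivity
    push_cast at *
    linarith

lemma prime_recip_ge (n : ℕ) (hn : 2 ≤ n) :
    Real.log (Real.log (n + 1)) - 1 ≤ ∑ p ∈ prN n, (1 : ℝ) / p := by
  have hset : Nat.primesBelow (n + 1) = prN n := by
    ext p; simp [Nat.primesBelow, prN]
  have hE := EulerProduct.summable_and_hasSum_smoothNumbers_prod_primesBelow_geometric
    (f := invHom) (by
      intro p hp
      have : (1 : ℝ) < p := by exact_mod_cast hp.one_lt
      simp only [invHom, MonoidHom.coe_mk, OneHom.coe_mk, norm_inv, Real.norm_natCast]
      exact inv_lt_one_of_one_lt₀ this) (n + 1)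
  have hpr : ∀ p ∈ prN n, (2 : ℝ) ≤ p := by
    intro p hp
    have hpp : p.Prime := by simp [prN] at hp; exact hp.2
    exact_mod_cast hpp.two_le
  have h1 : Real.log (n + 1) ≤ ∏ p ∈ prN n, (1 - invHom p)⁻¹ := by
    have h := log_add_one_le_harmonic n
    rw [Nat.cast_add, Nat.cast_one] at h
    rw [← hset, ← hE.2.tsum_eq]
    refine h.trans ?_
    have hinj : ∀ i ∈ Finset.range n, (i + 1) ∈ Nat.smoothNumbers (n + 1) := by
      intro i hi
      simp at hi
      exact Nat.mem_smoothNumbers_of_lt (by omega) (by omega)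
    have := hE.2.summable.sum_le_tsum
      ((Finset.range n).attach.image (fun i => (⟨i.1 + 1, hinj i.1 i.2⟩ : Nat.smoothNumbers (n + 1))))
      (fun i _ => by simp [invHom])
    refine le_trans (le_of_eq ?_) this
    rw [Finset.sum_image]
    · rw [harmonic]
      push_cast
      rw [← Finset.sum_attach]
      simp [invHom]
    · intro a _ b _ hab
      simp at hab
      exact hab
  have hlpos : 0 < Real.log ((n : ℝ) + 1) := Real.log_pos (by
    have : (2 : ℝ) ≤ n := by exact_mod_cast hn
    linarith)
  have h2 := Real.log_le_log hlpos h1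
  rw [Real.log_prod] at h2
  · have h3 : ∑ p ∈ prN n, Real.log ((1 - invHom p)⁻¹) ≤
        ∑ p ∈ prN n, ((1 : ℝ) / p + 1 / (p * (p - 1))) := by
      apply Finset.sum_le_sum
      intro p hp
      have hp2 := hpr p hp
      have : (1 - invHom p)⁻¹ = (p : ℝ) / (p - 1) := by
        simp only [invHom, MonoidHom.coe_mk, OneHom.coe_mk]
        have : (p : ℝ) - 1 ≠ 0 := by linarith
        have h0 : (p : ℝ) ≠ 0 := by linarith
        rw [show (1 - (p : ℝ)⁻¹) = ((p : ℝ) - 1) / p by field_simp, inv_div]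
      rw [this]
      refine (Real.log_le_sub_one_of_pos (div_pos (by linarith) (by linarith))).trans (le_of_eq ?_)
      have : (p : ℝ) - 1 ≠ 0 := by linarith
      field_simp
      ring
    rw [Finset.sum_add_distrib] at h3
    have h4 := sum_recip_tele n (by omega)
    have : (0 : ℝ) ≤ 1 / n := by positivity
    linarith
  · intro p hp
    have := hpr p hp
    simp only [invHom, MonoidHom.coe_mk, OneHom.coe_mk]
    apply inv_ne_zero
    have : ((p : ℝ))⁻¹ ≤ 1 / 2 := by
      rw [one_div]; gcongr
    linarith

lemma sigmay_eq (y : ℝ) : sigmay y = ∑ p ∈ prN ⌊y⌋₊, (1 : ℝ) / p := rfl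

lemma primesLe_eq (y : ℝ) : primesLe y = prN ⌊y⌋₊ := rfl

lemma sigmay_ge (y : ℝ) (hy : 3 ≤ y) : Real.log (Real.log y) - 1 ≤ sigmay y := by
  rw [sigmay_eq]
  have h2 : 2 ≤ ⌊y⌋₊ := Nat.le_floor (by norm_num; linarith)
  refine le_trans ?_ (prime_recip_ge _ h2)
  have : y ≤ ⌊y⌋₊ + 1 := (Nat.lt_floor_add_one y).le
  have h0 : 0 < Real.log y := Real.log_pos (by linarith)
  gcongr

lemma sin_pow_int_odd (n : ℕ) : ∫ x in (0 : ℝ)..(2 * π), Real.sin x ^ (2 * n + 1) = 0 := by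
  induction n with
  | zero => simp
  | succ n ih =>
    rw [show 2 * (n + 1) + 1 = (2 * n + 1) + 2 by ring, integral_sin_pow, ih]
    simp

lemma sin_pow_int_even (n : ℕ) : ∫ x in (0 : ℝ)..(2 * π), Real.sin x ^ (2 * n) =
    2 * π * ((2 * n).factorial / (4 ^ n * (n.factorial : ℝ) ^ 2)) := by
  induction n with
  | zero => simp
  | succ n ih =>
    rw [show 2 * (n + 1) = (2 * n) + 2 by ring, integral_sin_pow, ih]
    simp [Nat.factorial_succ]
    field_simp
    ring

lemma J0_summable (w : ℂ) : Summable (fun n : ℕ => w ^ n / ((n.factorial : ℂ)) ^ 2) := by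
  apply Summable.of_norm
  refine Summable.of_nonneg_of_le (fun _ => norm_nonneg _) ?_
    (Real.summable_pow_div_factorial ‖w‖)
  intro n
  rw [norm_div, norm_pow, norm_pow, Complex.norm_natCast]
  have : (1 : ℝ) ≤ n.factorial := by exact_mod_cast Nat.factorial_pos n
  gcongr
  nlinarith

/-- integral representation -/
lemma J0_integral (s : ℂ) :
    J0twoISqrt (s ^ 2) = (1 / (2 * π) : ℝ) *
      ∫ x in (0 : ℝ)..(2 * π), Complex.exp (2 * s * (Real.sin x : ℝ)) := by
  have hpi := Real.pi_pos
  have key : HasSum (fun n : ℕ => ∫ x in (0 : ℝ)..(2 * π),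
      (2 * s * (Real.sin x : ℝ)) ^ n / (n.factorial : ℂ))
      (∫ x in (0 : ℝ)..(2 * π), Complex.exp (2 * s * (Real.sin x : ℝ))) := by
    apply intervalIntegral.hasSum_integral_of_dominated_convergence
      (bound := fun n _ => (2 * ‖s‖) ^ n / n.factorial)
    · intro n
      apply Continuous.aestronglyMeasurable
      fun_prop
    · intro n
      refine Eventually.of_forall fun x _ => ?_
      rw [norm_div, norm_pow, norm_mul, norm_mul, Complex.norm_natCast, Complex.norm_real]
      have : ‖Real.sin x‖ ≤ 1 := Real.abs_sin_le_one x
      have h2 : ‖(2:ℂ)‖ * ‖s‖ * ‖Real.sin x‖ ≤ 2 * ‖s‖ := by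
        rw [Complex.norm_ofNat]
        nlinarith [norm_nonneg s]
      exact div_le_div_of_nonneg_right (pow_le_pow_left₀ (by positivity) h2 n) (by positivity)
    · exact Eventually.of_forall fun x _ => Real.summable_pow_div_factorial _
    · simp
    · refine Eventually.of_forall fun x _ => ?_
      have := NormedSpace.expSeries_div_hasSum_exp (𝔸 := ℂ) (2 * s * (Real.sin x : ℝ))
      rwa [← Complex.exp_eq_exp_ℂ] at this
  have hterm : ∀ n : ℕ, ∫ x in (0 : ℝ)..(2 * π), (2 * s * (Real.sin x : ℝ)) ^ n / (n.factorial : ℂ)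
      = (2 * s) ^ n / (n.factorial : ℂ) * ((∫ x in (0 : ℝ)..(2 * π), Real.sin x ^ n : ℝ) : ℂ) := by
    intro n
    rw [← intervalIntegral.integral_ofReal, ← intervalIntegral.integral_const_mul]
    congr 1
    ext x
    push_cast
    ring
  simp_rw [hterm] at key
  have hinj : Function.Injective (fun n : ℕ => 2 * n) := fun a b h => by simpa using h
  have h2 := (hinj.hasSum_iff (f := fun n : ℕ => (2 * s) ^ n / (n.factorial : ℂ) *
    ((∫ x in (0 : ℝ)..(2 * π), Real.sin x ^ n : ℝ) : ℂ)) (by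
      intro n hn
      have : ∃ m, n = 2 * m + 1 := by
        rcases Nat.even_or_odd' n with ⟨m, rfl | rfl⟩
        · exact absurd ⟨m, rfl⟩ hn
        · exact ⟨m, rfl⟩
      obtain ⟨m, rfl⟩ := this
      rw [sin_pow_int_odd]
      simp)).2 key
  have h3 := h2.mul_left (((1 / (2 * π) : ℝ)) : ℂ)
  unfold J0twoISqrt
  rw [← h3.tsum_eq]
  congr 1
  ext n
  simp only [Function.comp]
  rw [sin_pow_int_even]
  have hf : ((2 * n).factorial : ℂ) ≠ 0 := by exact_mod_cast Nat.factorial_ne_zero _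
  have hf2 : ((n).factorial : ℂ) ≠ 0 := by exact_mod_cast Nat.factorial_ne_zero _
  have hpi' : (π : ℂ) ≠ 0 := by exact_mod_cast hpi.ne'
  push_cast
  have e4 : (4 : ℂ) ^ n = 2 ^ (2 * n) := by rw [pow_mul]; norm_num
  rw [e4, mul_pow, ← pow_mul]
  field_simp

lemma J0_ofReal (x : ℝ) : J0twoISqrt (x : ℂ) =
    ((∑' n : ℕ, x ^ n / ((n.factorial : ℝ)) ^ 2 : ℝ) : ℂ) := by
  unfold J0twoISqrt
  push_cast
  rfl

lemma J0_real_le_exp (x : ℝ) (hx : 0 ≤ x) : ‖J0twoISqrt (x : ℂ)‖ ≤ Real.exp x := by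
  unfold J0twoISqrt
  rw [Real.exp_eq_exp_ℝ, NormedSpace.exp_eq_tsum_div]
  refine tsum_of_norm_bounded (Real.summable_pow_div_factorial x).hasSum ?_
  intro n
  rw [norm_div, norm_pow, norm_pow, Complex.norm_natCast, Complex.norm_real,
    Real.norm_of_nonneg hx]
  have : (1 : ℝ) ≤ n.factorial := by exact_mod_cast Nat.factorial_pos n
  gcongr
  nlinarith

lemma J0_le (s : ℂ) : ‖J0twoISqrt (s ^ 2)‖ ≤ Real.exp (s.re ^ 2) := by
  have h1 := J0_real_le_exp (s.re ^ 2) (sq_nonneg _)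
  refine le_trans ?_ h1
  have e := J0_integral (s.re : ℂ)
  rw [show ((s.re ^ 2 : ℝ) : ℂ) = (s.re : ℂ) ^ 2 by push_cast; rfl, e, J0_integral s,
    norm_mul, norm_mul]
  gcongr
  have e2 : (∫ x in (0 : ℝ)..(2 * π), Complex.exp (2 * (s.re : ℂ) * (Real.sin x : ℝ))) =
      ((∫ x in (0 : ℝ)..(2 * π), Real.exp (2 * s.re * Real.sin x) : ℝ) : ℂ) := by
    rw [← intervalIntegral.integral_ofReal]
    congr 1
    ext x
    push_cast
    rfl
  rw [e2, Complex.norm_real]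
  refine le_trans ?_ (le_abs_self _)
  apply intervalIntegral.norm_integral_le_of_norm_le (by positivity)
  · refine Eventually.of_forall fun x _ => ?_
    rw [Complex.norm_exp]
    apply le_of_eq
    congr 1
    rw [Complex.re_mul_ofReal]
    simp
  · apply Continuous.intervalIntegrable
    fun_prop

lemma phifun_le (w : ℂ) : ‖phifun w‖ ≤ Real.exp ‖w‖ := by
  obtain ⟨s, rfl⟩ : ∃ s : ℂ, s ^ 2 = w := IsAlgClosed.exists_pow_nat_eq w (by norm_num)
  unfold phifun
  rw [norm_mul, Complex.norm_exp]
  calc Real.exp (-s ^ 2).re * ‖J0twoISqrt (s ^ 2)‖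
      ≤ Real.exp (-s ^ 2).re * Real.exp (s.re ^ 2) := by gcongr; exact J0_le s
    _ = Real.exp (s.im ^ 2) := by
        rw [← Real.exp_add]
        congr 1
        simp [sq]
    _ ≤ _ := by
        rw [norm_pow]
        gcongr Real.exp ?_
        rw [← sq_abs]
        gcongr
        exact Complex.abs_im_le_norm s

lemma J0_differentiable : Differentiable ℂ J0twoISqrt := by
  have h : ∀ R : ℝ, DifferentiableOn ℂ J0twoISqrt (Metric.ball 0 R) := by
    intro R
    have h1 : ∀ n : ℕ, DifferentiableOn ℂ (fun w : ℂ => w ^ n / ((n.factorial : ℂ)) ^ 2)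
        (Metric.ball 0 R) := fun n =>
      ((differentiable_pow n).div_const _).differentiableOn
    have h2 : ∀ (n : ℕ) (w : ℂ), w ∈ Metric.ball (0:ℂ) R →
        ‖w ^ n / ((n.factorial : ℂ)) ^ 2‖ ≤ R ^ n / (n.factorial : ℝ) := by
      intro n w hw
      simp only [Metric.mem_ball, dist_zero_right] at hw
      rw [norm_div, norm_pow, norm_pow, Complex.norm_natCast]
      have : (1 : ℝ) ≤ n.factorial := by exact_mod_cast Nat.factorial_pos n
      have h3 : (n.factorial : ℝ) ≤ (n.factorial : ℝ) ^ 2 := by nlinarith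
      have h4 : 0 ≤ R := (norm_nonneg w).trans hw.le
      exact div_le_div₀ (by positivity) (pow_le_pow_left₀ (norm_nonneg _) hw.le n)
        (by positivity) h3
    exact differentiableOn_tsum_of_summable_norm
      (F := fun (n : ℕ) (w : ℂ) => w ^ n / ((n.factorial : ℂ)) ^ 2)
      (Real.summable_pow_div_factorial R) h1 Metric.isOpen_ball h2
  intro z
  exact (h (‖z‖ + 1)).differentiableAt (Metric.isOpen_ball.mem_nhds (by simp))

lemma phifun_differentiable : Differentiable ℂ phifun := by
  unfold phifun
  have := J0_differentiable
  fun_prop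

lemma Phifun_differentiable (y : ℝ) : Differentiable ℂ (Phifun y) := by
  unfold Phifun
  have := phifun_differentiable
  fun_prop

lemma J0_near (w : ℂ) (hw : ‖w‖ ≤ 1) : ‖J0twoISqrt w - 1 - w‖ ≤ Real.exp 1 * ‖w‖ ^ 2 := by
  have h := (J0_summable w).sum_add_tsum_nat_add 2
  have e : J0twoISqrt w - 1 - w = ∑' n : ℕ, w ^ (n + 2) / (((n + 2).factorial : ℂ)) ^ 2 := by
    unfold J0twoISqrt
    rw [← h]
    simp [Finset.sum_range_succ]
    ring
  rw [e]
  have hs : HasSum (fun n : ℕ => ‖w‖ ^ 2 * (1 / (n.factorial : ℝ))) (‖w‖ ^ 2 * Real.exp 1) := by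
    apply HasSum.mul_left
    rw [Real.exp_eq_exp_ℝ]
    simpa using NormedSpace.expSeries_div_hasSum_exp (𝔸 := ℝ) 1
  rw [mul_comm]
  refine tsum_of_norm_bounded hs ?_
  intro n
  rw [norm_div, norm_pow, norm_pow, Complex.norm_natCast, pow_add, mul_comm (‖w‖ ^ n),
    mul_div_assoc]
  have h1 : (1 : ℝ) ≤ (n + 2).factorial := by exact_mod_cast Nat.factorial_pos _
  have h2 : (n.factorial : ℝ) ≤ (n + 2).factorial := by
    exact_mod_cast Nat.factorial_le (by omega)
  have h3 : ‖w‖ ^ n ≤ 1 := pow_le_one₀ (norm_nonneg _) hw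
  gcongr
  nlinarith

lemma phifun_near : ∃ C : ℝ, 0 < C ∧ ∀ w : ℂ, ‖w‖ ≤ 1 → ‖phifun w‖ ≤ Real.exp (C * ‖w‖ ^ 2) := by
  refine ⟨1 + 2 + Real.exp 1 * Real.exp 1, by positivity, ?_⟩
  intro w hw
  have h1 : ‖Complex.exp (-w) - 1 - (-w)‖ ≤ ‖-w‖ ^ 2 :=
    Complex.norm_exp_sub_one_sub_id_le (by simpa using hw)
  have h2 := J0_near w hw
  rw [norm_neg] at h1
  have h3 : ‖Complex.exp (-w)‖ ≤ Real.exp 1 := by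
    rw [Complex.norm_exp]
    gcongr
    exact (Complex.re_le_norm _).trans (by simpa using hw)
  have e : phifun w = 1 + (-(w ^ 2) + (1 + w) * (Complex.exp (-w) - 1 - (-w))
     + Complex.exp (-w) * (J0twoISqrt w - 1 - w)) := by
    unfold phifun; ring
  have h4 : ‖1 + w‖ ≤ 2 := by
    refine (norm_add_le _ _).trans ?_
    rw [norm_one]; linarith
  rw [e]
  have n0 := norm_nonneg w
  calc ‖1 + (-(w ^ 2) + (1 + w) * (Complex.exp (-w) - 1 - (-w))
     + Complex.exp (-w) * (J0twoISqrt w - 1 - w))‖ 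
     ≤ 1 + (‖w‖ ^ 2 + ‖1 + w‖ * ‖Complex.exp (-w) - 1 - (-w)‖ + 
        ‖Complex.exp (-w)‖ * ‖J0twoISqrt w - 1 - w‖) := by
        refine (norm_add_le _ _).trans ?_
        rw [norm_one]
        gcongr
        refine (norm_add_le _ _).trans ?_
        rw [norm_mul]
        gcongr
        refine (norm_add_le _ _).trans ?_
        rw [norm_mul, norm_neg, norm_pow]
    _ ≤ 1 + (‖w‖ ^ 2 + 2 * ‖w‖ ^ 2 + Real.exp 1 * (Real.exp 1 * ‖w‖ ^ 2)) := by
        gcongr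
    _ = (1 + 2 + Real.exp 1 * Real.exp 1) * ‖w‖ ^ 2 + 1 := by ring
    _ ≤ _ := Real.add_one_le_exp _

noncomputable def ell (n : ℕ) : ℝ := Real.log (Real.log ((n : ℝ) + 1)) + 1

lemma ell_pos (n : ℕ) (hn : 1 ≤ n) : 0 < ell n := by
  have h1 : (1 : ℝ) ≤ n := by exact_mod_cast hn
  have h2 : Real.log 2 ≤ Real.log ((n : ℝ) + 1) := Real.log_le_log (by norm_num) (by linarith)
  have h3 := Real.log_two_gt_d9
  have h4 : Real.log (Real.exp (-1)) < Real.log (Real.log ((n : ℝ) + 1)) := by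
    apply Real.log_lt_log (Real.exp_pos _)
    have : Real.exp (-1) < 1 / 2 := by
      rw [Real.exp_neg, ← one_div]
      apply one_div_lt_one_div_of_lt (by norm_num)
      have := Real.exp_one_gt_d9
      linarith
    linarith
  rw [Real.log_exp] at h4
  unfold ell; linarith

lemma primesLe_mono_sum_sq (y : ℝ) (N : ℕ) (hN : 1 ≤ N) :
    ∑ p ∈ (primesLe y).filter (fun p => N < p), 1 / (p : ℝ) ^ 2 ≤
      3 / (((N : ℝ) + 1) * Real.log ((N : ℝ) + 1)) := by
  rw [primesLe_eq]
  exact recip_sq_tail N ⌊y⌋₊ hN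

lemma Phifun_bound_one : ∃ M : ℝ, 0 < M ∧ ∀ y : ℝ, ∀ z : ℂ, ‖z‖ = 1 → ‖Phifun y z‖ ≤ M := by
  obtain ⟨C, hC, h⟩ := phifun_near
  refine ⟨Real.exp (C * (3 / (((1 : ℕ) + 1 : ℝ) * Real.log (((1 : ℕ) : ℝ) + 1)))), Real.exp_pos _, ?_⟩
  intro y z hz
  unfold Phifun
  rw [norm_prod]
  have h1 : ∏ p ∈ primesLe y, ‖phifun (z / (p : ℂ))‖ ≤
      ∏ p ∈ primesLe y, Real.exp (C * (1 / (p : ℝ) ^ 2)) := by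
    apply Finset.prod_le_prod
    · intro p hp; positivity
    · intro p hp
      have hp : p.Prime := (Finset.mem_filter.1 hp).2
      have hp1 : (1 : ℝ) ≤ p := by exact_mod_cast hp.one_lt.le
      have e : ‖z / (p : ℂ)‖ = 1 / p := by
        rw [norm_div, hz, Complex.norm_natCast]
      refine (h _ ?_).trans ?_
      · rw [e]; rw [div_le_one (by linarith)]; exact hp1
      · rw [e]
        apply le_of_eq
        congr 2
        field_simp
  refine h1.trans ?_
  rw [← Real.exp_sum, ← Finset.mul_sum]
  gcongr
  refine le_trans (le_of_eq ?_) (primesLe_mono_sum_sq y 1 le_rfl)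
  rw [Finset.filter_true_of_mem]
  intro p hp
  exact (Finset.mem_filter.1 hp).2.one_lt

lemma Phifun_bound_R : ∃ R0 : ℝ, 31 ≤ R0 ∧ ∀ y : ℝ, ∀ R : ℝ, R0 ≤ R → ∀ z : ℂ, ‖z‖ = R →
    ‖Phifun y z‖ ≤ Real.exp (R * (Real.log (Real.log (R + 1)) + 0.95)) := by
  obtain ⟨C, hC, h⟩ := phifun_near
  refine ⟨max 31 (Real.exp (60 * C)), le_max_left _ _, ?_⟩
  intro y R hR z hz
  have hR1 : 31 ≤ R := (le_max_left _ _).trans hR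
  have hR2 : Real.exp (60 * C) ≤ R := (le_max_right _ _).trans hR
  have hlog : 60 * C ≤ Real.log R := by
    rw [Real.le_log_iff_exp_le (by linarith)]; exact hR2
  set N := ⌊R⌋₊ with hNdef
  have hN31 : 31 ≤ N := Nat.le_floor (by exact_mod_cast hR1)
  have hNle : (N : ℝ) ≤ R := Nat.floor_le (by linarith)
  have hNlt : R < N + 1 := Nat.lt_floor_add_one R
  unfold Phifun
  rw [norm_prod]
  have h1 : ∏ p ∈ primesLe y, ‖phifun (z / (p : ℂ))‖ ≤
      ∏ p ∈ primesLe y, Real.exp (if p ≤ N then R * (1 / p) else C * R ^ 2 * (1 / (p : ℝ) ^ 2)) := by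
    apply Finset.prod_le_prod
    · intro p hp; positivity
    · intro p hp
      have hp : p.Prime := (Finset.mem_filter.1 hp).2
      have hp1 : (1 : ℝ) ≤ p := by exact_mod_cast hp.one_lt.le
      have e : ‖z / (p : ℂ)‖ = R / p := by
        rw [norm_div, hz, Complex.norm_natCast]
      split_ifs with hpN
      · refine (phifun_le _).trans ?_
        rw [e]
        apply le_of_eq
        congr 1
        ring
      · push Not at hpN
        have hpR : R ≤ p := by
          have : ((N + 1 : ℕ) : ℝ) ≤ p := by exact_mod_cast hpN
          push_cast at this; linarith
        refine (h _ ?_).trans ?_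
        · rw [e]; rw [div_le_one (by linarith)]; exact hpR
        · rw [e]
          apply le_of_eq
          congr 1
          rw [div_pow]; ring
  refine h1.trans ?_
  rw [← Real.exp_sum, Finset.sum_ite, ← Finset.mul_sum, ← Finset.mul_sum]
  apply Real.exp_le_exp.2
  have h2 : ∑ p ∈ (primesLe y).filter (fun p => p ≤ N), (1 : ℝ) / p ≤
      Real.log (Real.log (R + 1)) + 0.9 := by
    calc _ ≤ ∑ p ∈ prN N, (1 : ℝ) / p := by
          apply Finset.sum_le_sum_of_subset_of_nonneg
          · intro p hp
            simp only [Finset.mem_filter, primesLe] at hp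
            simp only [prN, Finset.mem_filter, Finset.mem_range]
            exact ⟨by omega, hp.1.2⟩
          · intro _ _ _; positivity
      _ ≤ Real.log (Real.log (N + 1)) + 0.9 := prime_recip_le N hN31
      _ ≤ _ := by
          have : 0 < Real.log ((N : ℝ) + 1) := Real.log_pos (by linarith)
          gcongr
  have h3 : ∑ p ∈ (primesLe y).filter (fun p => ¬ p ≤ N), (1 : ℝ) / (p : ℝ) ^ 2 ≤
      3 / (R * Real.log R) := by
    simp only [not_le]
    refine (primesLe_mono_sum_sq y N (by omega)).trans ?_
    have : 0 < Real.log R := Real.log_pos (by linarith)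
    have hR0 : 0 < R := by linarith
    gcongr
  have hl : 0 < Real.log R := Real.log_pos (by linarith)
  have h4 : C * R ^ 2 * (3 / (R * Real.log R)) ≤ R * 0.05 := by
    have : C * R ^ 2 * (3 / (R * Real.log R)) = R * (3 * C / Real.log R) := by
      field_simp
    rw [this]
    gcongr
    rw [div_le_iff₀ hl]
    linarith
  calc _ ≤ R * (Real.log (Real.log (R + 1)) + 0.9) + C * R ^ 2 * (3 / (R * Real.log R)) := by
        gcongr
    _ ≤ _ := by linarith

lemma PhiCoef_cauchy (y R M : ℝ) (hR : 0 < R) (n : ℕ)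
    (h : ∀ z : ℂ, ‖z‖ = R → ‖Phifun y z‖ ≤ M) : ‖PhiCoef y n‖ ≤ M / R ^ n := by
  have := Complex.norm_iteratedDeriv_le_of_forall_mem_sphere_norm_le (f := Phifun y) (c := 0) n hR
    (Phifun_differentiable y).diffContOnCl (C := M) (by
      intro z hz
      apply h
      simpa using hz)
  unfold PhiCoef
  rw [norm_div, Complex.norm_natCast, div_le_iff₀ (by positivity)]
  refine this.trans (le_of_eq ?_)
  ring

lemma ell_asymp (R0 : ℝ) : ∀ᶠ n : ℕ in atTop, 3 ≤ n ∧ 1 ≤ ell n - 0.05 ∧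
    R0 ≤ n / (ell n - 0.05) ∧ Real.log n ≤ 0.05 * (n / ell n) := by
  have hll : Tendsto (fun x : ℝ => Real.log (Real.log (x + 1))) atTop atTop :=
    Real.tendsto_log_atTop.comp (Real.tendsto_log_atTop.comp (tendsto_atTop_add_const_right _ _ tendsto_id))
  have hlo : ∀ᶠ x : ℝ in atTop, Real.log x ^ 2 ≤ 0.01 * x := by
    have := (isLittleO_pow_log_id_atTop (n := 2)).bound (c := 0.01) (by norm_num)
    filter_upwards [this, eventually_ge_atTop 1] with x hx h1
    simpa [abs_of_nonneg (by linarith : (0:ℝ) ≤ x)] using hx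
  have hb : ∀ᶠ x : ℝ in atTop, 2 * |R0| * Real.log x ≤ x := by
    have := (Real.isLittleO_log_id_atTop).bound (c := 1 / (2 * |R0| + 1)) (by positivity)
    filter_upwards [this, eventually_ge_atTop 1] with x hx h1
    have hl : 0 ≤ Real.log x := Real.log_nonneg h1
    simp only [id, Real.norm_eq_abs, abs_of_nonneg (by linarith : (0:ℝ) ≤ x), abs_of_nonneg hl] at hx
    rw [one_div, inv_mul_eq_div, le_div_iff₀ (by positivity)] at hx
    nlinarith [le_abs_self R0, abs_nonneg R0]
  have hr : ∀ᶠ x : ℝ in atTop, 3 ≤ x ∧ 1 ≤ Real.log (Real.log (x + 1)) + 1 - 0.05 ∧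
     R0 ≤ x / (Real.log (Real.log (x + 1)) + 1 - 0.05) ∧
     Real.log x ≤ 0.05 * (x / (Real.log (Real.log (x + 1)) + 1)) := by
    filter_upwards [hlo, hb, hll.eventually_ge_atTop 1, eventually_ge_atTop 3] with x h1 h2 h3 h4
    have hlx : 1 ≤ Real.log x := by
      rw [Real.le_log_iff_exp_le (by linarith)]
      have := Real.exp_one_lt_d9
      linarith
    have h5 : Real.log (Real.log (x + 1)) + 1 ≤ Real.log x + 1 := by
      have ha : Real.log (x + 1) ≤ x := by
        have := Real.log_le_sub_one_of_pos (show 0 < x + 1 by linarith)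
        linarith
      have : 0 < Real.log (x + 1) := Real.log_pos (by linarith)
      gcongr
    refine ⟨h4, by linarith, ?_, ?_⟩
    · rw [le_div_iff₀ (by linarith)]
      nlinarith [le_abs_self R0, abs_nonneg R0]
    · rw [mul_div_assoc', le_div_iff₀ (by linarith)]
      nlinarith
  have := tendsto_natCast_atTop_atTop (R := ℝ) |>.eventually hr
  filter_upwards [this] with n hn
  unfold ell
  exact ⟨by exact_mod_cast hn.1, hn.2⟩

lemma PhiCoef_bound : ∃ C : ℝ, 0 < C ∧ ∀ y : ℝ, ∀ n : ℕ, 1 ≤ n →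
    ‖PhiCoef y n‖ ≤ C * (ell n ^ n / n.factorial) := by
  obtain ⟨R0, hR0, hb⟩ := Phifun_bound_R
  obtain ⟨M, hM, hb1⟩ := Phifun_bound_one
  obtain ⟨N0, hN0⟩ := eventually_atTop.1 (ell_asymp R0)
  refine ⟨Real.exp 1 + M * ∑ n ∈ Finset.range N0, |(n.factorial : ℝ) / ell n ^ n|,
    by positivity, ?_⟩
  intro y n hn
  have hl := ell_pos n hn
  have hn0 : (0 : ℝ) < n := by exact_mod_cast hn
  rcases le_or_gt N0 n with hnN | hnN
  · obtain ⟨-, h1, h2, h3⟩ := hN0 n hnN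
    set a := ell n - 0.05 with ha
    have ha0 : 0 < a := by linarith
    set R := (n : ℝ) / a with hR
    have hRpos : 0 < R := by linarith
    have hRn : R ≤ n := by
      rw [hR, div_le_iff₀ ha0]; nlinarith
    have hΦ : ∀ z : ℂ, ‖z‖ = R → ‖Phifun y z‖ ≤ Real.exp n := by
      intro z hz
      refine (hb y R h2 z hz).trans ?_
      have : R * (Real.log (Real.log (R + 1)) + 0.95) ≤ R * a := by
        have h5 : 0 < Real.log (R + 1) := Real.log_pos (by linarith)
        have h6 : Real.log (Real.log (R + 1)) ≤ Real.log (Real.log (n + 1)) := by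
          gcongr
        gcongr
        rw [ha]; unfold ell
        linarith
      apply Real.exp_le_exp.2
      refine this.trans (le_of_eq ?_)
      rw [hR]; field_simp
    have h4 := PhiCoef_cauchy y R _ hRpos n hΦ
    refine h4.trans ?_
    have h5 : Real.exp n / R ^ n ≤ Real.exp 1 * (ell n ^ n / n.factorial) := by
      have hf : (0 : ℝ) < n.factorial := by positivity
      have hfac : (n.factorial : ℝ) ≤ Real.exp (n * Real.log n - n + Real.log n + 1) := by
        rw [← Real.log_le_iff_le_exp hf]
        exact log_factorial_le n hn
      have ha2 : a ^ n ≤ ell n ^ n * Real.exp (- Real.log n) := by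
        have : a ≤ ell n * Real.exp (-(0.05 / ell n)) := by
          have := Real.add_one_le_exp (-(0.05 / ell n))
          calc a = ell n * (-(0.05 / ell n) + 1) := by rw [ha]; field_simp; ring
            _ ≤ _ := by gcongr
        calc a ^ n ≤ (ell n * Real.exp (-(0.05 / ell n))) ^ n := by gcongr
          _ = ell n ^ n * Real.exp (- (0.05 * (n / ell n))) := by
              rw [mul_pow, ← Real.exp_nat_mul]; congr 2; ring
          _ ≤ _ := by gcongr
      have hnn : (n : ℝ) ^ n = Real.exp (n * Real.log n) := by
        rw [Real.exp_nat_mul, Real.exp_log hn0]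
      rw [hR, div_pow, div_div_eq_mul_div, mul_div_assoc', div_le_div_iff₀ (by positivity) hf]
      calc Real.exp n * a ^ n * n.factorial ≤
          Real.exp n * (ell n ^ n * Real.exp (- Real.log n)) *
            Real.exp (n * Real.log n - n + Real.log n + 1) := by gcongr
        _ = Real.exp 1 * ell n ^ n * n ^ n := by
          rw [hnn]
          have : Real.exp n * Real.exp (-Real.log n) * Real.exp (n * Real.log n - n + Real.log n + 1)
            = Real.exp 1 * Real.exp (n * Real.log n) := by
            rw [← Real.exp_add, ← Real.exp_add, ← Real.exp_add]; congr 1; ring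
          linear_combination ell n ^ n * this
    refine h5.trans ?_
    gcongr
    have : 0 ≤ M * ∑ n ∈ Finset.range N0, |(n.factorial : ℝ) / ell n ^ n| := by positivity
    linarith
  · have h4 := PhiCoef_cauchy y 1 M one_pos n (fun z hz => hb1 y z hz)
    rw [one_pow, div_one] at h4
    refine h4.trans ?_
    have h5 : (n.factorial : ℝ) / ell n ^ n ≤
        ∑ n ∈ Finset.range N0, |(n.factorial : ℝ) / ell n ^ n| := by
      refine (le_abs_self _).trans ?_
      exact Finset.single_le_sum (f := fun n : ℕ => |(n.factorial : ℝ) / ell n ^ n|)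
        (fun _ _ => abs_nonneg _) (Finset.mem_range.2 hnN)
    have h6 : 1 ≤ (∑ n ∈ Finset.range N0, |(n.factorial : ℝ) / ell n ^ n|) *
        (ell n ^ n / n.factorial) := by
      calc 1 = (n.factorial : ℝ) / ell n ^ n * (ell n ^ n / n.factorial) := by
            field_simp
        _ ≤ _ := by gcongr
    have h7 : 0 < Real.exp 1 * (ell n ^ n / n.factorial) := by positivity
    nlinarith

lemma Phifun_zero (y : ℝ) : Phifun y 0 = 1 := by
  unfold Phifun phifun
  have : J0twoISqrt 0 = 1 := by
    have := J0_near 0 (by simp)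
    simp at this
    exact sub_eq_zero.1 this
  simp [this]

lemma PhiCoef_zero (y : ℝ) : PhiCoef y 0 = 1 := by
  unfold PhiCoef
  simp [Phifun_zero]

lemma Phifun_hasSum (y : ℝ) (z : ℂ) : HasSum (fun n => PhiCoef y n * z ^ n) (Phifun y z) := by
  have := Complex.hasSum_taylorSeries_of_entire (Phifun_differentiable y) 0 z
  refine Eq.mp ?_ this
  congr 1
  ext n
  unfold PhiCoef
  simp only [sub_zero, smul_eq_mul]
  ring

noncomputable def expRem (k : ℕ) (x : ℝ) : ℂ :=
  Complex.exp (I * x) - ∑ j ∈ Finset.range k, (I * x) ^ j / (j.factorial : ℂ)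

lemma expRem_zero_at (k : ℕ) : expRem (k + 1) 0 = 0 := by
  unfold expRem
  rw [Finset.sum_range_succ']
  simp

lemma expRem_hasDerivAt (k : ℕ) (x : ℝ) :
    HasDerivAt (expRem (k + 1)) (I * expRem k x) x := by
  unfold expRem
  have h1 : HasDerivAt (fun x : ℝ => (I * x : ℂ)) I x := by
    simpa using (Complex.ofRealCLM.hasDerivAt (x := x)).const_mul I
  have h2 := h1.cexp
  have h3 : HasDerivAt (fun x : ℝ => ∑ j ∈ Finset.range (k + 1), (I * x : ℂ) ^ j / (j.factorial : ℂ))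
      (∑ j ∈ Finset.range (k + 1), ((j : ℂ) * (I * x) ^ (j - 1) * I) / (j.factorial : ℂ)) x := by
    apply HasDerivAt.fun_sum
    intro j _
    exact (h1.pow j).div_const _
  refine (h2.sub h3).congr_deriv ?_
  symm
  rw [Finset.sum_range_succ', mul_sub, Finset.mul_sum]
  simp only [Nat.cast_zero, zero_mul, zero_div, add_zero]
  rw [mul_comm I (cexp _)]
  congr 1
  apply Finset.sum_congr rfl
  intro j _
  rw [Nat.factorial_succ]
  have : (j.factorial : ℂ) ≠ 0 := by exact_mod_cast Nat.factorial_ne_zero j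
  have h2 : ((j : ℂ) + 1) ≠ 0 := by exact_mod_cast Nat.succ_ne_zero j
  push_cast
  field_simp

lemma expRem_le_nonneg (k : ℕ) (x : ℝ) (hx : 0 ≤ x) : ‖expRem k x‖ ≤ x ^ k / k.factorial := by
  induction k generalizing x with
  | zero =>
    simp [expRem, mul_comm I, Complex.norm_exp_ofReal_mul_I]
  | succ k ih =>
    have hc : Continuous (fun u : ℝ => I * expRem k u) := by
      unfold expRem
      fun_prop
    have h := intervalIntegral.integral_eq_sub_of_hasDerivAt (a := 0) (b := x)
      (fun u _ => expRem_hasDerivAt k u) (hc.intervalIntegrable _ _)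
    rw [expRem_zero_at, sub_zero] at h
    rw [← h]
    have h2 : ∫ u in (0 : ℝ)..x, u ^ k / (k.factorial : ℝ) = x ^ (k + 1) / (k + 1).factorial := by
      rw [intervalIntegral.integral_div, integral_pow, Nat.factorial_succ]
      push_cast
      field_simp
      simp
    rw [← h2]
    apply intervalIntegral.norm_integral_le_of_norm_le hx
    · refine Eventually.of_forall fun u hu => ?_
      rw [norm_mul, Complex.norm_I, one_mul]
      exact ih u hu.1.le
    · apply Continuous.intervalIntegrable
      fun_prop

lemma expRem_conj (k : ℕ) (x : ℝ) : expRem k (-x) = (starRingEnd ℂ) (expRem k x) := by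
  unfold expRem
  rw [map_sub, map_sum, ← Complex.exp_conj]
  congr 1
  · simp
  · apply Finset.sum_congr rfl
    intro j _
    simp

lemma expRem_le (k : ℕ) (x : ℝ) : ‖expRem k x‖ ≤ |x| ^ k / k.factorial := by
  rcases le_total 0 x with h | h
  · rw [abs_of_nonneg h]; exact expRem_le_nonneg k x h
  · rw [abs_of_nonpos h]
    have := expRem_le_nonneg k (-x) (by linarith)
    rwa [expRem_conj, RCLike.norm_conj] at this

section generic
variable {ι : Type*} [Fintype ι]

noncomputable def torV (a : ι → ℝ) (θ : ι → ℝ) : ℝ := ∑ i, a i * Real.sin (θ i)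

noncomputable def torE (n : ι → ℤ) (θ : ι → ℝ) : ℂ := Complex.exp (I * ((∑ i, (n i : ℝ) * θ i : ℝ) : ℂ))

def l1 (n : ι → ℤ) : ℕ := ∑ i, (n i).natAbs

lemma torV_cont (a : ι → ℝ) : Continuous (torV a) := by
  unfold torV; fun_prop

lemma torE_cont (n : ι → ℤ) : Continuous (torE n) := by
  unfold torE; fun_prop

lemma torV_le (a : ι → ℝ) (ha : ∀ i, |a i| ≤ 1) (θ : ι → ℝ) : |torV a θ| ≤ Fintype.card ι := by
  unfold torV
  refine (Finset.abs_sum_le_sum_abs _ _).trans ?_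
  calc _ ≤ ∑ i : ι, (1 : ℝ) := by
        apply Finset.sum_le_sum
        intro i _
        rw [abs_mul]
        have := Real.abs_sin_le_one (θ i)
        nlinarith [ha i, abs_nonneg (a i), abs_nonneg (Real.sin (θ i))]
    _ = _ := by simp

lemma torE_norm (n : ι → ℤ) (θ : ι → ℝ) : ‖torE n θ‖ = 1 := by
  unfold torE
  rw [Complex.norm_exp_I_mul_ofReal]

lemma torEV_integrable (P : Measure (ι → ℝ)) [IsProbabilityMeasure P] (a : ι → ℝ)
    (ha : ∀ i, |a i| ≤ 1) (n : ι → ℤ) (m : ℕ) :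
    Integrable (fun θ => torE n θ * (torV a θ : ℂ) ^ m) P := by
  refine Integrable.of_bound (C := (Fintype.card ι : ℝ) ^ m) ?_ ?_
  · apply Continuous.aestronglyMeasurable
    have := torV_cont a
    have := torE_cont n
    fun_prop
  · refine Eventually.of_forall fun θ => ?_
    rw [norm_mul, torE_norm, one_mul, norm_pow, Complex.norm_real]
    exact pow_le_pow_left₀ (abs_nonneg _) (torV_le a ha θ) m

lemma torEV_succ [DecidableEq ι] (a : ι → ℝ) (n : ι → ℤ) (m : ℕ) (θ : ι → ℝ) :
    torE n θ * (torV a θ : ℂ) ^ (m + 1) =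
      ∑ i, ((a i : ℂ) / (2 * I)) * (torE (n + Pi.single i 1) θ * (torV a θ : ℂ) ^ m
        - torE (n + Pi.single i (-1)) θ * (torV a θ : ℂ) ^ m) := by
  have hE : ∀ i (e : ℤ), torE (n + Pi.single i e) θ = torE n θ * Complex.exp (I * (e * θ i)) := by
    intro i e
    unfold torE
    rw [← Complex.exp_add, ← mul_add]
    congr 2
    simp only [Pi.add_apply, Int.cast_add, add_mul, Finset.sum_add_distrib]
    push_cast
    congr 1
    rw [Finset.sum_eq_single i]
    · simp
    · intro j _ hj
      simp [hj]
    · simp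
  have hV : (torV a θ : ℂ) = ∑ i, (a i : ℂ) * Complex.sin (θ i) := by
    unfold torV; push_cast; rfl
  rw [pow_succ, ← mul_assoc]
  nth_rewrite 2 [hV]
  rw [Finset.mul_sum]
  apply Finset.sum_congr rfl
  intro i _
  rw [hE, hE, Complex.sin]
  have e1 : Complex.exp (I * (((1:ℤ):ℂ) * θ i)) = Complex.exp (θ i * I) := by
    congr 1; push_cast; ring
  have e2 : Complex.exp (I * (((-1:ℤ):ℂ) * θ i)) = Complex.exp (-θ i * I) := by
    congr 1; push_cast; ring
  rw [e1, e2]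
  field_simp
  ring_nf
  simp only [Complex.I_sq]
  ring

lemma l1_add_single [DecidableEq ι] (n : ι → ℤ) (i : ι) (e : ℤ) (he : e.natAbs ≤ 1) :
    l1 (n + Pi.single i e) ≤ l1 n + 1 := by
  unfold l1
  have h1 : ∀ j, ((n + Pi.single i e : ι → ℤ) j).natAbs ≤ (n j).natAbs + if j = i then 1 else 0 := by
    intro j
    simp only [Pi.add_apply, Pi.single_apply]
    split_ifs <;> omega
  refine (Finset.sum_le_sum fun j _ => h1 j).trans ?_
  rw [Finset.sum_add_distrib]
  simp

lemma tor_disc (P Q : Measure (ι → ℝ)) [IsProbabilityMeasure P] [IsProbabilityMeasure Q]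
    (a : ι → ℝ) (ha : ∀ i, |a i| ≤ 1) (Y ε : ℝ) (hY : 1 ≤ Y) (hε : 0 ≤ ε)
    (hcard : (Fintype.card ι : ℝ) ≤ Y)
    (h0 : ∀ n : ι → ℤ, ‖∫ θ, torE n θ ∂P - ∫ θ, torE n θ ∂Q‖ ≤ ε * Y ^ (l1 n)) (m : ℕ) :
    ∀ n : ι → ℤ, ‖∫ θ, torE n θ * (torV a θ : ℂ) ^ m ∂P - ∫ θ, torE n θ * (torV a θ : ℂ) ^ m ∂Q‖
      ≤ ε * Y ^ (l1 n + 2 * m) := by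
  classical
  induction m with
  | zero => intro n; simpa using h0 n
  | succ m ih =>
    intro n
    have hInteg : ∀ (W : Measure (ι → ℝ)) [IsProbabilityMeasure W],
        ∫ θ, torE n θ * (torV a θ : ℂ) ^ (m + 1) ∂W =
        ∑ i, ((a i : ℂ) / (2 * I)) * (∫ θ, torE (n + Pi.single i 1) θ * (torV a θ : ℂ) ^ m ∂W
        - ∫ θ, torE (n + Pi.single i (-1)) θ * (torV a θ : ℂ) ^ m ∂W) := by
      intro W _
      simp_rw [torEV_succ]
      rw [integral_finsetSum]
      · apply Finset.sum_congr rfl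
        intro i _
        rw [integral_const_mul, integral_sub]
        · exact torEV_integrable W a ha _ m
        · exact torEV_integrable W a ha _ m
      · intro i _
        exact ((torEV_integrable W a ha _ m).sub (torEV_integrable W a ha _ m)).const_mul _
    rw [hInteg P, hInteg Q, ← Finset.sum_sub_distrib]
    refine (norm_sum_le _ _).trans ?_
    have hi : ∀ i, ‖(a i : ℂ) / (2 * I) * (∫ θ, torE (n + Pi.single i 1) θ * (torV a θ : ℂ) ^ m ∂P
        - ∫ θ, torE (n + Pi.single i (-1)) θ * (torV a θ : ℂ) ^ m ∂P) -
        (a i : ℂ) / (2 * I) * (∫ θ, torE (n + Pi.single i 1) θ * (torV a θ : ℂ) ^ m ∂Q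
        - ∫ θ, torE (n + Pi.single i (-1)) θ * (torV a θ : ℂ) ^ m ∂Q)‖ ≤
        ε * Y ^ (l1 n + 1 + 2 * m) := by
      intro i
      have e1 := ih (n + Pi.single i 1)
      have e2 := ih (n + Pi.single i (-1))
      have b1 : ε * Y ^ (l1 (n + Pi.single i 1) + 2 * m) ≤ ε * Y ^ (l1 n + 1 + 2 * m) := by
        gcongr
        exact l1_add_single n i 1 (by simp)
      have b2 : ε * Y ^ (l1 (n + Pi.single i (-1)) + 2 * m) ≤ ε * Y ^ (l1 n + 1 + 2 * m) := by
        gcongr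
        exact l1_add_single n i (-1) (by simp)
      rw [← mul_sub, norm_mul]
      have hai : ‖(a i : ℂ) / (2 * I)‖ ≤ 1 / 2 := by
        rw [norm_div, norm_mul, Complex.norm_I, Complex.norm_real, Complex.norm_ofNat, mul_one,
          Real.norm_eq_abs]
        have := ha i
        linarith
      set A := ∫ θ, torE (n + Pi.single i 1) θ * (torV a θ : ℂ) ^ m ∂P
      set B := ∫ θ, torE (n + Pi.single i (-1)) θ * (torV a θ : ℂ) ^ m ∂P
      set A' := ∫ θ, torE (n + Pi.single i 1) θ * (torV a θ : ℂ) ^ m ∂Q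
      set B' := ∫ θ, torE (n + Pi.single i (-1)) θ * (torV a θ : ℂ) ^ m ∂Q
      have e3 : ‖A - B - (A' - B')‖ ≤ 2 * (ε * Y ^ (l1 n + 1 + 2 * m)) := by
        rw [show A - B - (A' - B') = (A - A') - (B - B') by ring]
        refine (norm_sub_le _ _).trans ?_
        linarith
      have := norm_nonneg (A - B - (A' - B'))
      nlinarith [norm_nonneg ((a i : ℂ) / (2 * I))]
    refine (Finset.sum_le_sum fun i _ => hi i).trans ?_
    rw [Finset.sum_const, Finset.card_univ, nsmul_eq_mul]
    calc (Fintype.card ι : ℝ) * (ε * Y ^ (l1 n + 1 + 2 * m)) ≤ Y * (ε * Y ^ (l1 n + 1 + 2 * m)) := by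
          gcongr
      _ = _ := by ring

lemma tor_moment (P Q : Measure (ι → ℝ)) [IsProbabilityMeasure P] [IsProbabilityMeasure Q]
    (a : ι → ℝ) (ha : ∀ i, |a i| ≤ 1) (Y ε : ℝ) (hY : 1 ≤ Y) (hε : 0 ≤ ε)
    (hcard : (Fintype.card ι : ℝ) ≤ Y)
    (h0 : ∀ n : ι → ℤ, ‖∫ θ, torE n θ ∂P - ∫ θ, torE n θ ∂Q‖ ≤ ε * Y ^ (l1 n)) (m : ℕ) :
    |∫ θ, torV a θ ^ m ∂P - ∫ θ, torV a θ ^ m ∂Q| ≤ ε * Y ^ (2 * m) := by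
  have := tor_disc P Q a ha Y ε hY hε hcard h0 m 0
  have e0 : ∀ θ : ι → ℝ, torE 0 θ = 1 := by intro θ; simp [torE]
  have e1 : l1 (0 : ι → ℤ) = 0 := by simp [l1]
  simp only [e0, one_mul, e1, zero_add] at this
  have e2 : ∀ W : Measure (ι → ℝ), ∫ θ, (torV a θ : ℂ) ^ m ∂W = ((∫ θ, torV a θ ^ m ∂W : ℝ) : ℂ) := by
    intro W
    rw [← integral_complex_ofReal]
    push_cast
    rfl
  rw [e2, e2, ← Complex.ofReal_sub, Complex.norm_real] at this
  exact this

lemma torV_pow_integrable (P : Measure (ι → ℝ)) [IsProbabilityMeasure P] (a : ι → ℝ)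
    (ha : ∀ i, |a i| ≤ 1) (m : ℕ) : Integrable (fun θ => torV a θ ^ m) P := by
  refine Integrable.of_bound (C := (Fintype.card ι : ℝ) ^ m) ?_ ?_
  · exact ((torV_cont a).pow m).aestronglyMeasurable
  · refine Eventually.of_forall fun θ => ?_
    rw [norm_pow]
    exact pow_le_pow_left₀ (abs_nonneg _) (torV_le a ha θ) m

lemma tor_char_expand (P : Measure (ι → ℝ)) [IsProbabilityMeasure P]
    (a : ι → ℝ) (ha : ∀ i, |a i| ≤ 1) (t : ℝ) (k : ℕ) (hk : Even k) (ht : 0 ≤ t) :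
    ‖∫ θ, Complex.exp (I * ((t * torV a θ : ℝ) : ℂ)) ∂P -
      ∑ j ∈ Finset.range k, (I * t) ^ j / (j.factorial : ℂ) * ((∫ θ, torV a θ ^ j ∂P : ℝ) : ℂ)‖
      ≤ t ^ k / k.factorial * ∫ θ, torV a θ ^ k ∂P := by
  have h1 : ∀ j, (I * t) ^ j / (j.factorial : ℂ) * ((∫ θ, torV a θ ^ j ∂P : ℝ) : ℂ) =
      ∫ θ, (I * ((t * torV a θ : ℝ) : ℂ)) ^ j / (j.factorial : ℂ) ∂P := by
    intro j
    rw [← integral_complex_ofReal, ← integral_const_mul]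
    congr 1
    ext θ
    push_cast
    ring
  have hInteg : ∀ j ∈ Finset.range k, Integrable (fun θ => (I * ((t * torV a θ : ℝ) : ℂ)) ^ j / (j.factorial : ℂ)) P := by
    intro j _
    have := ((torV_pow_integrable P a ha j).ofReal (𝕜 := ℂ)).const_mul ((I * t) ^ j / (j.factorial : ℂ))
    refine this.congr (Eventually.of_forall fun θ => ?_)
    simp
    ring
  have hexp : Integrable (fun θ => Complex.exp (I * ((t * torV a θ : ℝ) : ℂ))) P := by
    refine Integrable.of_bound (C := 1) ?_ ?_
    · have := torV_cont a
      apply Continuous.aestronglyMeasurable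
      fun_prop
    · refine Eventually.of_forall fun θ => ?_
      rw [Complex.norm_exp_I_mul_ofReal]
  simp_rw [h1]
  rw [← integral_finsetSum _ hInteg, ← integral_sub hexp (integrable_finsetSum _ hInteg), ← integral_const_mul]
  apply norm_integral_le_of_norm_le ((torV_pow_integrable P a ha k).const_mul _)
  refine Eventually.of_forall fun θ => ?_
  have := expRem_le k (t * torV a θ)
  unfold expRem at this
  refine this.trans (le_of_eq ?_)
  rw [hk.pow_abs, mul_pow]
  ring

lemma tor_char_diff (P Q : Measure (ι → ℝ)) [IsProbabilityMeasure P] [IsProbabilityMeasure Q]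
    (a : ι → ℝ) (ha : ∀ i, |a i| ≤ 1) (Y ε : ℝ) (hY : 1 ≤ Y) (hε : 0 ≤ ε)
    (hcard : (Fintype.card ι : ℝ) ≤ Y)
    (h0 : ∀ n : ι → ℤ, ‖∫ θ, torE n θ ∂P - ∫ θ, torE n θ ∂Q‖ ≤ ε * Y ^ (l1 n))
    (L lam : ℝ) (k : ℕ) (hk : Even k) (hk1 : 1 ≤ k) (hL : 0 ≤ L) (hl : 0 ≤ lam) (hl1 : lam ≤ 1) :
    ‖∫ θ, Complex.exp (I * (((L * lam) * torV a θ : ℝ) : ℂ)) ∂P -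
      ∫ θ, Complex.exp (I * (((L * lam) * torV a θ : ℝ) : ℂ)) ∂Q‖ ≤
     lam * (ε * Y ^ (2 * k) * Real.exp L + 2 * (L ^ k / k.factorial * ∫ θ, torV a θ ^ k ∂Q)) := by
  have hm := tor_moment P Q a ha Y ε hY hε hcard h0
  have ht : 0 ≤ L * lam := by positivity
  have hP := tor_char_expand P a ha (L * lam) k hk ht
  have hQ := tor_char_expand Q a ha (L * lam) k hk ht
  set FP := ∫ θ, Complex.exp (I * (((L * lam) * torV a θ : ℝ) : ℂ)) ∂P
  set FQ := ∫ θ, Complex.exp (I * (((L * lam) * torV a θ : ℝ) : ℂ)) ∂Q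
  set SP := ∑ j ∈ Finset.range k, (I * ((L * lam : ℝ) : ℂ)) ^ j / (j.factorial : ℂ) * ((∫ θ, torV a θ ^ j ∂P : ℝ) : ℂ) with hSP
  set SQ := ∑ j ∈ Finset.range k, (I * ((L * lam : ℝ) : ℂ)) ^ j / (j.factorial : ℂ) * ((∫ θ, torV a θ ^ j ∂Q : ℝ) : ℂ) with hSQ
  have hl_pow : ∀ j, 1 ≤ j → lam ^ j ≤ lam := by
    intro j hj
    calc lam ^ j ≤ lam ^ 1 := pow_le_pow_of_le_one hl hl1 hj
      _ = lam := pow_one _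
  have hterm : ∀ j, 1 ≤ j → j ≤ k → (L * lam) ^ j / j.factorial * (ε * Y ^ (2 * j)) ≤
      lam * (ε * Y ^ (2 * k)) * (L ^ j / j.factorial) := by
    intro j hj hjk
    have h1 : Y ^ (2 * j) ≤ Y ^ (2 * k) := pow_le_pow_right₀ hY (by omega)
    calc _ = L ^ j / j.factorial * lam ^ j * (ε * Y ^ (2 * j)) := by rw [mul_pow]; ring
      _ ≤ L ^ j / j.factorial * lam * (ε * Y ^ (2 * k)) := by
          gcongr
          exact hl_pow j hj
      _ = _ := by ring
  have hS : ‖SP - SQ‖ ≤ ∑ j ∈ Finset.range k, lam * (ε * Y ^ (2 * k)) * (L ^ j / j.factorial) := by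
    rw [hSP, hSQ, ← Finset.sum_sub_distrib]
    refine (norm_sum_le _ _).trans (Finset.sum_le_sum fun j hj => ?_)
    rcases Nat.eq_zero_or_pos j with rfl | hj1
    · simp
      positivity
    · refine le_trans ?_ (hterm j hj1 (Finset.mem_range.1 hj).le)
      rw [← mul_sub, norm_mul, ← Complex.ofReal_sub, Complex.norm_real]
      gcongr
      · apply le_of_eq
        rw [norm_div, norm_pow, norm_mul, Complex.norm_I, one_mul, Complex.norm_real,
          Complex.norm_natCast, Real.norm_of_nonneg ht]
      · exact hm j
  have hmk : ∫ θ, torV a θ ^ k ∂P ≤ ∫ θ, torV a θ ^ k ∂Q + ε * Y ^ (2 * k) := by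
    have := (abs_le.1 (hm k)).2
    linarith
  have hQ0 : 0 ≤ ∫ θ, torV a θ ^ k ∂Q := integral_nonneg fun θ => hk.pow_nonneg _
  have hQ' : (L * lam) ^ k / k.factorial * ∫ θ, torV a θ ^ k ∂Q ≤
      lam * (L ^ k / k.factorial * ∫ θ, torV a θ ^ k ∂Q) := by
    rw [mul_pow]
    calc _ = lam ^ k * (L ^ k / k.factorial * ∫ θ, torV a θ ^ k ∂Q) := by ring
      _ ≤ _ := by
        gcongr
        exact hl_pow k hk1
  have hP' : (L * lam) ^ k / k.factorial * ∫ θ, torV a θ ^ k ∂P ≤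
      lam * (L ^ k / k.factorial * ∫ θ, torV a θ ^ k ∂Q) + lam * (ε * Y ^ (2 * k)) * (L ^ k / k.factorial) := by
    calc _ ≤ (L * lam) ^ k / k.factorial * (∫ θ, torV a θ ^ k ∂Q + ε * Y ^ (2 * k)) := by gcongr
      _ = (L * lam) ^ k / k.factorial * ∫ θ, torV a θ ^ k ∂Q + (L * lam) ^ k / k.factorial * (ε * Y ^ (2 * k)) := by ring
      _ ≤ _ := add_le_add hQ' (hterm k hk1 le_rfl)
  have hexp : ∑ j ∈ Finset.range (k + 1), L ^ j / (j.factorial : ℝ) ≤ Real.exp L :=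
    Real.sum_le_exp_of_nonneg hL _
  have htot : ‖FP - FQ‖ ≤ ‖FP - SP‖ + ‖SP - SQ‖ + ‖FQ - SQ‖ := by
    rw [show FP - FQ = (FP - SP) + (SP - SQ) - (FQ - SQ) by ring]
    refine (norm_sub_le _ _).trans ?_
    gcongr
    exact norm_add_le _ _
  refine htot.trans ?_
  have hfin : ∑ j ∈ Finset.range k, lam * (ε * Y ^ (2 * k)) * (L ^ j / (j.factorial : ℝ)) +
      lam * (ε * Y ^ (2 * k)) * (L ^ k / k.factorial) ≤ lam * (ε * Y ^ (2 * k)) * Real.exp L := by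
    rw [← Finset.mul_sum, ← mul_add, ← Finset.sum_range_succ (fun j => L ^ j / (j.factorial : ℝ))]
    gcongr
  linarith [hP, hQ, hS, hP', hQ', hfin]

end generic

noncomputable def unifM (T H : ℝ) : Measure ℝ :=
  ENNReal.ofReal (1 / H) • volume.restrict (Set.Ioc T (T + H))

lemma unifM_prob (T H : ℝ) (hH : 0 < H) : IsProbabilityMeasure (unifM T H) := by
  constructor
  unfold unifM
  simp only [Measure.smul_apply, Measure.restrict_apply_univ, Real.volume_Ioc, smul_eq_mul]
  rw [← ENNReal.ofReal_mul (by positivity)]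
  rw [show 1 / H * (T + H - T) = 1 by field_simp; ring]
  simp

lemma unifM_integral {E : Type*} [NormedAddCommGroup E] [NormedSpace ℝ E] (T H : ℝ) (hH : 0 < H)
    (f : ℝ → E) : ∫ x, f x ∂(unifM T H) = (1 / H) • ∫ x in T..(T + H), f x := by
  unfold unifM
  rw [integral_smul_measure, intervalIntegral.integral_of_le (by linarith)]
  rw [ENNReal.toReal_ofReal (by positivity)]

section generic
variable {ι : Type*} [Fintype ι]

noncomputable def torQ (ι : Type*) [Fintype ι] : Measure (ι → ℝ) := Measure.pi (fun _ => unifM 0 (2 * π))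

instance unifM_2pi : IsProbabilityMeasure (unifM 0 (2 * π)) := unifM_prob _ _ (by positivity)

instance torQ_prob : IsProbabilityMeasure (torQ ι) := by
  unfold torQ; infer_instance

lemma torQ_torE (n : ι → ℤ) (hn : n ≠ 0) : ∫ θ, torE n θ ∂(torQ ι) = 0 := by
  have h1 : ∀ θ : ι → ℝ, torE n θ = ∏ i, Complex.exp (I * ((n i : ℝ) * θ i : ℝ)) := by
    intro θ
    unfold torE
    rw [← Complex.exp_sum, ← Finset.mul_sum]
    push_cast
    rfl
  simp_rw [h1]
  unfold torQ
  rw [integral_fintype_prod_eq_prod (fun i x => Complex.exp (I * ((n i : ℝ) * x : ℝ)))]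
  obtain ⟨i, hi⟩ := Function.ne_iff.1 hn
  apply Finset.prod_eq_zero (Finset.mem_univ i)
  rw [unifM_integral _ _ (by positivity)]
  have hni : (n i : ℂ) ≠ 0 := by exact_mod_cast hi
  have hc : (I * n i : ℂ) ≠ 0 := mul_ne_zero I_ne_zero hni
  have := integral_exp_mul_complex (a := 0) (b := 0 + 2 * π) hc
  have e : ∀ x : ℝ, Complex.exp (I * ((n i : ℝ) * x : ℝ)) = Complex.exp (I * n i * x) := by
    intro x; push_cast; congr 1; ring
  simp_rw [e, this]
  have e3 : Complex.exp (I * n i * ((0 + 2 * π : ℝ) : ℂ)) = 1 := by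
    rw [Complex.exp_eq_one_iff]
    exact ⟨n i, by push_cast; ring⟩
  rw [e3]
  simp

lemma torQ_exp (a : ι → ℝ) (s : ℂ) :
    ∫ θ, Complex.exp (s * (torV a θ : ℂ)) ∂(torQ ι) = ∏ i, J0twoISqrt ((s * a i / 2) ^ 2) := by
  have h1 : ∀ θ : ι → ℝ, Complex.exp (s * (torV a θ : ℂ)) =
      ∏ i, Complex.exp (2 * (s * a i / 2) * (Real.sin (θ i) : ℝ)) := by
    intro θ
    unfold torV
    rw [← Complex.exp_sum]
    push_cast
    rw [Finset.mul_sum]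
    congr 1
    apply Finset.sum_congr rfl
    intro i _
    ring
  simp_rw [h1]
  unfold torQ
  rw [integral_fintype_prod_eq_prod (fun i x => Complex.exp (2 * (s * a i / 2) * (Real.sin x : ℝ)))]
  apply Finset.prod_congr rfl
  intro i _
  rw [J0_integral, unifM_integral _ _ (by positivity), zero_add, Complex.real_smul]

lemma torQ_rexp (a : ι → ℝ) (s : ℝ) :
    ∫ θ, Real.exp (s * torV a θ) ∂(torQ ι) ≤ Real.exp (s ^ 2 / 4 * ∑ i, a i ^ 2) := by
  have h := torQ_exp a (s : ℂ)
  have e : ∫ θ, Complex.exp (s * (torV a θ : ℂ)) ∂(torQ ι) =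
      ((∫ θ, Real.exp (s * torV a θ) ∂(torQ ι) : ℝ) : ℂ) := by
    rw [← integral_complex_ofReal]
    push_cast
    rfl
  rw [e] at h
  have h2 : ‖((∫ θ, Real.exp (s * torV a θ) ∂(torQ ι) : ℝ) : ℂ)‖ ≤ Real.exp (s ^ 2 / 4 * ∑ i, a i ^ 2) := by
    rw [h, norm_prod, Finset.mul_sum, Real.exp_sum]
    apply Finset.prod_le_prod
    · intro i _; positivity
    · intro i _
      have := J0_real_le_exp ((s * a i / 2) ^ 2) (by positivity)
      push_cast at this
      refine this.trans (le_of_eq ?_)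
      congr 1; ring
  rw [Complex.norm_real] at h2
  exact (le_abs_self _).trans h2

lemma torQ_moment (a : ι → ℝ) (ha : ∀ i, |a i| ≤ 1) (s : ℝ) (hs : 0 < s) (k : ℕ) (hk : Even k) :
    s ^ k / k.factorial * ∫ θ, torV a θ ^ k ∂(torQ ι) ≤ 2 * Real.exp (s ^ 2 / 4 * ∑ i, a i ^ 2) := by
  have hInteg : ∀ u : ℝ, Integrable (fun θ => Real.exp (u * torV a θ)) (torQ ι) := by
    intro u
    refine Integrable.of_bound (C := Real.exp (|u| * Fintype.card ι)) ?_ ?_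
    · have := torV_cont a
      apply Continuous.aestronglyMeasurable
      fun_prop
    · refine Eventually.of_forall fun θ => ?_
      rw [Real.norm_of_nonneg (Real.exp_pos _).le]
      apply Real.exp_le_exp.2
      refine (le_abs_self _).trans ?_
      rw [abs_mul]
      gcongr
      exact torV_le a ha θ
  have h1 := torQ_rexp a s
  have h2 := torQ_rexp a (-s)
  rw [neg_sq] at h2
  rw [← integral_const_mul]
  calc ∫ θ, s ^ k / k.factorial * torV a θ ^ k ∂(torQ ι)
      ≤ ∫ θ, (Real.exp (s * torV a θ) + Real.exp (-s * torV a θ)) ∂(torQ ι) := by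
        apply integral_mono
        · exact (torV_pow_integrable _ a ha k).const_mul _
        · exact (hInteg s).add (hInteg (-s))
        · intro θ
          have := Real.pow_div_factorial_le_exp |s * torV a θ| (abs_nonneg _) k
          rw [hk.pow_abs, mul_pow] at this
          have h3 : Real.exp |s * torV a θ| ≤ Real.exp (s * torV a θ) + Real.exp (-s * torV a θ) := by
            have p1 := Real.exp_pos (s * torV a θ)
            have p2 := Real.exp_pos (-s * torV a θ)
            rcases abs_choice (s * torV a θ) with h | h
            · rw [h]; linarith
            · rw [h, ← neg_mul]; linarith
          calc _ = s ^ k * torV a θ ^ k / k.factorial := by ring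
            _ ≤ _ := this.trans h3
    _ = _ + _ := integral_add (hInteg s) (hInteg (-s))
    _ ≤ _ := by linarith
end generic

/-! specialization to primes -/

abbrev PI (y : ℝ) := {p : ℕ // p ∈ primesLe y}

noncomputable def ampl (y : ℝ) (p : PI y) : ℝ := 1 / Real.sqrt (p.1 : ℝ)

noncomputable def torP (y T H : ℝ) : Measure (PI y → ℝ) :=
  Measure.map (fun (t : ℝ) (p : PI y) => t * Real.log (p.1 : ℝ)) (unifM T H)

lemma torP_prob (y T H : ℝ) (hH : 0 < H) : IsProbabilityMeasure (torP y T H) := by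
  have := unifM_prob T H hH
  unfold torP
  apply Measure.isProbabilityMeasure_map
  apply Measurable.aemeasurable
  fun_prop

lemma torP_integral (y T H : ℝ) (f : (PI y → ℝ) → ℂ) (hf : Continuous f) :
    ∫ θ, f θ ∂(torP y T H) = ∫ t, f (fun p => t * Real.log (p.1 : ℝ)) ∂(unifM T H) := by
  unfold torP
  rw [integral_map]
  · apply Measurable.aemeasurable; fun_prop
  · exact hf.aestronglyMeasurable

lemma Vy_torV (y t : ℝ) : torV (ampl y) (fun p => t * Real.log (p.1 : ℝ)) = Vy y t := by
  unfold torV Vy ampl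
  rw [← Finset.sum_coe_sort (primesLe y) (fun p : ℕ => Real.sin (t * Real.log p) / Real.sqrt p)]
  apply Finset.sum_congr rfl
  intro p _
  ring

lemma prime_of_PI {y : ℝ} (p : PI y) : p.1.Prime := (Finset.mem_filter.1 p.2).2

lemma PI_le {y : ℝ} (hy : 0 ≤ y) (p : PI y) : (p.1 : ℝ) ≤ y := by
  have := Finset.mem_range.1 (Finset.mem_filter.1 p.2).1
  exact (Nat.le_floor_iff hy).1 (by omega)

lemma PI_card (y : ℝ) (hy : 0 ≤ y) : (Fintype.card (PI y) : ℝ) ≤ y := by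
  have h1 : (primesLe y) ⊆ Finset.Icc 1 ⌊y⌋₊ := by
    intro p hp
    have h := Finset.mem_filter.1 hp
    have h2 := Finset.mem_range.1 h.1
    rw [Finset.mem_Icc]
    exact ⟨h.2.one_lt.le, by omega⟩
  have h2 := Finset.card_le_card h1
  rw [Nat.card_Icc, Nat.add_sub_cancel] at h2
  rw [Fintype.card_coe]
  calc ((primesLe y).card : ℝ) ≤ ⌊y⌋₊ := by exact_mod_cast h2
    _ ≤ y := Nat.floor_le hy

lemma ampl_le (y : ℝ) (p : PI y) : |ampl y p| ≤ 1 := by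
  unfold ampl
  rw [abs_of_nonneg (by positivity)]
  have : (1 : ℝ) ≤ p.1 := by exact_mod_cast (prime_of_PI p).one_lt.le
  rw [div_le_one (by positivity)]
  exact Real.one_le_sqrt.2 this

lemma ampl_sq_sum (y : ℝ) : ∑ p, ampl y p ^ 2 = sigmay y := by
  unfold ampl sigmay
  rw [← Finset.sum_coe_sort (primesLe y) (fun p : ℕ => (1 : ℝ) / p)]
  apply Finset.sum_congr rfl
  intro p _
  rw [div_pow, Real.sq_sqrt (by positivity), one_pow]

lemma log_sub_ge (a b : ℕ) (ha : 0 < a) (hb : 0 < b) (hab : b < a) :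
    1 / (a : ℝ) ≤ Real.log a - Real.log b := by
  have ha' : (0 : ℝ) < a := by exact_mod_cast ha
  have hb' : (0 : ℝ) < b := by exact_mod_cast hb
  have := Real.one_sub_inv_le_log_of_pos (x := (a : ℝ) / b) (by positivity)
  rw [Real.log_div ha'.ne' hb'.ne', inv_div] at this
  refine le_trans ?_ this
  have h2 : (b : ℝ) + 1 ≤ a := by exact_mod_cast hab
  rw [div_le_iff₀ ha', sub_mul, div_mul_cancel₀ _ ha'.ne']
  linarith

lemma freq_ge (y : ℝ) (hy : 1 ≤ y) (n : PI y → ℤ) (hn : n ≠ 0) :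
    1 / y ^ (l1 n) ≤ |∑ p, (n p : ℝ) * Real.log (p.1 : ℝ)| := by
  classical
  set A : ℕ := ∏ p : PI y, p.1 ^ (n p).toNat with hA
  set B : ℕ := ∏ p : PI y, p.1 ^ (-n p).toNat with hB
  have hpos : ∀ p : PI y, 0 < p.1 := fun p => (prime_of_PI p).pos
  have hA0 : 0 < A := Finset.prod_pos fun p _ => pow_pos (hpos p) _
  have hB0 : 0 < B := Finset.prod_pos fun p _ => pow_pos (hpos p) _
  have hfac : ∀ (e : PI y → ℕ) (q : PI y), (∏ p : PI y, p.1 ^ e p).factorization q.1 = e q := by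
    intro e q
    rw [Nat.factorization_prod (fun p _ => (pow_pos (hpos p) _).ne')]
    rw [Finsupp.finsetSum_apply, Finset.sum_eq_single q]
    · rw [(prime_of_PI q).factorization_pow]; simp
    · intro p _ hpq
      rw [(prime_of_PI p).factorization_pow, Finsupp.single_apply, if_neg]
      intro h; exact hpq (Subtype.ext h)
    · simp
  have hAB : A ≠ B := by
    intro h
    apply hn
    ext q
    have h1 := hfac (fun p => (n p).toNat) q
    have h2 := hfac (fun p => (-n p).toNat) q
    rw [← hA] at h1
    rw [← hB, ← h] at h2
    simp only [Pi.zero_apply]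
    omega
  have hlogA : Real.log A = ∑ p : PI y, ((n p).toNat : ℝ) * Real.log (p.1 : ℝ) := by
    rw [hA]; push_cast
    rw [Real.log_prod (fun p _ => by have := hpos p; positivity)]
    simp [Real.log_pow]
  have hlogB : Real.log B = ∑ p : PI y, ((-n p).toNat : ℝ) * Real.log (p.1 : ℝ) := by
    rw [hB]; push_cast
    rw [Real.log_prod (fun p _ => by have := hpos p; positivity)]
    simp [Real.log_pow]
  have hsum : ∑ p, (n p : ℝ) * Real.log (p.1 : ℝ) = Real.log A - Real.log B := by
    rw [hlogA, hlogB, ← Finset.sum_sub_distrib]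
    apply Finset.sum_congr rfl
    intro p _
    rw [← sub_mul]
    congr 1
    have : n p = ((n p).toNat : ℤ) - ((-n p).toNat : ℤ) := by omega
    exact_mod_cast this
  have hbound : ∀ e : PI y → ℕ, (∀ p, e p ≤ (n p).natAbs) →
      ((∏ p : PI y, p.1 ^ e p : ℕ) : ℝ) ≤ y ^ (l1 n) := by
    intro e he
    push_cast
    unfold l1
    rw [← Finset.prod_pow_eq_pow_sum]
    apply Finset.prod_le_prod
    · intro p _; positivity
    · intro p _
      calc ((p.1 : ℝ)) ^ e p ≤ y ^ e p := by
            gcongr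
            exact PI_le (by linarith) p
        _ ≤ _ := pow_le_pow_right₀ hy (he p)
  have hAle : (A : ℝ) ≤ y ^ (l1 n) := hbound _ (fun p => by omega)
  have hBle : (B : ℝ) ≤ y ^ (l1 n) := hbound _ (fun p => by omega)
  have hA0' : (0 : ℝ) < A := by exact_mod_cast hA0
  have hB0' : (0 : ℝ) < B := by exact_mod_cast hB0
  rw [hsum]
  rcases lt_or_gt_of_ne hAB with h | h
  · rw [abs_sub_comm]
    calc _ ≤ 1 / (B : ℝ) := by gcongr
      _ ≤ _ := (log_sub_ge B A hB0 hA0 h).trans (le_abs_self _)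
  · calc _ ≤ 1 / (A : ℝ) := by gcongr
      _ ≤ _ := (log_sub_ge A B hA0 hB0 h).trans (le_abs_self _)

lemma disc_base (y T H : ℝ) (hy : 1 ≤ y) (hH : 0 < H) (n : PI y → ℤ) :
    ‖∫ θ, torE n θ ∂(torP y T H) - ∫ θ, torE n θ ∂(torQ (PI y))‖ ≤ 2 / H * y ^ (l1 n) := by
  have := torP_prob y T H hH
  by_cases hn : n = 0
  · subst hn
    have e0 : ∀ θ : PI y → ℝ, torE 0 θ = 1 := by intro θ; simp [torE]
    simp only [e0]
    simp
    positivity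
  · rw [torQ_torE n hn, sub_zero, torP_integral y T H _ (torE_cont n), unifM_integral T H hH]
    have hf := freq_ge y hy n hn
    set κ := ∑ p, (n p : ℝ) * Real.log (p.1 : ℝ) with hκ
    have hy0 : 0 < y ^ (l1 n) := by positivity
    have hκ0 : 0 < |κ| := lt_of_lt_of_le (by positivity) hf
    have e : ∀ t : ℝ, torE n (fun p => t * Real.log (p.1 : ℝ)) = Complex.exp (I * κ * t) := by
      intro t
      unfold torE
      congr 1
      rw [mul_assoc, ← Complex.ofReal_mul, hκ, Finset.sum_mul]
      congr 2
      apply Finset.sum_congr rfl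
      intro p _
      ring
    simp_rw [e]
    have hc : (I * κ : ℂ) ≠ 0 := mul_ne_zero I_ne_zero (by exact_mod_cast abs_pos.1 hκ0)
    rw [integral_exp_mul_complex hc, norm_smul,
      Real.norm_of_nonneg (by positivity : 0 ≤ 1 / H), norm_div, norm_mul, Complex.norm_I, one_mul,
      Complex.norm_real, Real.norm_eq_abs]
    have h2 : ‖Complex.exp (I * κ * ((T + H : ℝ) : ℂ)) - Complex.exp (I * κ * T)‖ ≤ 2 := by
      refine (norm_sub_le _ _).trans ?_
      rw [mul_assoc, ← Complex.ofReal_mul, mul_assoc, ← Complex.ofReal_mul,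
        Complex.norm_exp_I_mul_ofReal, Complex.norm_exp_I_mul_ofReal]
      norm_num
    calc _ ≤ 1 / H * (2 / |κ|) := by gcongr
      _ ≤ 1 / H * (2 / (1 / y ^ (l1 n))) := by gcongr
      _ = _ := by field_simp

/-- the model characteristic function -/
noncomputable def fmod (y t : ℝ) : ℂ := ∏ p ∈ primesLe y, J0twoISqrt (-((t ^ 2 / 4 : ℝ) : ℂ) / (p : ℂ))

noncomputable def fH (y T H t : ℝ) : ℂ :=
  ∫ u, Complex.exp (I * ((t * Vy y u : ℝ) : ℂ)) ∂(unifM T H)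

lemma fmod_eq (y t : ℝ) : fmod y t =
    ∫ θ, Complex.exp (I * ((t * torV (ampl y) θ : ℝ) : ℂ)) ∂(torQ (PI y)) := by
  have h := torQ_exp (ampl y) (I * t)
  have e : ∀ θ, I * t * (torV (ampl y) θ : ℂ) = I * ((t * torV (ampl y) θ : ℝ) : ℂ) := by
    intro θ; push_cast; ring
  simp_rw [e] at h
  rw [h]
  unfold fmod
  rw [← Finset.prod_coe_sort (primesLe y) (fun p : ℕ => J0twoISqrt (-((t ^ 2 / 4 : ℝ) : ℂ) / (p : ℂ)))]
  apply Finset.prod_congr rfl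
  intro p _
  congr 1
  unfold ampl
  have hp : (0 : ℝ) < p.1 := by exact_mod_cast (prime_of_PI p).pos
  have h2 : (((Real.sqrt (p.1 : ℝ)) : ℝ) : ℂ) ^ 2 = (p.1 : ℂ) := by
    rw [← Complex.ofReal_pow, Real.sq_sqrt hp.le]; simp
  push_cast
  rw [div_pow, mul_pow, mul_pow, div_pow, h2, Complex.I_sq]
  ring

/-- Comparison of characteristic functions. -/
lemma char_compare (y T H L lam : ℝ) (k : ℕ) (hy : 1 ≤ y) (hH : 0 < H) (hk : Even k) (hk1 : 1 ≤ k)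
    (hL : 0 < L) (hl : 0 ≤ lam) (hl1 : lam ≤ 1) :
    ‖fH y T H (L * lam) - fmod y (L * lam)‖ ≤
      lam * (2 / H * y ^ (2 * k) * Real.exp L + 4 * Real.exp (2 * L ^ 2 * sigmay y - k)) := by
  have := torP_prob y T H hH
  have h := tor_char_diff (torP y T H) (torQ (PI y)) (ampl y) (ampl_le y) y (2 / H) hy
    (by positivity) (PI_card y (by linarith)) (disc_base y T H hy hH) L lam k hk hk1 hL.le hl hl1
  rw [fmod_eq]
  have e : fH y T H (L * lam) =
      ∫ θ, Complex.exp (I * (((L * lam) * torV (ampl y) θ : ℝ) : ℂ)) ∂(torP y T H) := by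
    rw [torP_integral]
    · simp_rw [Vy_torV]
      rfl
    · have := torV_cont (ampl y)
      fun_prop
  rw [e]
  refine h.trans ?_
  have hm := torQ_moment (ampl y) (ampl_le y) (Real.exp 1 * L) (by positivity) k hk
  rw [ampl_sq_sum] at hm
  have hs : 0 ≤ sigmay y := by unfold sigmay; positivity
  have he : Real.exp 1 ^ 2 ≤ 8 := by nlinarith [Real.exp_one_lt_d9, Real.exp_pos 1]
  have h3 : L ^ k / k.factorial * ∫ θ, torV (ampl y) θ ^ k ∂(torQ (PI y)) ≤
      2 * Real.exp (2 * L ^ 2 * sigmay y - k) := by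
    have e1 : L ^ k / k.factorial * ∫ θ, torV (ampl y) θ ^ k ∂(torQ (PI y)) =
       Real.exp (-k) * ((Real.exp 1 * L) ^ k / k.factorial * ∫ θ, torV (ampl y) θ ^ k ∂(torQ (PI y))) := by
      rw [mul_pow, ← Real.exp_nat_mul, mul_one]
      have : Real.exp (-k) * Real.exp k = 1 := by rw [← Real.exp_add]; simp
      linear_combination (-(L ^ k / k.factorial * ∫ θ, torV (ampl y) θ ^ k ∂(torQ (PI y)))) * this
    rw [e1]
    calc _ ≤ Real.exp (-k) * (2 * Real.exp ((Real.exp 1 * L) ^ 2 / 4 * sigmay y)) := by gcongr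
      _ = 2 * Real.exp ((Real.exp 1 * L) ^ 2 / 4 * sigmay y - k) := by
        rw [sub_eq_add_neg, Real.exp_add]; ring
      _ ≤ _ := by
        gcongr
        rw [mul_pow]
        nlinarith [sq_nonneg L]
  apply mul_le_mul_of_nonneg_left _ hl
  linarith

noncomputable def gmod (y : ℝ) (ν : ℕ) (t : ℝ) : ℝ :=
  Real.exp (-(sigmay y * (t ^ 2 / 4))) * ∑ n ∈ Finset.range (ν + 1), PhiCoefR y n * (-(t ^ 2 / 4)) ^ n

lemma PhiCoefR_bound : ∃ C : ℝ, 0 < C ∧ ∀ y : ℝ, ∀ n : ℕ, 1 ≤ n →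
    |PhiCoefR y n| ≤ C * (ell n ^ n / n.factorial) := by
  obtain ⟨C, hC, h⟩ := PhiCoef_bound
  exact ⟨C, hC, fun y n hn => (Complex.abs_re_le_norm _).trans (h y n hn)⟩

lemma PhiCoefR_zero (y : ℝ) : PhiCoefR y 0 = 1 := by
  unfold PhiCoefR; rw [PhiCoef_zero]; simp

lemma Phifun_neg (y t : ℝ) : Phifun y (-((t ^ 2 / 4 : ℝ) : ℂ)) =
    (Real.exp (sigmay y * (t ^ 2 / 4)) : ℂ) * fmod y t := by
  unfold Phifun fmod phifun sigmay
  rw [Finset.prod_mul_distrib, ← Complex.exp_sum]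
  congr 1
  push_cast
  congr 1
  rw [Finset.sum_mul]
  apply Finset.sum_congr rfl
  intro p _
  ring

lemma fmod_real (y t : ℝ) : ∃ r : ℝ, fmod y t = (r : ℂ) := by
  unfold fmod
  refine ⟨∏ p ∈ primesLe y, (∑' n : ℕ, (-(t ^ 2 / 4) / p) ^ n / ((n.factorial : ℝ)) ^ 2), ?_⟩
  rw [Complex.ofReal_prod]
  apply Finset.prod_congr rfl
  intro p _
  rw [← J0_ofReal]
  push_cast
  rfl

lemma fmod_hasSum (y t : ℝ) : ∃ s : ℝ, HasSum (fun n => PhiCoefR y n * (-(t ^ 2 / 4)) ^ n) s ∧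
    fmod y t = ((Real.exp (-(sigmay y * (t ^ 2 / 4))) * s : ℝ) : ℂ) := by
  obtain ⟨r, hr⟩ := fmod_real y t
  refine ⟨Real.exp (sigmay y * (t ^ 2 / 4)) * r, ?_, ?_⟩
  · have h := Complex.hasSum_re (Phifun_hasSum y (-((t ^ 2 / 4 : ℝ) : ℂ)))
    rw [Phifun_neg, hr, ← Complex.ofReal_mul, Complex.ofReal_re] at h
    refine Eq.mp ?_ h
    congr 1
    ext n
    rw [← Complex.ofReal_neg, ← Complex.ofReal_pow, Complex.re_mul_ofReal]
    rfl
  · rw [hr, ← mul_assoc, ← Real.exp_add]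
    simp

lemma gauss_mom (b : ℝ) (hb : 0 < b) (n : ℕ) :
    ∫ l in (0 : ℝ)..1, Real.exp (-(b * l ^ 2)) * l ^ (2 * n + 1) ≤ n.factorial / (2 * b ^ (n + 1)) := by
  have h := _root_.integral_rpow_mul_exp_neg_mul_rpow (p := 2) (q := 2 * n + 1) (b := b) (by norm_num)
    (by have : (0:ℝ) ≤ n := by positivity
        linarith) hb
  have hnn : ((2 * (n:ℝ) + 1 + 1) / 2) = n + 1 := by ring
  rw [hnn, neg_div, hnn, Real.Gamma_nat_eq_factorial] at h
  have e : ∫ x in Set.Ioi (0 : ℝ), x ^ (2 * (n : ℝ) + 1) * Real.exp (-b * x ^ (2 : ℝ)) =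
      ∫ x in Set.Ioi (0 : ℝ), Real.exp (-(b * x ^ 2)) * x ^ (2 * n + 1) := by
    apply setIntegral_congr_fun measurableSet_Ioi
    intro x hx
    have e1 : x ^ (2 * (n : ℝ) + 1) = x ^ (2 * n + 1) := by
      rw [← Real.rpow_natCast]; push_cast; rfl
    have e2 : x ^ (2 : ℝ) = x ^ 2 := by
      rw [← Real.rpow_natCast]; norm_num
    simp only [e1, e2]
    rw [mul_comm, neg_mul]
  rw [e] at h
  have hb2 : b ^ (-((n : ℝ) + 1)) * (1 / 2) * (n.factorial : ℝ) = n.factorial / (2 * b ^ (n + 1)) := by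
    rw [Real.rpow_neg hb.le]
    have : b ^ ((n : ℝ) + 1) = b ^ (n + 1) := by
      rw [← Real.rpow_natCast]; push_cast; rfl
    rw [this]; field_simp
  rw [hb2] at h
  have hInteg : IntegrableOn (fun x => Real.exp (-(b * x ^ 2)) * x ^ (2 * n + 1)) (Set.Ioi 0) := by
    by_contra hcon
    rw [integral_undef hcon] at h
    have : (0 : ℝ) < n.factorial / (2 * b ^ (n + 1)) := by positivity
    linarith
  rw [← h, intervalIntegral.integral_of_le zero_le_one]
  apply setIntegral_mono_set hInteg
  · refine (ae_restrict_iff' measurableSet_Ioi).2 (Eventually.of_forall fun x hx => ?_)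
    have : (0:ℝ) < x := hx
    positivity
  · exact Eventually.of_forall (fun x hx => hx.1)

lemma ell_mono {m n : ℕ} (hm : 1 ≤ m) (hmn : m ≤ n) : ell m ≤ ell n := by
  unfold ell
  have h1 : (1 : ℝ) ≤ m := by exact_mod_cast hm
  have h2 : (m : ℝ) ≤ n := by exact_mod_cast hmn
  have : 0 < Real.log ((m : ℝ) + 1) := Real.log_pos (by linarith)
  gcongr

lemma ell_ratio : ∃ K : ℝ, 0 < K ∧ ∀ n : ℕ, 1 ≤ n → ell (n + 1) ^ n ≤ K * ell n ^ n := by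
  refine ⟨Real.exp (1 / (Real.log 2 * ell 1)), Real.exp_pos _, ?_⟩
  intro n hn
  have hn1 : (1 : ℝ) ≤ n := by exact_mod_cast hn
  have hl := ell_pos n hn
  have hl1 := ell_pos 1 le_rfl
  have hmono := ell_mono le_rfl hn
  have hlog2 : 0 < Real.log 2 := Real.log_pos (by norm_num)
  have hlogn : Real.log 2 ≤ Real.log ((n : ℝ) + 1) := Real.log_le_log (by norm_num) (by linarith)
  have hd : ell (n + 1) - ell n ≤ 1 / ((n + 1) * Real.log (n + 1)) := by
    unfold ell
    push_cast
    set u := Real.log ((n : ℝ) + 1) with hu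
    set v := Real.log ((n : ℝ) + 1 + 1) with hv
    have hu0 : 0 < u := by linarith
    have huv : u ≤ v := Real.log_le_log (by linarith) (by linarith)
    have h1 : Real.log v - Real.log u ≤ (v - u) / u := by
      rw [← Real.log_div (by linarith) hu0.ne']
      have := Real.log_le_sub_one_of_pos (x := v / u) (by apply div_pos <;> linarith)
      rwa [div_sub_one hu0.ne'] at this
    have h2 : v - u ≤ 1 / (n + 1) := by
      rw [hu, hv, ← Real.log_div (by linarith) (by linarith)]
      have := Real.log_le_sub_one_of_pos (x := ((n : ℝ) + 1 + 1) / (n + 1)) (by positivity)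
      refine this.trans (le_of_eq ?_)
      field_simp
      ring
    calc _ = Real.log v - Real.log u := by ring
      _ ≤ (v - u) / u := h1
      _ ≤ (1 / (n + 1)) / u := by gcongr
      _ = _ := by rw [div_div]
  have h3 : ell (n + 1) ≤ ell n * Real.exp ((ell (n + 1) - ell n) / ell n) := by
    have := Real.add_one_le_exp ((ell (n + 1) - ell n) / ell n)
    calc ell (n + 1) = ell n * ((ell (n + 1) - ell n) / ell n + 1) := by field_simp; ring
      _ ≤ _ := by gcongr
  have hl2 := ell_pos (n + 1) (by omega)
  calc ell (n + 1) ^ n ≤ (ell n * Real.exp ((ell (n + 1) - ell n) / ell n)) ^ n := by gcongr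
    _ = Real.exp (n * ((ell (n + 1) - ell n) / ell n)) * ell n ^ n := by
        rw [mul_pow, ← Real.exp_nat_mul]; ring
    _ ≤ _ := by
        gcongr
        calc (n : ℝ) * ((ell (n + 1) - ell n) / ell n)
            ≤ n * ((1 / ((n + 1) * Real.log (n + 1))) / ell n) := by gcongr
          _ = (n / (n + 1)) * (1 / (Real.log (n + 1) * ell n)) := by
              have : 0 < Real.log ((n : ℝ) + 1) := by linarith
              field_simp
          _ ≤ 1 * (1 / (Real.log 2 * ell 1)) := by
              have : 0 < Real.log ((n : ℝ) + 1) := by linarith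
              have h9 : (n : ℝ) / (n + 1) ≤ 1 := by
                rw [div_le_one (by positivity)]
                linarith
              gcongr
          _ = _ := one_mul _

noncomputable def qq (s : ℝ) (n : ℕ) : ℝ := 1 / (n : ℝ) * (ell n / s) ^ n

lemma qq_nonneg (s : ℝ) (hs : 0 < s) (n : ℕ) (hn : 1 ≤ n) : 0 ≤ qq s n := by
  unfold qq
  have := ell_pos n hn
  positivity

lemma qq_sum : ∃ K : ℝ, 0 < K ∧ ∀ (s : ℝ) (N a : ℕ), 0 < s → 1 ≤ a → K * ell (N + 1) ≤ s →
    ∑ n ∈ Finset.Ico a (N + 1), qq s n ≤ 2 * qq s a := by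
  obtain ⟨K, hK, hr⟩ := ell_ratio
  refine ⟨2 * K, by positivity, ?_⟩
  intro s N a hs ha hN
  have hstep : ∀ n, 1 ≤ n → n ≤ N → qq s (n + 1) ≤ qq s n * (1 / 2) := by
    intro n hn hnN
    unfold qq
    have h1 := hr n hn
    have h2 := ell_pos n hn
    have h3 := ell_pos (n + 1) (by omega)
    have h4 : ell (n + 1) ≤ ell (N + 1) := ell_mono (by omega) (by omega)
    have hn0 : (0 : ℝ) < n := by exact_mod_cast hn
    have h5 : K * (ell (n + 1) / s) ≤ 1 / 2 := by
      rw [mul_div_assoc', div_le_iff₀ hs]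
      nlinarith
    calc 1 / ((n + 1 : ℕ) : ℝ) * (ell (n + 1) / s) ^ (n + 1)
        = 1 / ((n + 1 : ℕ) : ℝ) * (ell (n + 1) ^ n / s ^ n * (ell (n + 1) / s)) := by
          rw [pow_succ, div_pow]
      _ ≤ 1 / (n : ℝ) * (K * ell n ^ n / s ^ n * (ell (n + 1) / s)) := by
          gcongr
          linarith
      _ = 1 / (n : ℝ) * (ell n / s) ^ n * (K * (ell (n + 1) / s)) := by
          rw [div_pow]; ring
      _ ≤ _ := by gcongr
  have hgeo : ∀ j, a + j ≤ N → qq s (a + j) ≤ qq s a * (1 / 2) ^ j := by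
    intro j
    induction j with
    | zero => intro _; simp
    | succ j ih =>
      intro hj
      have := hstep (a + j) (by omega) (by omega)
      calc qq s (a + (j + 1)) ≤ qq s (a + j) * (1 / 2) := this
        _ ≤ qq s a * (1 / 2) ^ j * (1 / 2) := by gcongr; exact ih (by omega)
        _ = _ := by ring
  rw [Finset.sum_Ico_eq_sum_range]
  calc _ ≤ ∑ j ∈ Finset.range (N + 1 - a), qq s a * (1 / 2) ^ j := by
        apply Finset.sum_le_sum
        intro j hj
        have := Finset.mem_range.1 hj
        exact hgeo j (by omega)
    _ = (∑ j ∈ Finset.range (N + 1 - a), (1 / 2 : ℝ) ^ j) * qq s a := by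
        rw [← Finset.mul_sum, mul_comm]
    _ ≤ _ := by
        have := sum_geometric_two_le (N + 1 - a)
        have := qq_nonneg s hs a ha
        gcongr

lemma ell_le_log (n : ℕ) (hn : 1 ≤ n) : ell n ≤ Real.log ((n : ℝ) + 1) := by
  have h1 : (1 : ℝ) ≤ n := by exact_mod_cast hn
  have : 0 < Real.log ((n : ℝ) + 1) := Real.log_pos (by linarith)
  have := Real.log_le_sub_one_of_pos this
  unfold ell
  linarith

lemma ell_sqrt : ∃ N0 : ℕ, 1 ≤ N0 ∧ ∀ n : ℕ, N0 ≤ n → 2 * Real.exp 1 * ell n ≤ Real.sqrt n := by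
  have h := (isLittleO_log_rpow_atTop (r := 1 / 2) (by norm_num)).bound (c := 1 / 12) (by norm_num)
  have h2 := tendsto_natCast_atTop_atTop (R := ℝ) |>.eventually h
  obtain ⟨N0, hN0⟩ := eventually_atTop.1 h2
  refine ⟨max N0 2, le_trans (by norm_num) (le_max_right _ _), ?_⟩
  intro n hn
  have hn2 : 2 ≤ n := (le_max_right _ _).trans hn
  have hn2' : (2 : ℝ) ≤ n := by exact_mod_cast hn2
  have h3 := hN0 n ((le_max_left _ _).trans hn)
  have hlog : 0 ≤ Real.log n := Real.log_nonneg (by linarith)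
  rw [← Real.sqrt_eq_rpow, Real.norm_of_nonneg hlog, Real.norm_of_nonneg (Real.sqrt_nonneg _)] at h3
  have h4 : Real.log ((n : ℝ) + 1) ≤ 2 * Real.log n := by
    have : 2 * Real.log n = Real.log ((n : ℝ) ^ 2) := by rw [Real.log_pow]; norm_num
    rw [this]
    apply Real.log_le_log (by linarith)
    nlinarith
  have h5 := ell_le_log n (by omega)
  have he := Real.exp_one_lt_d9
  have he0 := Real.exp_pos 1
  calc 2 * Real.exp 1 * ell n ≤ 2 * Real.exp 1 * (2 * Real.log n) := by gcongr; linarith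
    _ ≤ 2 * 3 * (2 * Real.log n) := by gcongr; linarith
    _ ≤ _ := by linarith

lemma ell_small (K : ℝ) (hK : 0 < K) : ∃ y1 : ℝ, 3 ≤ y1 ∧ ∀ y : ℝ, y1 ≤ y →
    K * ell (⌈Real.log y ^ 4⌉₊ + 1) ≤ sigmay y := by
  have h1 : ∀ᶠ u : ℝ in atTop, K * (Real.log (5 * u) + 1) ≤ u - 1 := by
    have hh := Real.isLittleO_log_id_atTop.bound (c := 1 / (2 * K)) (by positivity)
    filter_upwards [hh, eventually_ge_atTop 1, eventually_ge_atTop (2 * (K * (Real.log 5 + 1) + 1))] with u hu hu1 hu2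
    have hlog : 0 ≤ Real.log u := Real.log_nonneg hu1
    rw [Real.norm_of_nonneg hlog, id, Real.norm_of_nonneg (by linarith)] at hu
    rw [Real.log_mul (by norm_num) (by linarith)]
    have h2 : K * Real.log u ≤ u / 2 := by
      calc K * Real.log u ≤ K * (1 / (2 * K) * u) := by gcongr
        _ = u / 2 := by field_simp
    nlinarith
  have h2 : Tendsto (fun y : ℝ => Real.log (Real.log y)) atTop atTop :=
    Real.tendsto_log_atTop.comp Real.tendsto_log_atTop
  obtain ⟨y1, hy1⟩ := eventually_atTop.1 ((h2.eventually h1).and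
    ((Real.tendsto_log_atTop.eventually_ge_atTop 3)))
  refine ⟨max y1 3, le_max_right _ _, ?_⟩
  intro y hy
  obtain ⟨h3, h4⟩ := hy1 y ((le_max_left _ _).trans hy)
  have hy3 : 3 ≤ y := (le_max_right _ _).trans hy
  refine le_trans ?_ (h3.trans (sigmay_ge y hy3))
  gcongr
  unfold ell
  gcongr ?_ + 1
  set l := Real.log y
  have hc : (⌈l ^ 4⌉₊ : ℝ) < l ^ 4 + 1 := Nat.ceil_lt_add_one (by positivity)
  push_cast
  apply Real.log_le_log
  · apply Real.log_pos
    have : (0:ℝ) ≤ ⌈l ^ 4⌉₊ := by positivity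
    linarith
  · calc Real.log ((⌈l ^ 4⌉₊ : ℝ) + 1 + 1) ≤ Real.log (l ^ 5) := by
          apply Real.log_le_log (by positivity)
          have : 1 ≤ l ^ 4 := one_le_pow₀ (by linarith)
          have : 3 * l ^ 4 ≤ l ^ 5 := by
            rw [pow_succ l 4]; nlinarith
          have : (3:ℝ) ^ 4 ≤ l ^ 4 := by gcongr
          linarith
      _ = 5 * Real.log l := by rw [Real.log_pow]; norm_num

lemma FG_main : ∃ C y1 : ℝ, 0 < C ∧ 3 ≤ y1 ∧ ∀ y : ℝ, y1 ≤ y → ∀ (ν : ℕ) (L : ℝ), 0 < L →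
    L ^ 2 ≤ 4 * Real.log y ^ 2 → ∃ w : ℝ → ℝ, Continuous w ∧
      (∀ l : ℝ, 0 ≤ l → l ≤ 1 → ‖fmod y (L * l) - (gmod y ν (L * l) : ℂ)‖ ≤ l * w l) ∧
      ∫ l in (0 : ℝ)..1, w l ≤ C * (qq (sigmay y) (ν + 1) + 1 / Real.log y) := by
  obtain ⟨C, hC, hΦ⟩ := PhiCoefR_bound
  obtain ⟨K, hK, hq⟩ := qq_sum
  obtain ⟨N0, hN01, hN0⟩ := ell_sqrt
  obtain ⟨y1, hy13, hy1⟩ := ell_small K hK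
  refine ⟨2 * C, max y1 (Real.exp (N0 + 1)), by positivity, hy13.trans (le_max_left _ _), ?_⟩
  intro y hy ν L hL hL2
  have hyy1 := hy1 y ((le_max_left _ _).trans hy)
  have hly : N0 + 1 ≤ Real.log y := by
    rw [Real.le_log_iff_exp_le (by linarith [le_max_left y1 (Real.exp (N0 + 1))])]
    exact (le_max_right _ _).trans hy
  set l0 := Real.log y with hl0
  set N := ⌈l0 ^ 4⌉₊ with hN
  set s := sigmay y with hs
  have hN0' : (1 : ℝ) ≤ N0 := by exact_mod_cast hN01
  have hl01 : 1 ≤ l0 := by linarith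
  have hNl : l0 ^ 4 ≤ N := Nat.le_ceil _
  have hl4 : l0 ≤ l0 ^ 4 := by
    calc l0 = l0 ^ 1 := (pow_one _).symm
      _ ≤ l0 ^ 4 := pow_le_pow_right₀ hl01 (by norm_num)
  have hNN0 : N0 ≤ N := by
    have : (N0 : ℝ) ≤ N := by linarith
    exact_mod_cast this
  have hs0 : 0 < s := lt_of_lt_of_le (mul_pos hK (ell_pos _ (by omega))) hyy1
  set X := L ^ 2 / 4 with hX
  have hX0 : 0 < X := by positivity
  have hXl : X ≤ l0 ^ 2 := by rw [hX]; linarith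
  set w : ℝ → ℝ := fun l => ∑ n ∈ Finset.Ico (ν + 1) (N + 1), |PhiCoefR y n| * X ^ n *
      (Real.exp (-(s * X * l ^ 2)) * l ^ (2 * (n - 1) + 1)) + C * (1 / 2) ^ N with hw
  refine ⟨w, by rw [hw]; fun_prop, ?_, ?_⟩
  · intro l hl hl1
    obtain ⟨S, hS, hf⟩ := fmod_hasSum y (L * l)
    rw [hf]
    unfold gmod
    rw [← Complex.ofReal_sub, Complex.norm_real, ← mul_sub, norm_mul,
      Real.norm_of_nonneg (Real.exp_pos _).le]
    have hR : (L * l) ^ 2 / 4 = X * l ^ 2 := by rw [hX]; ring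
    rw [hR] at hS ⊢
    rw [← hs]
    set M := max ν N + 1 with hM
    have hsplit := hS.summable.sum_add_tsum_nat_add M
    rw [hS.tsum_eq] at hsplit
    have hIco : ∑ n ∈ Finset.range M, PhiCoefR y n * (-(X * l ^ 2)) ^ n -
        ∑ n ∈ Finset.range (ν + 1), PhiCoefR y n * (-(X * l ^ 2)) ^ n =
        ∑ n ∈ Finset.Ico (ν + 1) M, PhiCoefR y n * (-(X * l ^ 2)) ^ n := by
      rw [Finset.sum_Ico_eq_sub _ (by omega)]
    have hIcoEq : Finset.Ico (ν + 1) M = Finset.Ico (ν + 1) (N + 1) := by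
      ext n; simp only [Finset.mem_Ico, hM]; omega
    have habs : ∀ n, |PhiCoefR y n * (-(X * l ^ 2)) ^ n| = |PhiCoefR y n| * X ^ n * l ^ (2 * n) := by
      intro n
      rw [abs_mul, abs_pow, abs_neg, abs_of_nonneg (by positivity : 0 ≤ X * l ^ 2), mul_pow, ← pow_mul]
      ring
    have htail : ∀ n, N ≤ n → 1 ≤ n → |PhiCoefR y n * (-(X * l ^ 2)) ^ n| ≤ l * C * (1 / 2) ^ n := by
      intro n hn hn1
      rw [habs]
      have hn0 : (0 : ℝ) < n := by exact_mod_cast hn1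
      have h1 := hΦ y n hn1
      have hln := ell_pos n hn1
      have h2 : l ^ (2 * n) ≤ l := by
        calc l ^ (2 * n) ≤ l ^ 1 := pow_le_pow_of_le_one hl hl1 (by omega)
          _ = l := pow_one _
      have h3 : ell n ^ n / n.factorial ≤ (Real.exp 1 * ell n / n) ^ n := by
        have := Real.pow_div_factorial_le_exp (n : ℝ) hn0.le n
        rw [div_le_iff₀ (by positivity)] at this
        rw [div_pow, mul_pow, ← Real.exp_nat_mul, mul_one, div_le_div_iff₀ (by positivity) (by positivity)]
        nlinarith [pow_pos hln n]
      have hXs : X ≤ Real.sqrt n := by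
        apply Real.le_sqrt_of_sq_le
        have : (N : ℝ) ≤ n := by exact_mod_cast hn
        calc X ^ 2 ≤ (l0 ^ 2) ^ 2 := by gcongr
          _ = l0 ^ 4 := by ring
          _ ≤ n := by linarith
      have h4 : X * (Real.exp 1 * ell n / n) ≤ 1 / 2 := by
        have h5 := hN0 n (hNN0.trans hn)
        have h6 : Real.sqrt n * Real.sqrt n = n := Real.mul_self_sqrt hn0.le
        rw [mul_div_assoc', div_le_iff₀ hn0]
        calc X * (Real.exp 1 * ell n) ≤ Real.sqrt n * (Real.sqrt n / 2) := by
              gcongr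
              linarith
          _ = _ := by linarith
      calc |PhiCoefR y n| * X ^ n * l ^ (2 * n) ≤
            (C * (Real.exp 1 * ell n / n) ^ n) * X ^ n * l := by
            gcongr
            exact h1.trans (by gcongr)
        _ = l * C * (X * (Real.exp 1 * ell n / n)) ^ n := by rw [mul_pow]; ring
        _ ≤ _ := by gcongr
    have htsum : ‖∑' n, PhiCoefR y (n + M) * (-(X * l ^ 2)) ^ (n + M)‖ ≤ l * C * (1 / 2) ^ N := by
      have hg : HasSum (fun n : ℕ => l * C * (1 / 2) ^ M * (1 / 2 : ℝ) ^ n) (l * C * (1 / 2) ^ M * 2) :=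
        hasSum_geometric_two.mul_left _
      have h1 := tsum_of_norm_bounded hg (f := fun n => PhiCoefR y (n + M) * (-(X * l ^ 2)) ^ (n + M)) (by
        intro n
        refine (htail (n + M) (by omega) (by omega)).trans (le_of_eq ?_)
        rw [pow_add]; ring)
      refine h1.trans ?_
      have h2 : (1 / 2 : ℝ) ^ M ≤ (1 / 2) ^ (N + 1) :=
        pow_le_pow_of_le_one (by norm_num) (by norm_num) (by omega)
      calc l * C * (1 / 2) ^ M * 2 ≤ l * C * (1 / 2) ^ (N + 1) * 2 := by gcongr
        _ = _ := by rw [pow_succ]; ring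
    have hE : Real.exp (-(s * (X * l ^ 2))) ≤ 1 := by
      rw [Real.exp_le_one_iff]
      have : 0 ≤ s * (X * l ^ 2) := by positivity
      linarith
    rw [← hsplit, add_sub_right_comm, hIco, hIcoEq]
    have hfin : ‖∑ n ∈ Finset.Ico (ν + 1) (N + 1), PhiCoefR y n * (-(X * l ^ 2)) ^ n‖ ≤
        ∑ n ∈ Finset.Ico (ν + 1) (N + 1), |PhiCoefR y n| * X ^ n * l ^ (2 * n) := by
      refine (norm_sum_le _ _).trans (le_of_eq ?_)
      apply Finset.sum_congr rfl
      intro n _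
      exact habs n
    calc _ ≤ Real.exp (-(s * (X * l ^ 2))) * (∑ n ∈ Finset.Ico (ν + 1) (N + 1), |PhiCoefR y n| * X ^ n * l ^ (2 * n)
          + l * C * (1 / 2) ^ N) := by
          gcongr
          exact (norm_add_le _ _).trans (add_le_add hfin htsum)
      _ ≤ Real.exp (-(s * (X * l ^ 2))) * (∑ n ∈ Finset.Ico (ν + 1) (N + 1), |PhiCoefR y n| * X ^ n * l ^ (2 * n))
          + l * C * (1 / 2) ^ N := by
          rw [mul_add]
          have : 0 ≤ l * C * (1 / 2) ^ N := by positivity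
          nlinarith
      _ = _ := by
          rw [hw]
          simp only
          rw [mul_add, Finset.mul_sum, Finset.mul_sum]
          congr 1
          · apply Finset.sum_congr rfl
            intro n hn
            have : 1 ≤ n := by have := (Finset.mem_Ico.1 hn).1; omega
            have e : l ^ (2 * n) = l * l ^ (2 * (n - 1) + 1) := by
              rw [← pow_succ']; congr 1; omega
            rw [e, mul_assoc s X]
            ring
          · ring
  · rw [hw]
    simp only
    rw [intervalIntegral.integral_add, intervalIntegral.integral_finsetSum]
    · have hterm : ∀ n ∈ Finset.Ico (ν + 1) (N + 1), ∫ l in (0 : ℝ)..1, |PhiCoefR y n| * X ^ n *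
          (Real.exp (-(s * X * l ^ 2)) * l ^ (2 * (n - 1) + 1)) ≤ C / 2 * qq s n := by
        intro n hn
        have hn1 : 1 ≤ n := by have := (Finset.mem_Ico.1 hn).1; omega
        rw [intervalIntegral.integral_const_mul]
        have h1 := gauss_mom (s * X) (by positivity) (n - 1)
        have h2 := hΦ y n hn1
        have hln := ell_pos n hn1
        obtain ⟨m, rfl⟩ : ∃ m, n = m + 1 := ⟨n - 1, by omega⟩
        simp only [Nat.add_sub_cancel] at h1 ⊢
        clear_value X
        have h0 : 0 ≤ ∫ l in (0 : ℝ)..1, Real.exp (-(s * X * l ^ 2)) * l ^ (2 * m + 1) := by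
          apply intervalIntegral.integral_nonneg zero_le_one
          intro u hu
          have := hu.1
          positivity
        calc _ ≤ C * (ell (m + 1) ^ (m + 1) / (m + 1).factorial) * X ^ (m + 1) *
              (m.factorial / (2 * (s * X) ^ (m + 1))) := by gcongr
          _ = _ := by
            unfold qq
            rw [Nat.factorial_succ, div_pow, mul_pow]
            have hX1 := pow_pos hX0 (m + 1)
            have hs1 := pow_pos hs0 (m + 1)
            have hf := Nat.factorial_pos m
            have hf1 : (0 : ℝ) < m.factorial := by exact_mod_cast hf
            generalize X ^ (m + 1) = A at *
            generalize s ^ (m + 1) = B at *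
            generalize ell (m + 1) ^ (m + 1) = D at *
            push_cast
            field_simp
      have h2 := hq s N (ν + 1) hs0 (by omega) hyy1
      have h3 : (1 / 2 : ℝ) ^ N ≤ 1 / l0 := by
        rw [div_pow, one_pow]
        apply one_div_le_one_div_of_le (by linarith)
        have : (N : ℝ) < 2 ^ N := by exact_mod_cast Nat.lt_two_pow_self
        linarith
      have h4 := qq_nonneg s hs0 (ν + 1) (by omega)
      have h5 : ∑ n ∈ Finset.Ico (ν + 1) (N + 1), ∫ l in (0 : ℝ)..1, |PhiCoefR y n| * X ^ n *
          (Real.exp (-(s * X * l ^ 2)) * l ^ (2 * (n - 1) + 1)) ≤ C * qq s (ν + 1) := by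
        refine (Finset.sum_le_sum hterm).trans ?_
        rw [← Finset.mul_sum]
        nlinarith
      have h6 : 0 < 1 / l0 := by positivity
      rw [intervalIntegral.integral_const]
      simp only [sub_zero, one_smul]
      nlinarith
    · intro n _
      apply Continuous.intervalIntegrable
      fun_prop
    · apply Continuous.intervalIntegrable
      fun_prop
    · simp

noncomputable def Kf (x : ℝ) : ℝ := ∫ l in (0 : ℝ)..1, (1 - l) * Real.cos (l * x)

lemma Kf_even (x : ℝ) : Kf (-x) = Kf x := by
  unfold Kf
  simp

lemma Kf_cont : Continuous Kf := by
  unfold Kf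
  apply intervalIntegral.continuous_parametric_intervalIntegral_of_continuous'
  fun_prop

lemma Kf_closed (x : ℝ) (hx : x ≠ 0) : Kf x = (1 - Real.cos x) / x ^ 2 := by
  unfold Kf
  have hd : ∀ l ∈ Set.uIcc (0 : ℝ) 1, HasDerivAt
      (fun l : ℝ => (1 - l) * Real.sin (l * x) / x - Real.cos (l * x) / x ^ 2)
      ((1 - l) * Real.cos (l * x)) l := by
    intro l _
    have h1 : HasDerivAt (fun l : ℝ => l * x) x l := by
      simpa using (hasDerivAt_id l).mul_const x
    have h2 : HasDerivAt (fun l : ℝ => 1 - l) (-1) l := by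
      simpa using (hasDerivAt_id l).const_sub 1
    have h3 := ((h2.mul h1.sin).div_const x).sub (h1.cos.div_const (x ^ 2))
    refine h3.congr_deriv ?_
    field_simp
    ring
  rw [intervalIntegral.integral_eq_sub_of_hasDerivAt hd]
  · simp
    ring
  · apply Continuous.intervalIntegrable
    fun_prop

lemma Kf_zero : Kf 0 = 1 / 2 := by
  unfold Kf
  simp only [mul_zero, Real.cos_zero, mul_one]
  rw [intervalIntegral.integral_sub (by simp) (by simp)]
  simp
  norm_num

lemma Kf_nonneg (x : ℝ) : 0 ≤ Kf x := by
  by_cases hx : x = 0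
  · rw [hx, Kf_zero]; norm_num
  · rw [Kf_closed x hx]
    have := Real.cos_le_one x
    apply div_nonneg <;> [linarith; positivity]

lemma Kf_le (x : ℝ) : Kf x ≤ 4 * (1 + x ^ 2)⁻¹ := by
  have h1 : Kf x ≤ 1 := by
    by_cases hx : x = 0
    · rw [hx, Kf_zero]; norm_num
    · rw [Kf_closed x hx, div_le_one (by positivity)]
      have := Real.one_sub_sq_div_two_le_cos (x := x)
      nlinarith [sq_nonneg x]
  rw [← div_eq_mul_inv, le_div_iff₀ (by positivity)]
  by_cases hx : x = 0
  · rw [hx, Kf_zero]; norm_num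
  · have : Kf x * x ^ 2 = 1 - Real.cos x := by
      rw [Kf_closed x hx]; field_simp
    have := Real.neg_one_le_cos x
    nlinarith

lemma Kf_int : Integrable Kf := by
  refine (integrable_inv_one_add_sq.const_mul 4).mono' Kf_cont.aestronglyMeasurable ?_
  refine Eventually.of_forall fun x => ?_
  rw [Real.norm_of_nonneg (Kf_nonneg x)]
  exact Kf_le x

lemma Kf_pos : 0 < ∫ x, Kf x := by
  rw [integral_pos_iff_support_of_nonneg Kf_nonneg Kf_int]
  apply Kf_cont.isOpen_support.measure_pos volume
  exact ⟨0, by rw [Function.mem_support, Kf_zero]; norm_num⟩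

lemma Kf_tail : ∃ h : ℝ, 0 < h ∧ ∫ x, (Set.Icc (-h) h)ᶜ.indicator Kf x ≤ (∫ x, Kf x) / 8 := by
  have h1 := intervalIntegral_tendsto_integral Kf_int tendsto_neg_atTop_atBot tendsto_id
  have hp := Kf_pos
  have h2 := h1.eventually (lt_mem_nhds (show (∫ x, Kf x) * (7 / 8) < ∫ x, Kf x by linarith))
  obtain ⟨h, h3, h4⟩ := (h2.and (eventually_gt_atTop 0)).exists
  refine ⟨h, h4, ?_⟩
  simp only [id] at h3
  rw [intervalIntegral.integral_of_le (by linarith), ← integral_Icc_eq_integral_Ioc] at h3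
  rw [integral_indicator measurableSet_Icc.compl]
  have := integral_add_compl (measurableSet_Icc (a := -h) (b := h)) Kf_int
  linarith

lemma smooth_upper (h : ℝ) (hh : 0 < h) (D : ℝ → ℝ) (hD : Measurable D) (m ε η : ℝ) (hm : 0 ≤ m) 
    (hη : ∀ x, |D x| ≤ η) (hmon : ∀ a s, 0 ≤ s → D (a + s) ≤ D a + m * s)
    (hε : ∀ a, |∫ s, D (a + s) * Kf s| ≤ ε)
    (ht : ∫ x, (Set.Icc (-h) h)ᶜ.indicator Kf x ≤ (∫ x, Kf x) / 8) (a0 : ℝ) :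
    D a0 ≤ ε / (∫ x, Kf x) + 2 * h * m + η / 4 := by
  have hp := Kf_pos
  have h1 := hε (a0 - h)
  have hη0 : 0 ≤ η := (abs_nonneg _).trans (hη 0)
  have hInteg : Integrable (fun s => D (a0 - h + s) * Kf s) := by
    refine Kf_int.bdd_mul (c := η) ?_ ?_
    · exact (hD.comp (measurable_const_add _)).aestronglyMeasurable
    · exact Eventually.of_forall fun s => hη _
  have hInteg2 : Integrable ((Set.Icc (-h) h)ᶜ.indicator Kf) :=
    Kf_int.indicator measurableSet_Icc.compl
  have h2 : ∫ s, ((D a0 - 2 * h * m) * Kf s - 2 * η * (Set.Icc (-h) h)ᶜ.indicator Kf s) ≤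
      ∫ s, D (a0 - h + s) * Kf s := by
    apply integral_mono ((Kf_int.const_mul _).sub (hInteg2.const_mul _)) hInteg
    intro s
    change (D a0 - 2 * h * m) * Kf s - 2 * η * (Set.Icc (-h) h)ᶜ.indicator Kf s ≤ _
    have hk := Kf_nonneg s
    by_cases hs : s ∈ Set.Icc (-h) h
    · rw [Set.indicator_of_notMem (s := (Set.Icc (-h) h)ᶜ) (fun hc => hc hs)]
      have h3 := hmon (a0 - h + s) (h - s) (by linarith [hs.2])
      have e : a0 - h + s + (h - s) = a0 := by ring
      rw [e] at h3
      have h4 : m * (h - s) ≤ 2 * h * m := by nlinarith [hs.1]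
      rw [mul_zero, sub_zero]
      apply mul_le_mul_of_nonneg_right _ hk
      linarith
    · rw [Set.indicator_of_mem (Set.mem_compl hs)]
      have h3 := abs_le.1 (hη (a0 - h + s))
      have h4 := abs_le.1 (hη a0)
      have h5 : 0 ≤ 2 * h * m := by positivity
      rw [← sub_mul]
      apply mul_le_mul_of_nonneg_right _ hk
      linarith
  rw [integral_sub (Kf_int.const_mul _) (hInteg2.const_mul _), integral_const_mul, integral_const_mul] at h2
  have h3 := (abs_le.1 h1).2
  have h4 : (D a0 - 2 * h * m - η / 4) * (∫ x, Kf x) ≤ ε := by nlinarith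
  rw [← le_div_iff₀ hp] at h4
  linarith

lemma smooth_main : ∃ C : ℝ, 0 < C ∧ ∀ (D : ℝ → ℝ) (m ε η : ℝ), Measurable D → 0 ≤ m → 
    (∀ x, |D x| ≤ η) → (∀ a s, 0 ≤ s → D (a + s) ≤ D a + m * s) →
    (∀ a, |∫ s, D (a + s) * Kf s| ≤ ε) → ∀ x, |D x| ≤ C * (ε + m) := by
  obtain ⟨h, hh, ht⟩ := Kf_tail
  have hp := Kf_pos
  set κ := ∫ x, Kf x with hκ
  refine ⟨2 * (1 / κ + 2 * h), by positivity, ?_⟩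
  intro D m ε η hD hm hη hmon hε x
  have hbd : BddAbove (Set.range fun x => |D x|) := ⟨η, by rintro _ ⟨x, rfl⟩; exact hη x⟩
  set M := ⨆ x, |D x| with hM
  have hM1 : ∀ x, |D x| ≤ M := fun x => le_ciSup hbd x
  have hM2 : M ≤ ε / κ + 2 * h * m + M / 4 := by
    apply ciSup_le
    intro x
    rw [abs_le]
    constructor
    · have := smooth_upper h hh (fun x => -D (-x)) (hD.comp measurable_neg).neg m ε M hm
        (by intro x; simp only [abs_neg]; exact hM1 _)
        (by
          intro a s hs
          have := hmon (-(a + s)) s hs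
          have e : -(a + s) + s = -a := by ring
          rw [e] at this
          linarith)
        (by
          intro a
          have := hε (-a)
          have e : ∫ s, -D (-(a + s)) * Kf s = - ∫ s, D (-a + s) * Kf s := by
            rw [← integral_neg, ← integral_neg_eq_self]
            apply integral_congr_ae
            refine Eventually.of_forall fun s => ?_
            simp only [Kf_even]
            rw [show -(a + -s) = -a + s by ring]
            ring
          rw [e, abs_neg]
          exact this) ht (-x)
      simp only [neg_neg] at this
      linarith
    · exact smooth_upper h hh D hD m ε M hm hM1 hmon hε ht x
  have hε0 : 0 ≤ ε := (abs_nonneg _).trans (hε 0)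
  have h3 : ε / κ + 2 * h * m ≤ (1 / κ + 2 * h) * (ε + m) := by
    have : (1 / κ + 2 * h) * (ε + m) = ε / κ + 2 * h * m + (m / κ + 2 * h * ε) := by ring
    rw [this]
    have : 0 ≤ m / κ + 2 * h * ε := by positivity
    linarith
  have h4 : 0 ≤ (1 / κ + 2 * h) * (ε + m) := by positivity
  have := hM1 x
  linarith

lemma meas_sign : Measurable Real.sign := by
  unfold Real.sign
  apply Measurable.ite measurableSet_Iio measurable_const
  exact Measurable.ite measurableSet_Ioi measurable_const measurable_const

lemma abs_sign_le (x : ℝ) : |Real.sign x| ≤ 1 := by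
  rcases Real.sign_apply_eq x with h | h | h <;> rw [h] <;> simp

lemma sin_div_le (l x : ℝ) : |Real.sin (l * x) / l| ≤ |x| := by
  by_cases hl : l = 0
  · simp [hl]
  · rw [abs_div, div_le_iff₀ (abs_pos.2 hl), ← abs_mul, mul_comm x]
    exact Real.abs_sin_le_abs

lemma Kf_prim (x : ℝ) : ∫ s in (0 : ℝ)..x, Kf s = ∫ l in (0 : ℝ)..1, (1 - l) * (Real.sin (l * x) / l) := by
  unfold Kf
  rw [intervalIntegral_intervalIntegral_swap]
  · apply intervalIntegral.integral_congr_ae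
    have : ∀ᵐ l : ℝ, l ≠ 0 := by
      simp [ae_iff, measure_singleton]
    filter_upwards [this] with l hl _
    rw [intervalIntegral.integral_const_mul]
    congr 1
    rw [intervalIntegral.integral_comp_mul_left (fun u => Real.cos u) hl]
    simp
    ring
  · have hc : Continuous (Function.uncurry fun s l : ℝ => (1 - l) * Real.cos (l * s)) := by
      unfold Function.uncurry
      fun_prop
    refine (hc.continuousOn.integrableOn_compact (isCompact_uIcc.prod isCompact_uIcc)).mono_set
      (Set.prod_mono Set.uIoc_subset_uIcc Set.uIoc_subset_uIcc)

lemma Kf_sgn (x : ℝ) : ∫ s, Real.sign (x - s) * Kf s =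
    2 * ∫ l in (0 : ℝ)..1, (1 - l) * (Real.sin (l * x) / l) := by
  rw [← Kf_prim]
  have h1 : ∫ s, Real.sign (x - s) * Kf s = ∫ s, (2 * (Set.Iic x).indicator Kf s - Kf s) := by
    apply integral_congr_ae
    have : ∀ᵐ s : ℝ, s ≠ x := by
      simp [ae_iff, measure_singleton]
    filter_upwards [this] with s hs
    rcases lt_or_gt_of_ne hs with h | h
    · rw [Real.sign_of_pos (by linarith), Set.indicator_of_mem (s := Set.Iic x) h.le]
      ring
    · rw [Real.sign_of_neg (by linarith), Set.indicator_of_notMem (s := Set.Iic x) (by simpa using h)]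
      ring
  have hi : Integrable ((Set.Iic x).indicator Kf) := Kf_int.indicator measurableSet_Iic
  rw [h1, integral_sub (hi.const_mul _) Kf_int, integral_const_mul, integral_indicator measurableSet_Iic]
  have h2 := intervalIntegral.integral_Iic_sub_Iic (a := 0) (b := x) (f := Kf) (μ := volume) Kf_int.integrableOn Kf_int.integrableOn
  have h3 := intervalIntegral.integral_Iic_add_Ioi (b := 0) (f := Kf) (μ := volume) Kf_int.integrableOn Kf_int.integrableOn
  have h4 := integral_comp_neg_Iic 0 Kf
  simp only [Kf_even, neg_zero] at h4
  linarith

lemma smooth_prod {Ω : Type*} [MeasurableSpace Ω] (μ : Measure Ω) [SFinite μ] (X w : Ω → ℝ)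
    (hX : Measurable X) (hw : Measurable w) (hwi : Integrable w μ)
    (hXw : Integrable (fun ω => X ω * w ω) μ) (a : ℝ) :
    Integrable (Function.uncurry fun (l : ℝ) (ω : Ω) => (1 - l) * (Real.sin (l * (X ω - a)) / l) * w ω)
      ((volume.restrict (Set.uIoc (0:ℝ) 1)).prod μ) := by
  have hb : Integrable (fun z : ℝ × Ω => (1 : ℝ) * ((X z.2 - a) * w z.2))
      ((volume.restrict (Set.uIoc (0:ℝ) 1)).prod μ) := by
    apply Integrable.mul_prod (f := fun _ : ℝ => (1:ℝ)) (g := fun ω => (X ω - a) * w ω)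
    · rw [Set.uIoc_of_le zero_le_one]
      exact integrable_const _
    · simp_rw [sub_mul]
      exact hXw.sub (hwi.const_mul a)
  refine hb.mono ?_ ?_
  · unfold Function.uncurry
    apply Measurable.aestronglyMeasurable
    fun_prop
  · have : ∀ᵐ z ∂((volume.restrict (Set.uIoc (0:ℝ) 1)).prod μ), z.1 ∈ Set.uIoc (0:ℝ) 1 := by
      have h0 : ∀ᵐ l ∂(volume.restrict (Set.uIoc (0:ℝ) 1)), l ∈ Set.uIoc (0:ℝ) 1 :=
        ae_restrict_mem measurableSet_uIoc
      exact Measure.quasiMeasurePreserving_fst.ae h0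
    filter_upwards [this] with z hz
    rw [Set.uIoc_of_le zero_le_one] at hz
    unfold Function.uncurry
    simp only [norm_mul, one_mul]
    have h1 : ‖1 - z.1‖ ≤ 1 := by
      rw [Real.norm_eq_abs, abs_le]; constructor <;> linarith [hz.1, hz.2]
    have h2 := sin_div_le z.1 (X z.2 - a)
    rw [← Real.norm_eq_abs, ← Real.norm_eq_abs] at h2
    calc _ ≤ 1 * ‖X z.2 - a‖ * ‖w z.2‖ := by gcongr
      _ = _ := by ring

lemma smooth_tr_int {Ω : Type*} [MeasurableSpace Ω] (μ : Measure Ω) [SFinite μ] (X w : Ω → ℝ)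
    (hX : Measurable X) (hw : Measurable w) (hwi : Integrable w μ)
    (hXw : Integrable (fun ω => X ω * w ω) μ) (a : ℝ) :
    IntervalIntegrable (fun l : ℝ => (1 - l) / l * ∫ ω, Real.sin (l * (X ω - a)) * w ω ∂μ) volume 0 1 := by
  rw [intervalIntegrable_iff]
  refine (smooth_prod μ X w hX hw hwi hXw a).integral_prod_left.congr (Eventually.of_forall fun l => ?_)
  simp only [Function.uncurry]
  rw [← integral_const_mul]
  congr 1; ext ω; ring

lemma smooth_tr {Ω : Type*} [MeasurableSpace Ω] (μ : Measure Ω) [SFinite μ] (X w : Ω → ℝ)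
    (hX : Measurable X) (hw : Measurable w) (hwi : Integrable w μ)
    (hXw : Integrable (fun ω => X ω * w ω) μ) (a : ℝ) :
    ∫ s, (∫ ω, Real.sign (X ω - (a + s)) * w ω ∂μ) * Kf s =
      2 * ∫ l in (0 : ℝ)..1, (1 - l) / l * ∫ ω, Real.sin (l * (X ω - a)) * w ω ∂μ := by
  have e1 : ∫ s, (∫ ω, Real.sign (X ω - (a + s)) * w ω ∂μ) * Kf s =
      ∫ s, ∫ ω, Real.sign (X ω - (a + s)) * (Kf s * w ω) ∂μ := by
    congr 1; ext s
    rw [← integral_mul_const]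
    congr 1; ext ω; ring
  rw [e1, integral_integral_swap]
  · have e2 : ∀ ω, ∫ s, Real.sign (X ω - (a + s)) * (Kf s * w ω) =
        2 * ∫ l in (0 : ℝ)..1, (1 - l) * (Real.sin (l * (X ω - a)) / l) * w ω := by
      intro ω
      rw [intervalIntegral.integral_mul_const, ← mul_assoc, ← Kf_sgn, ← integral_mul_const]
      congr 1; ext s
      rw [show X ω - (a + s) = X ω - a - s by ring]
      ring
    simp_rw [e2]
    rw [integral_const_mul, ← intervalIntegral_integral_swap]
    · congr 1
      apply intervalIntegral.integral_congr
      intro l _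
      simp only
      rw [← integral_const_mul]
      congr 1; ext ω; ring
    · exact smooth_prod μ X w hX hw hwi hXw a
  · have hb : Integrable (fun z : ℝ × Ω => Kf z.1 * w z.2) (volume.prod μ) := Kf_int.mul_prod hwi
    refine hb.bdd_mul (c := 1) ?_ ?_
    · apply Measurable.aestronglyMeasurable
      apply meas_sign.comp
      fun_prop
    · exact Eventually.of_forall fun z => abs_sign_le _

noncomputable def qh (n : ℕ) (u : ℝ) : ℝ := Real.exp (-u ^ 2 / 2) * hermiteEval n u

lemma qh_deriv (n : ℕ) (u : ℝ) : HasDerivAt (qh n) (-(qh (n + 1) u)) u := by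
  unfold qh hermiteEval
  have h1 : HasDerivAt (fun u : ℝ => -u ^ 2 / 2) (-u) u := by
    have := ((hasDerivAt_pow 2 u).neg).div_const 2
    refine this.congr_deriv ?_
    simp
    ring
  have h2 := (Polynomial.hermite n).hasDerivAt_aeval u
  refine (h1.exp.mul h2).congr_deriv ?_
  rw [Polynomial.hermite_succ]
  simp
  ring

lemma qh_cont (n : ℕ) : Continuous (qh n) :=
  continuous_iff_continuousAt.2 fun u => (qh_deriv n u).continuousAt

lemma gmono_int (n : ℕ) : Integrable (fun u : ℝ => u ^ n * Real.exp (-u ^ 2 / 2)) := by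
  have h := integrable_rpow_mul_exp_neg_mul_sq (b := 1 / 2) (by norm_num) (s := n) (by
    have : (0 : ℝ) ≤ n := by positivity
    linarith)
  refine h.congr (Eventually.of_forall fun u => ?_)
  simp only [Real.rpow_natCast]
  congr 2
  ring

lemma poly_gauss_int (P : Polynomial ℝ) : Integrable (fun u : ℝ => Real.exp (-u ^ 2 / 2) * P.eval u) := by
  induction P using Polynomial.induction_on' with
  | add p q hp hq =>
    simp only [Polynomial.eval_add, mul_add]
    exact hp.add hq
  | monomial n a =>
    simp only [Polynomial.eval_monomial]
    refine ((gmono_int n).const_mul a).congr (Eventually.of_forall fun u => ?_)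
    simp only
    ring

lemma hermiteEval_eq (n : ℕ) (u : ℝ) : hermiteEval n u =
    ((Polynomial.hermite n).map (Int.castRingHom ℝ)).eval u := by
  unfold hermiteEval
  rw [Polynomial.eval_map, Polynomial.aeval_def]
  rfl

lemma qh_int (n : ℕ) : Integrable (qh n) := by
  unfold qh
  simp_rw [hermiteEval_eq]
  exact poly_gauss_int _

lemma qh_mul_int (n : ℕ) : Integrable (fun u => u * qh n u) := by
  unfold qh
  simp_rw [hermiteEval_eq]
  refine (poly_gauss_int (Polynomial.X * ((Polynomial.hermite n).map (Int.castRingHom ℝ)))).congr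
    (Eventually.of_forall fun u => ?_)
  simp
  ring

lemma qh_zero (u : ℝ) : qh 0 u = Real.exp (-u ^ 2 / 2) := by
  unfold qh hermiteEval
  simp

lemma norm_cexp_I (x : ℝ) : ‖cexp (I * (x : ℂ))‖ = 1 := by
  rw [mul_comm]; exact Complex.norm_exp_ofReal_mul_I x

lemma gauss_four (k : ℝ) : ∫ u : ℝ, ((Real.exp (-u ^ 2 / 2) : ℝ) : ℂ) * cexp (I * ((k * u : ℝ) : ℂ)) =
    ((Real.sqrt (2 * π) * Real.exp (-k ^ 2 / 2) : ℝ) : ℂ) := by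
  have h := fourierIntegral_gaussian (b := 1 / 2) (by norm_num) (k : ℂ)
  have e : ∀ u : ℝ, ((Real.exp (-u ^ 2 / 2) : ℝ) : ℂ) * cexp (I * ((k * u : ℝ) : ℂ)) =
      cexp (I * k * u) * cexp (-(1 / 2) * u ^ 2) := by
    intro u
    push_cast
    rw [mul_comm]
    congr 2 <;> ring
  simp_rw [e]
  rw [h]
  push_cast
  congr 1
  · have : (π : ℂ) / (1 / 2) = ((2 * π : ℝ) : ℂ) := by push_cast; ring
    rw [this, Real.sqrt_eq_rpow, Complex.ofReal_cpow (by positivity)]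
    norm_num
  · congr 1; ring

lemma cexp_deriv (k u : ℝ) : HasDerivAt (fun u : ℝ => cexp (I * ((k * u : ℝ) : ℂ)))
    (I * k * cexp (I * ((k * u : ℝ) : ℂ))) u := by
  have h1 : HasDerivAt (fun u : ℝ => I * ((k * u : ℝ) : ℂ)) (I * k) u := by
    have := (((hasDerivAt_id u).const_mul k).ofReal_comp).const_mul I
    simpa using this
  refine h1.cexp.congr_deriv ?_
  ring

lemma qh_four (n : ℕ) (k : ℝ) : ∫ u : ℝ, ((qh n u : ℝ) : ℂ) * cexp (I * ((k * u : ℝ) : ℂ)) =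
    (I * k) ^ n * ((Real.sqrt (2 * π) * Real.exp (-k ^ 2 / 2) : ℝ) : ℂ) := by
  induction n with
  | zero => simp_rw [qh_zero]; rw [gauss_four]; simp
  | succ n ih =>
    have hi : ∀ m, Integrable (fun u : ℝ => ((qh m u : ℝ) : ℂ) * cexp (I * ((k * u : ℝ) : ℂ))) := by
      intro m
      have := (qh_int m).ofReal (𝕜 := ℂ)
      refine this.mul_bdd (c := 1) ?_ ?_
      · apply Continuous.aestronglyMeasurable; fun_prop
      · exact Eventually.of_forall fun u => (norm_cexp_I _).le
    have hd : ∀ u : ℝ, HasDerivAt (fun u : ℝ => ((qh n u : ℝ) : ℂ) * cexp (I * ((k * u : ℝ) : ℂ)))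
        ((I * k) * (((qh n u : ℝ) : ℂ) * cexp (I * ((k * u : ℝ) : ℂ))) -
          ((qh (n + 1) u : ℝ) : ℂ) * cexp (I * ((k * u : ℝ) : ℂ))) u := by
      intro u
      refine ((qh_deriv n u).ofReal_comp.mul (cexp_deriv k u)).congr_deriv ?_
      push_cast
      ring
    have h0 := integral_eq_zero_of_hasDerivAt_of_integrable hd
      (((hi n).const_mul _).sub (hi (n + 1))) (hi n)
    rw [integral_sub ((hi n).const_mul _) (hi (n + 1)), integral_const_mul, ih] at h0
    rw [pow_succ', mul_assoc]
    exact (sub_eq_zero.1 h0).symm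

noncomputable def Aq (n : ℕ) : ℝ := ∫ k : ℝ, |k| ^ n * Real.exp (-k ^ 2 / 2)

lemma absmono_int (n : ℕ) : Integrable (fun u : ℝ => |u| ^ n * Real.exp (-u ^ 2 / 2)) := by
  refine (gmono_int n).norm.congr (Eventually.of_forall fun u => ?_)
  simp [abs_of_pos (Real.exp_pos _)]

noncomputable def Rq (n : ℕ) (u : ℝ) : ℂ :=
  ∫ k : ℝ, (I * k) ^ n * (((Real.exp (-k ^ 2 / 2) : ℝ) : ℂ) * cexp (I * ((-k * u : ℝ) : ℂ)))

lemma Rq_norm (n : ℕ) (k u : ℝ) : ‖(I * k) ^ n * (((Real.exp (-k ^ 2 / 2) : ℝ) : ℂ) * cexp (I * ((-k * u : ℝ) : ℂ)))‖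
    = |k| ^ n * Real.exp (-k ^ 2 / 2) := by
  rw [norm_mul, norm_mul, norm_cexp_I, norm_pow, norm_mul, Complex.norm_I, Complex.norm_real, Complex.norm_real,
    Real.norm_of_nonneg (Real.exp_pos _).le, Real.norm_eq_abs]
  simp

lemma Rq_deriv (n : ℕ) (u : ℝ) : HasDerivAt (Rq n) (-(Rq (n + 1) u)) u := by
  unfold Rq
  have hI : ∀ m v, Integrable (fun k : ℝ => (I * k) ^ m * (((Real.exp (-k ^ 2 / 2) : ℝ) : ℂ) * cexp (I * ((-k * v : ℝ) : ℂ)))) := by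
    intro m v
    refine (absmono_int m).mono' ?_ (Eventually.of_forall fun k => (Rq_norm m k v).le)
    apply Continuous.aestronglyMeasurable; fun_prop
  have h := hasDerivAt_integral_of_dominated_loc_of_deriv_le (μ := volume) (x₀ := u) (s := Set.univ)
    (F := fun (v : ℝ) (k : ℝ) => (I * k) ^ n * (((Real.exp (-k ^ 2 / 2) : ℝ) : ℂ) * cexp (I * ((-k * v : ℝ) : ℂ))))
    (F' := fun (v : ℝ) (k : ℝ) => -((I * k) ^ (n + 1) * (((Real.exp (-k ^ 2 / 2) : ℝ) : ℂ) * cexp (I * ((-k * v : ℝ) : ℂ)))))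
    (bound := fun k => |k| ^ (n + 1) * Real.exp (-k ^ 2 / 2)) univ_mem
    (Eventually.of_forall fun v => (hI n v).aestronglyMeasurable) (hI n u)
    (hI (n + 1) u).neg.aestronglyMeasurable
    (Eventually.of_forall fun k v _ => by rw [norm_neg, Rq_norm])
    (absmono_int (n + 1))
    (Eventually.of_forall fun k v _ => by
      refine (((cexp_deriv (-k) v).const_mul _).const_mul _).congr_deriv ?_
      push_cast
      ring)
  refine h.2.congr_deriv ?_
  rw [integral_neg]

lemma qh_eq_Rq (n : ℕ) (u : ℝ) : Rq n u = (Real.sqrt (2 * π) : ℂ) * (qh n u : ℂ) := by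
  induction n generalizing u with
  | zero =>
    unfold Rq
    have h := gauss_four (-u)
    have e : ∀ k : ℝ, (I * k) ^ 0 * (((Real.exp (-k ^ 2 / 2) : ℝ) : ℂ) * cexp (I * ((-k * u : ℝ) : ℂ))) =
        (((Real.exp (-k ^ 2 / 2) : ℝ) : ℂ) * cexp (I * ((-u * k : ℝ) : ℂ))) := by
      intro k
      rw [pow_zero, one_mul]
      congr 4
      ring
    simp_rw [e]
    rw [h, qh_zero]
    push_cast
    simp
  | succ n ih =>
    have h1 := Rq_deriv n u
    have h2 := ((qh_deriv n u).ofReal_comp).const_mul (Real.sqrt (2 * π) : ℂ)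
    have e : Rq n = fun u => (Real.sqrt (2 * π) : ℂ) * (qh n u : ℂ) := funext ih
    rw [e] at h1
    have := h1.unique h2
    push_cast at this
    rw [mul_neg, neg_inj] at this
    exact this

lemma qh_le (n : ℕ) (u : ℝ) : Real.sqrt (2 * π) * |qh n u| ≤ Aq n := by
  have h : ‖Rq n u‖ ≤ Aq n := by
    unfold Rq Aq
    refine (norm_integral_le_integral_norm _).trans (le_of_eq ?_)
    congr 1; ext k
    exact Rq_norm n k u
  rw [qh_eq_Rq, norm_mul, Complex.norm_real, Complex.norm_real, Real.norm_of_nonneg (Real.sqrt_nonneg _)] at h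
  exact h

lemma Aq_odd (n : ℕ) : Aq (2 * n + 1) = 2 ^ (n + 1) * n.factorial := by
  unfold Aq
  have e0 : ∀ k : ℝ, |k| ^ (2 * n + 1) * Real.exp (-k ^ 2 / 2) = (fun x : ℝ => x ^ (2 * n + 1) * Real.exp (-x ^ 2 / 2)) |k| := by
    intro k; simp
  simp_rw [e0]
  rw [integral_comp_abs (f := fun x : ℝ => x ^ (2 * n + 1) * Real.exp (-x ^ 2 / 2))]
  have h := _root_.integral_rpow_mul_exp_neg_mul_rpow (p := 2) (q := 2 * n + 1) (b := 1 / 2) (by norm_num)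
    (by have : (0:ℝ) ≤ n := by positivity
        linarith) (by norm_num)
  have hnn : ((2 * (n:ℝ) + 1 + 1) / 2) = n + 1 := by ring
  rw [hnn, neg_div, hnn, Real.Gamma_nat_eq_factorial] at h
  have e : ∫ x in Set.Ioi (0 : ℝ), x ^ (2 * (n : ℝ) + 1) * Real.exp (-(1 / 2) * x ^ (2 : ℝ)) =
      ∫ x in Set.Ioi (0 : ℝ), x ^ (2 * n + 1) * Real.exp (-x ^ 2 / 2) := by
    apply setIntegral_congr_fun measurableSet_Ioi
    intro x hx
    have e1 : x ^ (2 * (n : ℝ) + 1) = x ^ (2 * n + 1) := by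
      rw [← Real.rpow_natCast]; push_cast; rfl
    have e2 : x ^ (2 : ℝ) = x ^ 2 := by
      rw [← Real.rpow_natCast]; norm_num
    simp only [e1, e2]
    congr 2
    ring
  rw [e] at h
  rw [h, Real.rpow_neg (by norm_num)]
  have : (1 / 2 : ℝ) ^ ((n : ℝ) + 1) = (1 / 2) ^ (n + 1) := by
    rw [← Real.rpow_natCast]; push_cast; rfl
  rw [this, one_div, inv_pow, inv_inv]
  ring

lemma Aq_even (n : ℕ) : Aq (2 * n) ≤ 5 * (2 ^ n * n.factorial) := by
  have h1 : Aq (2 * n) ≤ Aq 0 + Aq (2 * n + 1) := by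
    unfold Aq
    rw [← integral_add (absmono_int _) (absmono_int _)]
    apply integral_mono (absmono_int _) ((absmono_int _).add (absmono_int _))
    intro k
    change |k| ^ (2 * n) * Real.exp (-k ^ 2 / 2) ≤ |k| ^ 0 * Real.exp (-k ^ 2 / 2) + |k| ^ (2 * n + 1) * Real.exp (-k ^ 2 / 2)
    rw [← add_mul]
    gcongr
    rw [pow_zero]
    rcases le_total |k| 1 with h | h
    · have := pow_le_one₀ (n := 2 * n) (abs_nonneg k) h
      have : 0 ≤ |k| ^ (2 * n + 1) := by positivity
      linarith
    · have := pow_le_pow_right₀ h (show 2 * n ≤ 2 * n + 1 by omega)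
      linarith
  have h0 : Aq 0 ≤ 3 := by
    unfold Aq
    have h := integral_gaussian (1 / 2)
    have e : ∀ k : ℝ, |k| ^ 0 * Real.exp (-k ^ 2 / 2) = Real.exp (-(1 / 2) * k ^ 2) := by
      intro k; rw [pow_zero, one_mul]; congr 1; ring
    simp_rw [e]
    rw [h]
    rw [Real.sqrt_le_left (by norm_num)]
    have := Real.pi_lt_d2
    linarith
  rw [Aq_odd] at h1
  have h2 : (1 : ℝ) ≤ 2 ^ n * n.factorial := by
    have a1 : (1 : ℝ) ≤ 2 ^ n := one_le_pow₀ (by norm_num)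
    have a2 : (1 : ℝ) ≤ n.factorial := by exact_mod_cast Nat.factorial_pos n
    nlinarith
  rw [pow_succ] at h1
  linarith

lemma sgn_int (q : ℝ → ℝ) (hq : Integrable q) (r α : ℝ) (hr : 0 < r) :
    ∫ u, Real.sign (r * u - α) * q u = (∫ u, q u) - 2 * ∫ u in Set.Iic (α / r), q u := by
  have hi : Integrable ((Set.Iic (α / r)).indicator q) := hq.indicator measurableSet_Iic
  rw [← integral_indicator measurableSet_Iic, ← integral_const_mul, ← integral_sub hq (hi.const_mul _)]
  apply integral_congr_ae
  have : ∀ᵐ s : ℝ, s ≠ α / r := by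
    simp [ae_iff, measure_singleton]
  filter_upwards [this] with s hs
  rcases lt_or_gt_of_ne hs with h | h
  · rw [Set.indicator_of_mem (s := Set.Iic (α / r)) h.le]
    rw [lt_div_iff₀ hr] at h
    rw [Real.sign_of_neg (by linarith)]
    ring
  · rw [Set.indicator_of_notMem (s := Set.Iic (α / r)) (by simpa using h)]
    rw [div_lt_iff₀ hr] at h
    rw [Real.sign_of_pos (by linarith)]
    ring

lemma sgn_int_lip (q : ℝ → ℝ) (hq : Integrable q) (M : ℝ) (hM : ∀ u, |q u| ≤ M) (r α β : ℝ) (hr : 0 < r) :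
    |(∫ u, Real.sign (r * u - β) * q u) - ∫ u, Real.sign (r * u - α) * q u| ≤ 2 * M / r * |β - α| := by
  rw [sgn_int q hq r α hr, sgn_int q hq r β hr]
  have h2 := intervalIntegral.integral_Iic_sub_Iic (a := α / r) (b := β / r) (f := q) (μ := volume)
    hq.integrableOn hq.integrableOn
  have h3 : ‖∫ u in (α / r)..(β / r), q u‖ ≤ M * |β / r - α / r| :=
    intervalIntegral.norm_integral_le_of_norm_le_const fun u _ => hM u
  rw [← sub_div, abs_div, abs_of_pos hr, Real.norm_eq_abs] at h3
  have e : (∫ u, q u) - 2 * (∫ u in Set.Iic (β / r), q u) - ((∫ u, q u) - 2 * ∫ u in Set.Iic (α / r), q u) =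
    -2 * ∫ u in (α / r)..(β / r), q u := by rw [← h2]; ring
  rw [e, abs_mul, abs_neg, abs_of_pos (by norm_num : (0:ℝ) < 2)]
  calc _ ≤ 2 * (M * (|β - α| / r)) := by gcongr
    _ = _ := by ring

lemma sgn_qh (n : ℕ) (r α : ℝ) (hr : 0 < r) :
    ∫ u, Real.sign (r * u - α) * qh (n + 1) u = 2 * qh n (α / r) := by
  rw [sgn_int _ (qh_int _) r α hr]
  have h0 := integral_eq_zero_of_hasDerivAt_of_integrable (qh_deriv n) (qh_int (n + 1)).neg (qh_int n)
  have h1 := integral_Iic_of_hasDerivAt_of_tendsto' (a := α / r) (fun x _ => qh_deriv n x)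
    (qh_int (n + 1)).neg.integrableOn
    (tendsto_zero_of_hasDerivAt_of_integrableOn_Iic (a := 0) (fun x _ => qh_deriv n x)
      (qh_int (n + 1)).neg.integrableOn (qh_int n).integrableOn)
  rw [integral_neg] at h0 h1
  linarith

noncomputable def cW (y : ℝ) (n : ℕ) : ℝ := PhiCoefR y n / (2 * sigmay y) ^ n

noncomputable def Wg (y : ℝ) (ν : ℕ) (u : ℝ) : ℝ :=
  1 / Real.sqrt (2 * π) * ∑ n ∈ Finset.range (ν + 1), cW y n * qh (2 * n) u

lemma Wg_cont (y : ℝ) (ν : ℕ) : Continuous (Wg y ν) := by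
  unfold Wg
  have := qh_cont
  fun_prop

lemma Wg_int (y : ℝ) (ν : ℕ) : Integrable (Wg y ν) := by
  unfold Wg
  apply Integrable.const_mul
  exact integrable_finsetSum _ fun n _ => (qh_int _).const_mul _

lemma Wg_mul_int (y : ℝ) (ν : ℕ) : Integrable (fun u => u * Wg y ν u) := by
  have : (fun u => u * Wg y ν u) = fun u => 1 / Real.sqrt (2 * π) * ∑ n ∈ Finset.range (ν + 1), cW y n * (u * qh (2 * n) u) := by
    ext u
    unfold Wg
    rw [mul_left_comm, Finset.mul_sum]
    congr 1
    apply Finset.sum_congr rfl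
    intro n _
    ring
  rw [this]
  apply Integrable.const_mul
  exact integrable_finsetSum _ fun n _ => (qh_mul_int _).const_mul _

lemma Wg_four (y : ℝ) (ν : ℕ) (hs : 0 < sigmay y) (t : ℝ) :
    ∫ u : ℝ, ((Wg y ν u : ℝ) : ℂ) * cexp (I * ((t * Real.sqrt (sigmay y / 2) * u : ℝ) : ℂ)) = (gmod y ν t : ℂ) := by
  set k := t * Real.sqrt (sigmay y / 2) with hk
  have hi : ∀ m, Integrable (fun u : ℝ => ((qh m u : ℝ) : ℂ) * cexp (I * ((k * u : ℝ) : ℂ))) := by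
    intro m
    have := (qh_int m).ofReal (𝕜 := ℂ)
    refine this.mul_bdd (c := 1) ?_ ?_
    · apply Continuous.aestronglyMeasurable; fun_prop
    · exact Eventually.of_forall fun u => (norm_cexp_I _).le
  have e : ∀ u : ℝ, ((Wg y ν u : ℝ) : ℂ) * cexp (I * ((k * u : ℝ) : ℂ)) =
      ((1 / Real.sqrt (2 * π) : ℝ) : ℂ) * ∑ n ∈ Finset.range (ν + 1), ((cW y n : ℝ) : ℂ) *
        (((qh (2 * n) u : ℝ) : ℂ) * cexp (I * ((k * u : ℝ) : ℂ))) := by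
    intro u
    unfold Wg
    rw [Complex.ofReal_mul, Complex.ofReal_sum, mul_assoc, Finset.sum_mul]
    congr 1
    apply Finset.sum_congr rfl
    intro n _
    push_cast
    ring
  simp_rw [e]
  rw [integral_const_mul, integral_finsetSum _ fun n _ => (hi (2 * n)).const_mul _]
  simp_rw [integral_const_mul, qh_four]
  have hk2 : k ^ 2 = t ^ 2 * (sigmay y / 2) := by
    rw [hk, mul_pow, Real.sq_sqrt (by positivity)]
  have e2 : ∀ n, (I * (k : ℂ)) ^ (2 * n) = (((-(t ^ 2 * (sigmay y / 2))) ^ n : ℝ) : ℂ) := by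
    intro n
    rw [pow_mul, mul_pow, Complex.I_sq, ← Complex.ofReal_pow, hk2]
    push_cast
    ring
  simp_rw [e2]
  unfold gmod
  have hpi : 0 < Real.sqrt (2 * π) := by positivity
  norm_cast
  rw [Finset.mul_sum, Finset.mul_sum]
  apply Finset.sum_congr rfl
  intro n _
  unfold cW
  rw [show -k ^ 2 / 2 = -(sigmay y * (t ^ 2 / 4)) by rw [hk2]; ring]
  have e3 : (-(t ^ 2 * (sigmay y / 2))) ^ n = (-(t ^ 2 / 4)) ^ n * (2 * sigmay y) ^ n := by
    rw [← mul_pow]; congr 1; ring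
  rw [e3]
  have : (2 * sigmay y) ^ n ≠ 0 := by positivity
  field_simp

lemma sgn_Wg (y : ℝ) (ν : ℕ) (r α : ℝ) :
    ∫ u, Real.sign (r * u - α) * Wg y ν u =
      1 / Real.sqrt (2 * π) * ∑ n ∈ Finset.range (ν + 1), cW y n * ∫ u, Real.sign (r * u - α) * qh (2 * n) u := by
  have e : ∀ u, Real.sign (r * u - α) * Wg y ν u = 1 / Real.sqrt (2 * π) *
      ∑ n ∈ Finset.range (ν + 1), cW y n * (Real.sign (r * u - α) * qh (2 * n) u) := by
    intro u
    unfold Wg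
    rw [mul_left_comm, Finset.mul_sum]
    congr 1
    apply Finset.sum_congr rfl
    intro n _
    ring
  simp_rw [e]
  rw [integral_const_mul, integral_finsetSum]
  · simp_rw [integral_const_mul]
  · intro n _
    apply Integrable.const_mul
    refine (qh_int _).bdd_mul (c := 1) ?_ ?_
    · apply Measurable.aestronglyMeasurable
      apply meas_sign.comp
      fun_prop
    · exact Eventually.of_forall fun z => abs_sign_le _

lemma sqrt_two_pi_ge : 1 ≤ Real.sqrt (2 * π) := by
  rw [Real.one_le_sqrt]
  have := Real.pi_gt_three
  linarith

lemma qh_sup (n : ℕ) (u : ℝ) : |qh (2 * n) u| ≤ 5 * (2 ^ n * n.factorial) := by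
  have h := (qh_le (2 * n) u).trans (Aq_even n)
  have := sqrt_two_pi_ge
  nlinarith [abs_nonneg (qh (2 * n) u)]

lemma sgn_qh_sup (n : ℕ) (r α : ℝ) (hr : 0 < r) :
    |∫ u, Real.sign (r * u - α) * qh (2 * n) u| ≤ 5 * (2 ^ n * n.factorial) := by
  cases n with
  | zero =>
    refine (abs_integral_le_integral_abs).trans ?_
    refine le_trans ?_ (Aq_even 0)
    unfold Aq
    apply integral_mono_of_nonneg (Eventually.of_forall fun _ => abs_nonneg _) (absmono_int _)
    refine Eventually.of_forall fun u => ?_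
    simp only [abs_mul, mul_zero, pow_zero, one_mul]
    rw [qh_zero, abs_of_pos (Real.exp_pos _)]
    have := abs_sign_le (r * u - α)
    have := Real.exp_pos (-u ^ 2 / 2)
    nlinarith
  | succ m =>
    rw [show 2 * (m + 1) = (2 * m + 1) + 1 by ring, sgn_qh _ r α hr]
    have h := qh_le (2 * m + 1) (α / r)
    rw [Aq_odd] at h
    have := sqrt_two_pi_ge
    rw [abs_mul, abs_of_pos (by norm_num : (0:ℝ) < 2), Nat.factorial_succ]
    push_cast
    have h1 : |qh (2 * m + 1) (α / r)| ≤ 2 ^ (m + 1) * m.factorial := by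
      nlinarith [abs_nonneg (qh (2 * m + 1) (α / r))]
    have h2 : (0 : ℝ) ≤ 2 ^ (m + 1) * m.factorial := by positivity
    have h3 : (0 : ℝ) ≤ m := by positivity
    nlinarith [mul_nonneg h3 h2]

lemma cW_sum : ∃ C : ℝ, 0 < C ∧ ∀ (y : ℝ) (ν : ℕ), 0 < sigmay y →
    (∀ n, 1 ≤ n → n ≤ ν → 2 * ell n ≤ sigmay y) →
    ∑ n ∈ Finset.range (ν + 1), |cW y n| * (5 * (2 ^ n * n.factorial)) ≤ C := by
  obtain ⟨C, hC, hb⟩ := PhiCoefR_bound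
  refine ⟨10 * (1 + C), by positivity, ?_⟩
  intro y ν hs hl
  calc _ ≤ ∑ n ∈ Finset.range (ν + 1), 5 * (1 + C) * (1 / 2 : ℝ) ^ n := by
        apply Finset.sum_le_sum
        intro n hn
        have hn' : n ≤ ν := by have := Finset.mem_range.1 hn; omega
        rcases Nat.eq_zero_or_pos n with rfl | hn1
        · unfold cW
          rw [PhiCoefR_zero]
          simp
          linarith
        · have h1 := hb y n hn1
          have h2 := hl n hn1 hn'
          have h3 := ell_pos n hn1
          have hf : (0 : ℝ) < n.factorial := by exact_mod_cast Nat.factorial_pos n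
          unfold cW
          rw [abs_div, abs_of_pos (by positivity : 0 < (2 * sigmay y) ^ n)]
          calc _ ≤ C * (ell n ^ n / n.factorial) / (2 * sigmay y) ^ n * (5 * (2 ^ n * n.factorial)) := by gcongr
            _ = 5 * C * (ell n / sigmay y) ^ n := by
              rw [mul_pow, div_pow]
              field_simp
            _ ≤ 5 * (1 + C) * (1 / 2) ^ n := by
              have : ell n / sigmay y ≤ 1 / 2 := by
                rw [div_le_iff₀ hs]; linarith
              have : 0 ≤ ell n / sigmay y := by positivity
              gcongr
              linarith
    _ = 5 * (1 + C) * ∑ n ∈ Finset.range (ν + 1), (1 / 2 : ℝ) ^ n := by rw [Finset.mul_sum]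
    _ ≤ 5 * (1 + C) * 2 := by
        gcongr
        exact sum_geometric_two_le _
    _ = _ := by ring

lemma DG_bounds : ∃ C : ℝ, 0 < C ∧ ∀ (y : ℝ) (ν : ℕ), 0 < sigmay y →
    (∀ n, 1 ≤ n → n ≤ ν → 2 * ell n ≤ sigmay y) → ∀ r, 0 < r →
    (∀ α, |∫ u, Real.sign (r * u - α) * Wg y ν u| ≤ C) ∧
    (∀ α β, |(∫ u, Real.sign (r * u - β) * Wg y ν u) - ∫ u, Real.sign (r * u - α) * Wg y ν u| ≤ C / r * |β - α|) := by
  obtain ⟨C, hC, hb⟩ := cW_sum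
  refine ⟨2 * C, by positivity, ?_⟩
  intro y ν hs hl r hr
  have hsum := hb y ν hs hl
  have hp : 1 / Real.sqrt (2 * π) ≤ 1 := by
    rw [div_le_one (by positivity)]; exact sqrt_two_pi_ge
  have hp0 : 0 < 1 / Real.sqrt (2 * π) := by positivity
  constructor
  · intro α
    rw [sgn_Wg, abs_mul, abs_of_pos hp0]
    calc _ ≤ 1 * ∑ n ∈ Finset.range (ν + 1), |cW y n| * (5 * (2 ^ n * n.factorial)) := by
          gcongr
          refine (Finset.abs_sum_le_sum_abs _ _).trans ?_
          apply Finset.sum_le_sum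
          intro n _
          rw [abs_mul]
          gcongr
          exact sgn_qh_sup n r α hr
      _ ≤ _ := by linarith
  · intro α β
    refine (sgn_int_lip (Wg y ν) (Wg_int y ν) C ?_ r α β hr)
    intro u
    unfold Wg
    rw [abs_mul, abs_of_pos hp0]
    calc _ ≤ 1 * ∑ n ∈ Finset.range (ν + 1), |cW y n| * (5 * (2 ^ n * n.factorial)) := by
          gcongr
          refine (Finset.abs_sum_le_sum_abs _ _).trans ?_
          apply Finset.sum_le_sum
          intro n _
          rw [abs_mul]
          gcongr
          exact qh_sup n u
      _ ≤ _ := by linarith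

lemma sin_four {Ω : Type*} [MeasurableSpace Ω] (μ : Measure Ω) (X w : Ω → ℝ)
    (hX : Measurable X) (hwi : Integrable w μ) (l a : ℝ) :
    ∫ ω, Real.sin (l * (X ω - a)) * w ω ∂μ =
      (cexp (I * ((-(l * a) : ℝ) : ℂ)) * ∫ ω, (w ω : ℂ) * cexp (I * ((l * X ω : ℝ) : ℂ)) ∂μ).im := by
  have hi : Integrable (fun ω => cexp (I * ((-(l * a) : ℝ) : ℂ)) * ((w ω : ℂ) * cexp (I * ((l * X ω : ℝ) : ℂ)))) μ := by
    apply Integrable.const_mul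
    refine (hwi.ofReal (𝕜 := ℂ)).mul_bdd (c := 1) ?_ ?_
    · apply Measurable.aestronglyMeasurable; fun_prop
    · exact Eventually.of_forall fun u => (norm_cexp_I _).le
  rw [← integral_const_mul]
  have h := Complex.imCLM.integral_comp_comm hi
  simp only [Complex.imCLM_apply] at h
  rw [← h]
  congr 1; ext ω
  have e : cexp (I * ((-(l * a) : ℝ) : ℂ)) * ((w ω : ℂ) * cexp (I * ((l * X ω : ℝ) : ℂ))) =
      (w ω : ℂ) * cexp (((l * (X ω - a) : ℝ) : ℂ) * I) := by
    rw [mul_left_comm, ← Complex.exp_add]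
    congr 2
    push_cast
    ring
  rw [e, Complex.im_ofReal_mul, Complex.exp_ofReal_mul_I_im]
  ring

lemma Vy_meas (y : ℝ) : Continuous (Vy y) := by
  unfold Vy
  fun_prop

lemma Vy_bdd (y : ℝ) : ∃ M : ℝ, ∀ t, |Vy y t| ≤ M := by
  refine ⟨∑ p ∈ primesLe y, 1 / Real.sqrt p, fun t => ?_⟩
  unfold Vy
  refine (Finset.abs_sum_le_sum_abs _ _).trans (Finset.sum_le_sum fun p _ => ?_)
  rw [abs_div, abs_of_nonneg (Real.sqrt_nonneg _)]
  gcongr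
  exact Real.abs_sin_le_one _

lemma sign_mono {a b : ℝ} (h : a ≤ b) : Real.sign a ≤ Real.sign b := by
  unfold Real.sign
  split_ifs <;> linarith

lemma sgn_bound_int {Ω : Type*} [MeasurableSpace Ω] (μ : Measure Ω) (X w : Ω → ℝ)
    (hX : Measurable X) (hwi : Integrable w μ) (a : ℝ) :
    Integrable (fun ω => Real.sign (X ω - a) * w ω) μ := by
  refine hwi.bdd_mul (c := 1) ?_ ?_
  · apply Measurable.aestronglyMeasurable
    apply meas_sign.comp
    fun_prop
  · exact Eventually.of_forall fun z => abs_sign_le _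

lemma core : ∃ C : ℝ, 0 < C ∧ ∀ (y T H L c : ℝ) (ν : ℕ) (w : ℝ → ℝ), 0 < sigmay y →
    (∀ n, 1 ≤ n → n ≤ ν → 2 * ell n ≤ sigmay y) → 0 < H → 0 < L → Continuous w →
    (∀ l : ℝ, 0 < l → l ≤ 1 → ‖fH y T H (L * l) - (gmod y ν (L * l) : ℂ)‖ ≤ l * (w l + c)) →
    ∀ α, |(∫ t, Real.sign (L * Vy y t - α) ∂(unifM T H)) -
        ∫ u, Real.sign (L * Real.sqrt (sigmay y / 2) * u - α) * Wg y ν u| ≤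
      C * ((∫ l in (0:ℝ)..1, w l) + c + 1 / (L * Real.sqrt (sigmay y / 2))) := by
  obtain ⟨C1, hC1, hsm⟩ := smooth_main
  obtain ⟨C2, hC2, hDG⟩ := DG_bounds
  refine ⟨C1 * (2 + C2), by positivity, ?_⟩
  intro y T H L c ν w hs hl hH hL hw hfg α
  have := unifM_prob T H hH
  set W := unifM T H with hW
  set r := L * Real.sqrt (sigmay y / 2) with hr
  have hr0 : 0 < r := by positivity
  obtain ⟨hG1, hG2⟩ := hDG y ν hs hl r hr0
  set XF : ℝ → ℝ := fun t => L * Vy y t with hXF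
  set XG : ℝ → ℝ := fun u => r * u with hXG
  have hXFm : Measurable XF := (Vy_meas y).measurable.const_mul L
  have hXGm : Measurable XG := measurable_id.const_mul r
  set DF : ℝ → ℝ := fun a => ∫ t, Real.sign (XF t - a) * (1 : ℝ) ∂W with hDF
  set DGf : ℝ → ℝ := fun a => ∫ u, Real.sign (XG u - a) * Wg y ν u with hDGf
  have hone : Integrable (fun _ : ℝ => (1 : ℝ)) W := integrable_const _
  have hWm : Measurable (Wg y ν) := (Wg_cont y ν).measurable
  have hWi := Wg_int y ν
  have hFanti : Antitone DF := by
    intro a b hab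
    apply integral_mono (sgn_bound_int W XF _ hXFm hone b) (sgn_bound_int W XF _ hXFm hone a)
    intro t
    have := sign_mono (show XF t - b ≤ XF t - a by linarith)
    simpa using this
  have hFm : Measurable DF := hFanti.measurable
  have hGlip : LipschitzWith (Real.toNNReal (C2 / r)) DGf := by
    apply LipschitzWith.of_dist_le_mul
    intro a b
    rw [Real.coe_toNNReal _ (by positivity), Real.dist_eq, Real.dist_eq]
    exact hG2 b a
  have hGm : Measurable DGf := hGlip.continuous.measurable
  have hFb : ∀ a, |DF a| ≤ 1 := by
    intro a
    have h := norm_integral_le_of_norm_le_const (μ := W) (f := fun t => Real.sign (XF t - a) * (1 : ℝ)) (C := 1)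
      (Eventually.of_forall fun t => by rw [mul_one]; exact abs_sign_le _)
    simpa [hDF] using h
  have hXFi : Integrable (fun t => XF t * (1 : ℝ)) W := by
    obtain ⟨M, hM⟩ := Vy_bdd y
    refine Integrable.of_bound (C := L * M) (hXFm.mul_const 1).aestronglyMeasurable (Eventually.of_forall fun t => ?_)
    rw [mul_one, Real.norm_eq_abs, hXF]
    simp only [abs_mul, abs_of_pos hL]
    gcongr
    exact hM t
  have hXGi : Integrable (fun u => XG u * Wg y ν u) := by
    refine ((Wg_mul_int y ν).const_mul r).congr (Eventually.of_forall fun u => ?_)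
    simp only [hXG]
    ring
  have hmain := hsm (fun a => DF a - DGf a) (C2 / r) (2 * ((∫ l in (0:ℝ)..1, w l) + c)) (1 + C2)
    (hFm.sub hGm) (by positivity)
    (by
      intro x
      exact (abs_sub _ _).trans (add_le_add (hFb x) (hG1 x)))
    (by
      intro a s hs0
      have h1 : DF (a + s) ≤ DF a := hFanti (by linarith)
      have h2 := (abs_le.1 (hG2 a (a + s))).1
      rw [add_sub_cancel_left, abs_of_nonneg hs0] at h2
      have h3 : -(C2 / r * s) ≤ DGf (a + s) - DGf a := h2
      linarith)
    (by
      intro a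
      have i1 : Integrable (fun s => DF (a + s) * Kf s) := by
        refine Kf_int.bdd_mul (c := 1) ?_ ?_
        · exact (hFm.comp (measurable_const_add _)).aestronglyMeasurable
        · exact Eventually.of_forall fun s => hFb _
      have i2 : Integrable (fun s => DGf (a + s) * Kf s) := by
        refine Kf_int.bdd_mul (c := C2) ?_ ?_
        · exact (hGm.comp (measurable_const_add _)).aestronglyMeasurable
        · exact Eventually.of_forall fun s => hG1 _
      have e1 := smooth_tr W XF (fun _ => 1) hXFm measurable_const hone hXFi a
      have e2 := smooth_tr volume XG (Wg y ν) hXGm hWm hWi hXGi a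
      have j1 := smooth_tr_int W XF (fun _ => 1) hXFm measurable_const hone hXFi a
      have j2 := smooth_tr_int volume XG (Wg y ν) hXGm hWm hWi hXGi a
      simp_rw [sub_mul]
      rw [integral_sub i1 i2]
      simp only [hDF, hDGf]
      rw [e1, e2, ← mul_sub, ← intervalIntegral.integral_sub j1 j2, abs_mul, abs_of_pos (by norm_num : (0:ℝ) < 2)]
      gcongr
      have hwc : Continuous fun l => w l + c := by fun_prop
      have hle : ‖∫ l in (0:ℝ)..1, ((1 - l) / l * (∫ ω, Real.sin (l * (XF ω - a)) * (1:ℝ) ∂W) -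
          (1 - l) / l * ∫ ω, Real.sin (l * (XG ω - a)) * Wg y ν ω)‖ ≤ ∫ l in (0:ℝ)..1, (w l + c) := by
        apply intervalIntegral.norm_integral_le_of_norm_le zero_le_one _ (hwc.intervalIntegrable _ _)
        refine Eventually.of_forall fun l hl => ?_
        rw [sin_four W XF _ hXFm hone, sin_four volume XG _ hXGm hWi, ← mul_sub, ← Complex.sub_im, ← mul_sub]
        have f1 : ∫ ω, ((1 : ℝ) : ℂ) * cexp (I * ((l * XF ω : ℝ) : ℂ)) ∂W = fH y T H (L * l) := by
          unfold fH
          congr 1; ext ω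
          rw [Complex.ofReal_one, one_mul]
          congr 3
          simp only [hXF]
          ring
        have f2 : ∫ ω, ((Wg y ν ω : ℝ) : ℂ) * cexp (I * ((l * XG ω : ℝ) : ℂ)) = (gmod y ν (L * l) : ℂ) := by
          rw [← Wg_four y ν hs]
          congr 1; ext ω
          congr 4
          simp only [hXG, hr]
          ring
        rw [f1, f2, norm_mul, Real.norm_eq_abs, Real.norm_eq_abs]
        have h3 := hfg l hl.1 hl.2
        have hl0 := hl.1
        have h4 : |(1 - l) / l| ≤ 1 / l := by
          rw [abs_div, abs_of_pos hl0, abs_of_nonneg (by linarith [hl.2])]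
          gcongr
          linarith
        have h5 := Complex.abs_im_le_norm (cexp (I * ((-(l * a) : ℝ) : ℂ)) * (fH y T H (L * l) - (gmod y ν (L * l) : ℂ)))
        rw [norm_mul, norm_cexp_I, one_mul] at h5
        calc _ ≤ 1 / l * (l * (w l + c)) := by
              gcongr
              exact h5.trans h3
          _ = _ := by field_simp
      rw [intervalIntegral.integral_add (hw.intervalIntegrable _ _) (by simp)] at hle
      simpa using hle)
    α
  have hfin : |DF α - DGf α| ≤ C1 * (2 * ((∫ l in (0:ℝ)..1, w l) + c) + C2 / r) := hmain
  have e : DF α = ∫ t, Real.sign (L * Vy y t - α) ∂W := by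
    simp only [hDF, mul_one, hXF]
  rw [e] at hfin
  have hwc0 : 0 ≤ (∫ l in (0:ℝ)..1, w l) + c := by
    have : ∫ l in (0:ℝ)..1, (w l + c) = (∫ l in (0:ℝ)..1, w l) + c := by
      rw [intervalIntegral.integral_add (hw.intervalIntegrable _ _) (by simp)]
      simp
    rw [← this, intervalIntegral.integral_of_le zero_le_one]
    apply setIntegral_nonneg measurableSet_Ioc
    intro l hl
    have h3 := (norm_nonneg _).trans (hfg l hl.1 hl.2)
    have := hl.1
    exact nonneg_of_mul_nonneg_right h3 this
  refine hfin.trans ?_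
  rw [mul_assoc]
  gcongr
  have h6 : 0 < 1 / r := by positivity
  have h7 : C2 / r = C2 * (1 / r) := by ring
  rw [h7]
  nlinarith

lemma sign_mul_pos (L x : ℝ) (hL : 0 < L) : Real.sign (L * x) = Real.sign x := by
  rcases lt_trichotomy x 0 with h | h | h
  · rw [Real.sign_of_neg h, Real.sign_of_neg (mul_neg_of_pos_of_neg hL h)]
  · simp [h]
  · rw [Real.sign_of_pos h, Real.sign_of_pos (mul_pos hL h)]

lemma ell_le_sigma (y : ℝ) (hy3 : 3 ≤ y) (hy : 10 ≤ Real.log (Real.log y)) (hly : 1 ≤ Real.log y) (ν : ℕ)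
    (hν : (ν : ℝ) ≤ Real.exp ((Real.log y) ^ ((1 : ℝ) / 4))) :
    ∀ n, 1 ≤ n → n ≤ ν → 2 * ell n ≤ sigmay y := by
  intro n hn hnν
  have hs := sigmay_ge y hy3
  have hn1 : (1 : ℝ) ≤ n := by exact_mod_cast hn
  have hnν' : (n : ℝ) ≤ ν := by exact_mod_cast hnν
  unfold ell
  set l := Real.log y
  set x := l ^ ((1 : ℝ) / 4) with hx
  have hx1 : 1 ≤ x := Real.one_le_rpow hly (by norm_num)
  have hlogx : Real.log x = Real.log l / 4 := by
    rw [hx, Real.log_rpow (by linarith)]; ring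
  have h1 : Real.log ((n : ℝ) + 1) ≤ 2 * x := by
    rw [Real.log_le_iff_le_exp (by linarith)]
    have : Real.exp (2 * x) = Real.exp x * Real.exp x := by rw [← Real.exp_add]; ring_nf
    rw [this]
    have := Real.add_one_le_exp x
    nlinarith
  have h0 : 0 < Real.log ((n : ℝ) + 1) := Real.log_pos (by linarith)
  have h2 : Real.log (Real.log ((n : ℝ) + 1)) ≤ Real.log 2 + Real.log l / 4 := by
    rw [← hlogx, ← Real.log_mul (by norm_num) (by linarith)]
    exact Real.log_le_log h0 h1
  have := Real.log_two_lt_d9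
  linarith

lemma exp_half_ge (k : ℝ) (hk : 0 < k) : Real.exp (-(k / 2)) ≤ 1 / Real.sqrt k := by
  rw [Real.exp_neg, ← one_div]
  apply one_div_le_one_div_of_le (by positivity)
  have h1 := Real.add_one_le_exp (k / 2)
  have h2 := Real.sq_sqrt hk.le
  nlinarith [sq_nonneg (Real.sqrt k - 1)]

lemma chL_h1 (K s L1 : ℝ) (hK0 : 0 < K) (hs0 : 0 < s) (hL10 : 0 < L1) (hL1s : L1 ^ 2 = K / (4 * s)) :
    1 / (L1 * Real.sqrt (s / 2)) ≤ 3 * (1 / Real.sqrt K) := by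
  have hsq : Real.sqrt (s / 2) ^ 2 = s / 2 := Real.sq_sqrt (by positivity)
  have hsp : 0 < Real.sqrt (s / 2) := Real.sqrt_pos.2 (by positivity)
  have hKs : 0 < Real.sqrt K := Real.sqrt_pos.2 hK0
  have hKq : Real.sqrt K ^ 2 = K := Real.sq_sqrt hK0.le
  rw [mul_one_div, div_le_div_iff₀ (by positivity) hKs, one_mul]
  refine (sq_le_sq₀ hKs.le (by positivity)).1 ?_
  rw [hKq, mul_pow, mul_pow, hL1s, hsq]
  have : (3 : ℝ) ^ 2 * (K / (4 * s) * (s / 2)) = 9 / 8 * K := by field_simp; norm_num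
  rw [this]; linarith

lemma chL_h2 (ly ll s L2 : ℝ) (hly : 0 < ly) (hll0 : 0 < ll) (hs0 : 0 < s) (hs : ll ≤ 2 * s) (hL20 : 0 < L2)
    (hL2s : L2 ^ 2 = ly * ll) :
    1 / (L2 * Real.sqrt (s / 2)) ≤ 2 * (1 / (Real.sqrt ly * ll)) := by
  have hsq : Real.sqrt (s / 2) ^ 2 = s / 2 := Real.sq_sqrt (by positivity)
  have hsp : 0 < Real.sqrt (s / 2) := Real.sqrt_pos.2 (by positivity)
  have hl0 : 0 < Real.sqrt ly := Real.sqrt_pos.2 (by linarith)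
  have hlq : Real.sqrt ly ^ 2 = ly := Real.sq_sqrt hly.le
  rw [mul_one_div, div_le_div_iff₀ (by positivity) (by positivity), one_mul]
  refine (sq_le_sq₀ (by positivity) (by positivity)).1 ?_
  rw [mul_pow, mul_pow, mul_pow, hlq, hL2s, hsq]
  have : ll * (ly * ll) ≤ ll * (ly * (2 * s)) := by gcongr
  linarith

set_option maxHeartbeats 1000000 in
lemma choose_L (y H : ℝ) (hy3 : 3 ≤ y) (hy : 10 ≤ Real.log (Real.log y)) (hly : 1 ≤ Real.log y) (hH : 1 < H)
    (hyH : 16 * Real.log y ≤ Real.log H) : ∃ (L : ℝ) (k : ℕ), 0 < L ∧ Even k ∧ 1 ≤ k ∧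
      L ^ 2 ≤ 4 * Real.log y ^ 2 ∧
      2 / H * y ^ (2 * k) * Real.exp L + 4 * Real.exp (2 * L ^ 2 * sigmay y - k) ≤
        24 * Real.sqrt (Real.log y / Real.log H) ∧
      1 / (L * Real.sqrt (sigmay y / 2)) ≤
        12 * Real.sqrt (Real.log y / Real.log H) + 2 * (1 / (Real.sqrt (Real.log y) * Real.log (Real.log y))) := by
  have hs := sigmay_ge y hy3
  set ly := Real.log y with hlydef
  set ll := Real.log ly with hll
  set lH := Real.log H with hlH
  set s := sigmay y with hsdef
  have hs0 : 0 < s := by linarith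
  have hlH0 : 0 < lH := by linarith
  have hH0 : 0 < H := by linarith
  have hy0 : 0 < y := by linarith
  have hllly : ll ≤ ly := (Real.log_le_sub_one_of_pos (by linarith)).trans (by linarith)
  set x := lH / (16 * ly) with hx
  have hx1 : 1 ≤ x := by rw [hx, one_le_div (by linarith)]; exact hyH
  set j := ⌊x⌋₊ with hj
  have hj1 : 1 ≤ j := Nat.le_floor (by exact_mod_cast hx1)
  have hjx : (j : ℝ) ≤ x := Nat.floor_le (by linarith)
  have hxj : x < j + 1 := Nat.lt_floor_add_one x
  have hj1' : (1 : ℝ) ≤ j := by exact_mod_cast hj1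
  have hkx : x ≤ 2 * j := by linarith
  set K : ℝ := 2 * j with hK
  have hK0 : 0 < K := by linarith
  have hxl : x * (16 * ly) = lH := by rw [hx]; field_simp
  have hKl : K * ly * 8 ≤ lH := by
    rw [← hxl, hK]; nlinarith
  have hKH : 1 / Real.sqrt K ≤ 4 * Real.sqrt (ly / lH) := by
    have e : 4 * Real.sqrt (ly / lH) = 1 / Real.sqrt x := by
      have : ly / lH = 1 / (16 * x) := by rw [← hxl]; field_simp
      rw [this, Real.sqrt_div zero_le_one, Real.sqrt_one, Real.sqrt_mul (by norm_num)]
      have : Real.sqrt 16 = 4 := by rw [show (16:ℝ) = 4 ^ 2 by norm_num]; exact Real.sqrt_sq (by norm_num)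
      rw [this]
      have : 0 < Real.sqrt x := Real.sqrt_pos.2 (by linarith)
      field_simp
    rw [e]
    apply one_div_le_one_div_of_le (Real.sqrt_pos.2 (by linarith))
    exact Real.sqrt_le_sqrt hkx
  set L1 := Real.sqrt (K / (4 * s)) with hL1
  set L2 := Real.sqrt (ly * ll) with hL2
  have hL10 : 0 < L1 := Real.sqrt_pos.2 (by positivity)
  have hL20 : 0 < L2 := Real.sqrt_pos.2 (by nlinarith)
  have hL1s : L1 ^ 2 = K / (4 * s) := Real.sq_sqrt (by positivity)
  have hL2s : L2 ^ 2 = ly * ll := Real.sq_sqrt (by nlinarith)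
  have hm0 : 0 < min L1 L2 := lt_min hL10 hL20
  have hm1 : min L1 L2 ≤ L1 := min_le_left _ _
  have hm2 : min L1 L2 ≤ L2 := min_le_right _ _
  have hm1s : min L1 L2 ^ 2 ≤ K / (4 * s) := by rw [← hL1s]; gcongr
  have hm2s : min L1 L2 ^ 2 ≤ ly ^ 2 := by
    calc min L1 L2 ^ 2 ≤ L2 ^ 2 := by gcongr
      _ = ly * ll := hL2s
      _ ≤ ly ^ 2 := by nlinarith
  have hmly : min L1 L2 ≤ ly := by
    apply le_of_sq_le_sq hm2s (by linarith)
  refine ⟨min L1 L2, 2 * j, hm0, even_two_mul j, by omega, by nlinarith, ?_, ?_⟩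
  · have h1 : 2 / H * y ^ (2 * (2 * j)) * Real.exp (min L1 L2) ≤ 2 * Real.exp (-(K / 2)) := by
      have e1 : y ^ (2 * (2 * j)) = Real.exp (2 * K * ly) := by
        rw [hlydef, ← Real.rpow_natCast, Real.rpow_def_of_pos hy0, hK]
        push_cast
        ring_nf
      have e2 : 2 / H = 2 * Real.exp (-lH) := by
        rw [Real.exp_neg, hlH, Real.exp_log hH0]; ring
      rw [e1, e2, mul_assoc, mul_assoc, ← Real.exp_add, ← Real.exp_add]
      gcongr
      nlinarith
    have h2 : Real.exp (2 * min L1 L2 ^ 2 * s - ((2 * j : ℕ) : ℝ)) ≤ Real.exp (-(K / 2)) := by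
      gcongr
      push_cast
      rw [le_div_iff₀ (by positivity)] at hm1s
      rw [← hK]
      linarith
    have h3 := exp_half_ge K hK0
    linarith
  · have hsq : Real.sqrt (s / 2) ^ 2 = s / 2 := Real.sq_sqrt (by positivity)
    have hsp : 0 < Real.sqrt (s / 2) := Real.sqrt_pos.2 (by positivity)
    have h0 : 1 / (min L1 L2 * Real.sqrt (s / 2)) ≤ 1 / (L1 * Real.sqrt (s / 2)) + 1 / (L2 * Real.sqrt (s / 2)) := by
      rcases min_choice L1 L2 with h | h <;> rw [h]
      · have : 0 < 1 / (L2 * Real.sqrt (s / 2)) := by positivity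
        linarith
      · have : 0 < 1 / (L1 * Real.sqrt (s / 2)) := by positivity
        linarith
    have h1 : 1 / (L1 * Real.sqrt (s / 2)) ≤ 3 * (1 / Real.sqrt K) := chL_h1 K s L1 hK0 hs0 hL10 hL1s
    have h2 : 1 / (L2 * Real.sqrt (s / 2)) ≤ 2 * (1 / (Real.sqrt ly * ll)) :=
      chL_h2 ly ll s L2 (by linarith) (by linarith) hs0 (by linarith) hL20 hL2s
    linarith

lemma final_D : ∃ C y1 : ℝ, 0 < C ∧ 3 ≤ y1 ∧ ∀ H y : ℝ, 1 < H → y1 < y → ∀ T α : ℝ, ∀ ν : ℕ,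
    (ν : ℝ) ≤ Real.exp ((Real.log y) ^ ((1 : ℝ) / 4)) →
    |(∫ t, Real.sign (Vy y t - α) ∂(unifM T H)) -
        ∫ u, Real.sign (Real.sqrt (sigmay y / 2) * u - α) * Wg y ν u| ≤
      C * (1 / (Real.sqrt (Real.log y) * Real.log (Real.log y)) + Real.sqrt (Real.log y / Real.log H)
        + qq (sigmay y) (ν + 1)) := by
  obtain ⟨C1, y1, hC1, hy13, hFG⟩ := FG_main
  obtain ⟨C2, hC2, hcore⟩ := core
  obtain ⟨C3, hC3, hDG⟩ := DG_bounds
  refine ⟨C2 * (2 * C1 + 40) + 4 * (1 + C3), max y1 (Real.exp (Real.exp 10)), by positivity,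
    hy13.trans (le_max_left _ _), ?_⟩
  intro H y hH hy T α ν hν
  have hyy1 : y1 ≤ y := (le_max_left _ _).trans hy.le
  have hyE : Real.exp (Real.exp 10) ≤ y := (le_max_right _ _).trans hy.le
  have hy3 : 3 ≤ y := hy13.trans hyy1
  have hlyE : Real.exp 10 ≤ Real.log y := by rwa [Real.le_log_iff_exp_le (by linarith)]
  have hly : 1 ≤ Real.log y := le_trans (by have := Real.add_one_le_exp 10; linarith) hlyE
  have hll : 10 ≤ Real.log (Real.log y) := by rwa [Real.le_log_iff_exp_le (by linarith)]
  have hell := ell_le_sigma y hy3 hll hly ν hν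
  have hs0 : 0 < sigmay y := by have := sigmay_ge y hy3; linarith
  have hH0 : 0 < H := by linarith
  have hlH : 0 < Real.log H := Real.log_pos hH
  have hq := qq_nonneg (sigmay y) hs0 (ν + 1) (by omega)
  have hΔ1 : 0 < 1 / (Real.sqrt (Real.log y) * Real.log (Real.log y)) := by
    have : 0 < Real.sqrt (Real.log y) := Real.sqrt_pos.2 (by linarith)
    have : 0 < Real.log (Real.log y) := by linarith
    positivity
  have hΔ2 := Real.sqrt_nonneg (Real.log y / Real.log H)
  rcases lt_or_ge (Real.log H) (16 * Real.log y) with hc | hc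
  · have := unifM_prob T H hH0
    have h1 : |∫ t, Real.sign (Vy y t - α) ∂(unifM T H)| ≤ 1 := by
      have h := norm_integral_le_of_norm_le_const (μ := unifM T H) (f := fun t => Real.sign (Vy y t - α)) (C := 1)
        (Eventually.of_forall fun t => abs_sign_le _)
      simpa using h
    have h2 := (hDG y ν hs0 hell (Real.sqrt (sigmay y / 2)) (by positivity)).1 α
    have h3 : 1 / 4 ≤ Real.sqrt (Real.log y / Real.log H) := by
      apply Real.le_sqrt_of_sq_le
      rw [le_div_iff₀ hlH]
      linarith
    refine (abs_sub _ _).trans ?_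
    have h4 : 0 ≤ C2 * (2 * C1 + 40) * (1 / (Real.sqrt (Real.log y) * Real.log (Real.log y)) + Real.sqrt (Real.log y / Real.log H)
        + qq (sigmay y) (ν + 1)) := by positivity
    rw [add_mul]
    nlinarith
  · obtain ⟨L, k, hL, hke, hk1, hL2, hc1, hc2⟩ := choose_L y H hy3 hll hly hH hc
    obtain ⟨w, hw, hfg, hwi⟩ := hFG y hyy1 ν L hL hL2
    set c := 2 / H * y ^ (2 * k) * Real.exp L + 4 * Real.exp (2 * L ^ 2 * sigmay y - k) with hcdef
    have h := hcore y T H L c ν w hs0 hell hH0 hL hw (by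
      intro l hl0 hl1
      have a1 := hfg l hl0.le hl1
      have a2 := char_compare y T H L l k (by linarith) hH0 hke hk1 hL hl0.le hl1
      calc _ = ‖(fH y T H (L * l) - fmod y (L * l)) + (fmod y (L * l) - (gmod y ν (L * l) : ℂ))‖ := by
            congr 1; ring
        _ ≤ _ := norm_add_le _ _
        _ ≤ l * c + l * w l := add_le_add a2 a1
        _ = _ := by ring) (L * α)
    have e1 : ∀ t, Real.sign (L * Vy y t - L * α) = Real.sign (Vy y t - α) := by
      intro t; rw [← mul_sub, sign_mul_pos _ _ hL]
    have e2 : ∀ u, Real.sign (L * Real.sqrt (sigmay y / 2) * u - L * α) = Real.sign (Real.sqrt (sigmay y / 2) * u - α) := by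
      intro u; rw [mul_assoc, ← mul_sub, sign_mul_pos _ _ hL]
    simp_rw [e1, e2] at h
    refine h.trans ?_
    have h5 : 1 / Real.log y ≤ 2 * (1 / (Real.sqrt (Real.log y) * Real.log (Real.log y))) := by
      have a1 : 0 < Real.sqrt (Real.log y) := Real.sqrt_pos.2 (by linarith)
      have a2 := Real.log_le_sub_one_of_pos a1
      rw [Real.log_sqrt (by linarith)] at a2
      have a3 : Real.sqrt (Real.log y) ^ 2 = Real.log y := Real.sq_sqrt (by linarith)
      rw [mul_one_div, div_le_div_iff₀ (by linarith) (mul_pos a1 (by linarith))]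
      nlinarith
    have h6 : 0 ≤ 4 * (1 + C3) * (1 / (Real.sqrt (Real.log y) * Real.log (Real.log y)) + Real.sqrt (Real.log y / Real.log H)
        + qq (sigmay y) (ν + 1)) := by positivity
    rw [add_mul, mul_assoc C2]
    refine le_trans ?_ (le_add_of_nonneg_right h6)
    gcongr
    have h7 : C1 * (1 / Real.log y) ≤ C1 * (2 * (1 / (Real.sqrt (Real.log y) * Real.log (Real.log y)))) := by gcongr
    nlinarith [mul_nonneg hC1.le hq, mul_nonneg hC1.le hΔ2]

/-- **Theorem 3** (Ivić–Korolev). For `1 < H₀ < H`, `y₀ < y ≤ exp(log H/(c log log H))` with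
`c = 1.4·10⁴` and `y₀` a sufficiently large absolute constant, any real `T`, `α`, and any
integer `0 ≤ ν ≤ exp((log y)^{1/4})`,
`∫_T^{T+H} sgn(V_y(t)-α) dt = (H/√(2π)) ∑_{n=0}^{ν} (Φ_n/(2σ)ⁿ)
  ∫_{-∞}^{∞} e^{-u²/2} H_{2n}(u) sgn(u√(σ/2)-α) du + O(HΔ)`,
with an absolute `O`-constant. -/
theorem sgn_Vy_asymptotic :
    ∃ C y₀ : ℝ, 0 < C ∧ 2 < y₀ ∧
      ∀ H₀ H y : ℝ, 1 < H₀ → H₀ < H →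
        y₀ < y → y ≤ Real.exp (Real.log H / (14000 * Real.log (Real.log H))) →
        ∀ T α : ℝ, ∀ ν : ℕ, (ν : ℝ) ≤ Real.exp ((Real.log y) ^ ((1 : ℝ) / 4)) →
          |(∫ t in T..(T + H), Real.sign (Vy y t - α))
            - H / Real.sqrt (2 * π) * ∑ n ∈ Finset.range (ν + 1),
                (PhiCoefR y n / (2 * sigmay y) ^ n) *
                  ∫ u : ℝ, Real.exp (-u ^ 2 / 2) * hermiteEval (2 * n) u *
                    Real.sign (u * Real.sqrt (sigmay y / 2) - α)|
          ≤ C * H * ((Real.log y) ^ (-(1 : ℝ) / 2) / Real.log (Real.log y)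
              + (Real.log y / Real.log H) ^ ((1 : ℝ) / 2)
              + (1 / ((ν : ℝ) + 1)) *
                  ((Real.log (Real.log ((ν : ℝ) + 2)) + 1) / sigmay y) ^ (ν + 1)) := by
  obtain ⟨C, y1, hC, hy13, hD⟩ := final_D
  refine ⟨C, y1, hC, by linarith, ?_⟩
  intro H₀ H y hH0 hHH hy _ T α ν hν
  have hH1 : 1 < H := by linarith
  have hHpos : 0 < H := by linarith
  have hy3 : 3 < y := by linarith
  have hly : 0 < Real.log y := Real.log_pos (by linarith)
  have h := hD H y hH1 hy T α ν hν
  rw [sgn_Wg, unifM_integral T H hHpos, smul_eq_mul] at h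
  have e1 : (Real.log y) ^ (-(1 : ℝ) / 2) / Real.log (Real.log y)
      = 1 / (Real.sqrt (Real.log y) * Real.log (Real.log y)) := by
    rw [neg_div, Real.rpow_neg hly.le, ← Real.sqrt_eq_rpow, one_div, mul_inv, div_eq_mul_inv]
  have e3 : (1 / ((ν : ℝ) + 1)) *
      ((Real.log (Real.log ((ν : ℝ) + 2)) + 1) / sigmay y) ^ (ν + 1) = qq (sigmay y) (ν + 1) := by
    unfold qq ell
    push_cast
    rw [show (ν : ℝ) + 1 + 1 = ν + 2 by ring]
  rw [e1, ← Real.sqrt_eq_rpow, e3]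
  have e4 : ∀ n : ℕ, (∫ u : ℝ, Real.exp (-u ^ 2 / 2) * hermiteEval (2 * n) u *
      Real.sign (u * Real.sqrt (sigmay y / 2) - α)) =
      ∫ u : ℝ, Real.sign (Real.sqrt (sigmay y / 2) * u - α) * qh (2 * n) u := by
    intro n
    congr 1
    funext u
    unfold qh
    rw [mul_comm u, mul_comm]
  simp_rw [e4]
  have e5 : ∀ A S : ℝ, A - H / Real.sqrt (2 * π) * S = H * (1 / H * A - 1 / Real.sqrt (2 * π) * S) := by
    intro A S
    field_simp
  rw [e5, abs_mul, abs_of_pos hHpos, mul_comm C H, mul_assoc]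
  exact mul_le_mul_of_nonneg_left h hHpos.le
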